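/- Suppose d ≥ 1, 0 < α < d and α < min{1, d/3}. Then the triangle diagram is finite at criticality: ∇_{β_c} < ∞. -/

import Mathlib

open MeasureTheory ENNReal

namespace LRP

/-- The vertex set `ℤ^d`. -/
abbrev V (d : ℕ) : Type := Fin d → ℤ

/-- The `ℓ^∞` norm of a lattice point, as a natural number. -/
def normInf {d : ℕ} (x : V d) : ℕ := Finset.univ.sup fun i => (x i).natAbs

/-- A percolation configuration: each (unordered) pair of vertices is open or closed. -/
abbrev Config (d : ℕ) : Type := Sym2 (V d) → Bool

/-- The probability `1 - exp (-β J(x,y))` that the edge `e = {x,y}` is open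
(the symmetrization `(J x y + J y x)/2` equals `J x y` for symmetric `J`). -/
noncomputable def edgeProb {d : ℕ} (J : V d → V d → ℝ) (β : ℝ) (e : Sym2 (V d)) : ℝ≥0∞ :=
  ENNReal.ofReal (1 - Real.exp (-β *
    Sym2.lift ⟨fun x y => (J x y + J y x) / 2, fun x y => by dsimp only; rw [add_comm]⟩ e))

/-- `IsLRP J P` asserts that for each `β`, `P β` is the law of long-range percolation on `ℤ^d`
with kernel `J` at inverse temperature `β`: distinct edges are open independently, edge `{x,y}`
being open with probability `1 - exp (-β J(x,y))`.  This is expressed by prescribing the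
probability of every finite cylinder event, which characterizes the measure uniquely. -/
def IsLRP {d : ℕ} (J : V d → V d → ℝ) (P : ℝ → Measure (Config d)) : Prop :=
  ∀ (β : ℝ) (s : Finset (Sym2 (V d))) (f : Sym2 (V d) → Bool),
    P β {ω | ∀ e ∈ s, ω e = f e} =
      ∏ e ∈ s, (if f e then edgeProb J β e else 1 - edgeProb J β e)

/-- Two vertices are adjacent if they are distinct and the edge between them is open. -/
def adj {d : ℕ} (ω : Config d) (x y : V d) : Prop := x ≠ y ∧ ω s(x, y) = true

/-- `x ↔ y`: the vertices are connected by a path of open edges. -/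
def conn {d : ℕ} (ω : Config d) (x y : V d) : Prop := Relation.ReflTransGen (adj ω) x y

/-- `x ↔ y` inside `A`: connected by an open path all of whose vertices lie in `A`. -/
def connIn {d : ℕ} (ω : Config d) (A : Set (V d)) (x y : V d) : Prop :=
  x ∈ A ∧ y ∈ A ∧ Relation.ReflTransGen (fun a b => a ∈ A ∧ b ∈ A ∧ adj ω a b) x y

/-- The cluster of `x`. -/
def cluster {d : ℕ} (ω : Config d) (x : V d) : Set (V d) := {y | conn ω x y}

/-- The critical point `β_c`. -/
noncomputable def betaC {d : ℕ} (P : ℝ → Measure (Config d)) : ℝ :=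
  sInf {β : ℝ | 0 ≤ β ∧ 0 < P β {ω | ∃ x, (cluster ω x).Infinite}}

/-- The two-point function `ℙ_β(x ↔ y)`. -/
noncomputable def twoPoint {d : ℕ} (P : ℝ → Measure (Config d)) (β : ℝ) (x y : V d) : ℝ≥0∞ :=
  P β {ω | conn ω x y}

/-- The susceptibility `χ(β) = Σ_x ℙ_β(0 ↔ x)`. -/
noncomputable def chi {d : ℕ} (P : ℝ → Measure (Config d)) (β : ℝ) : ℝ≥0∞ :=
  ∑' x : V d, twoPoint P β 0 x

/-- `Σ_{x ∈ [-n,n]^d} ℙ_β(0 ↔ x)`. -/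
noncomputable def boxSum {d : ℕ} (P : ℝ → Measure (Config d)) (β : ℝ) (n : ℕ) : ℝ≥0∞ :=
  ∑' x : V d, if normInf x ≤ n then twoPoint P β 0 x else 0

/-- The correlation length `ξ(β) = inf {r ≥ 1 : Σ_{x ∈ [-r,r]^d} ℙ_β(0↔x) ≥ χ(β)/2}`
(`= ∞` if no such `r` exists). -/
noncomputable def xi {d : ℕ} (P : ℝ → Measure (Config d)) (β : ℝ) : ℝ≥0∞ :=
  sInf {r : ℝ≥0∞ | ∃ n : ℕ, r = (n : ℝ≥0∞) ∧ 1 ≤ n ∧ chi P β ≤ 2 * boxSum P β n}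

/-- The triangle diagram `∇_β`. -/
noncomputable def triangle {d : ℕ} (P : ℝ → Measure (Config d)) (β : ℝ) : ℝ≥0∞ :=
  ∑' x : V d, ∑' y : V d, twoPoint P β 0 x * twoPoint P β x y * twoPoint P β y 0

/-- The standing assumptions on the kernel `J`: symmetric, integrable, translation-invariant,
with `c ‖x-y‖^{-d-α} ≤ J(x,y) ≤ C ‖x-y‖^{-d-α}` for distinct `x, y`, where `0 < α < d`. -/
structure KernelHyp (d : ℕ) (J : V d → V d → ℝ) (α c C : ℝ) : Prop where
  d_pos : 1 ≤ d
  symm : ∀ x y, J x y = J y x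
  transInv : ∀ x y z : V d, J (x + z) (y + z) = J x y
  nonneg : ∀ x y, 0 ≤ J x y
  integrable : Summable fun x : V d => J 0 x
  alpha_pos : 0 < α
  alpha_lt_d : α < (d : ℝ)
  c_pos : 0 < c
  c_le_C : c ≤ C
  lower : ∀ x y : V d, x ≠ y → c * (normInf (x - y) : ℝ) ^ (-(d : ℝ) - α) ≤ J x y
  upper : ∀ x y : V d, x ≠ y → J x y ≤ C * (normInf (x - y) : ℝ) ^ (-(d : ℝ) - α)

/-!
Everything takes place in finite volume, where `τ_B(x, y)` is the probability that `x` and `y` are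
connected inside the finite set `B`. Splitting clusters and applying the BK inequality bounds the
second moment of the number of vertices in large clusters; hence, if the sum of `τ_B` over all
pairs of a box `B` of side `L` is much larger than `L ^ (d + α)`, then `B` is likely to contain a
cluster with far more than `L ^ ((d + α) / 2)` vertices. Two such clusters in neighbouring boxes
are joined by an open edge with high probability, so clusters can be merged from scale to scale and
there is an infinite cluster. Below `β_c` the sum is therefore at most `A * L ^ (d + α)`, uniformly
in `β`.

For the pointwise bound, a path from `x` to `y` must leave a ball around `x`, and BK bounds
`τ_Q(x, y)` by a sum over the exit edge. Averaging over the radius of the ball, which is where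
`α < 1` is needed, and feeding the bound into itself twice (once for `τ` and once for its sums over
balls) gives `τ_Q(x, y) ≤ D * ‖x - y‖ ^ (-(d - α))` with `D` independent of `Q` and of `β < β_c`.
For fixed finite `Q` the left-hand side is continuous in `β`, so the bound extends to `β_c`. By the
inequality of arithmetic and geometric means the triangle diagram is then at most a multiple of
`(∑ x, ‖x‖ ^ (-3 * (d - α) / 2)) ^ 2`, which is finite exactly when `α < d / 3`.
-/

/-! ### Finite Bernoulli product measures and the BK inequality -/

section Indicator

open scoped Classical in
/-- The real-valued indicator of a proposition. -/
noncomputable def ind (A : Prop) : ℝ := if A then 1 else 0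

lemma ind_true {A : Prop} (h : A) : ind A = 1 := if_pos h

lemma ind_false {A : Prop} (h : ¬A) : ind A = 0 := if_neg h

lemma ind_nonneg (A : Prop) : 0 ≤ ind A := by unfold ind; split_ifs <;> simp

lemma ind_le_one (A : Prop) : ind A ≤ 1 := by unfold ind; split_ifs <;> simp

lemma ind_mono {A B : Prop} (h : A → B) : ind A ≤ ind B := by
  unfold ind; split_ifs <;> simp_all

lemma ind_and (A B : Prop) : ind (A ∧ B) = ind A * ind B := by
  unfold ind; split_ifs <;> simp_all

lemma ind_not (A : Prop) : ind (¬A) = 1 - ind A := by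
  unfold ind; split_ifs <;> simp_all

lemma ind_or_add_ind_and (A B : Prop) : ind (A ∨ B) + ind (A ∧ B) = ind A + ind B := by
  unfold ind; split_ifs <;> simp_all

lemma ind_or_le (A B : Prop) : ind (A ∨ B) ≤ ind A + ind B := by
  linarith [ind_or_add_ind_and A B, ind_nonneg (A ∧ B)]

lemma ind_exists_le {κ : Type*} (s : Finset κ) (A : κ → Prop) :
    ind (∃ i ∈ s, A i) ≤ ∑ i ∈ s, ind (A i) := by
  by_cases h : ∃ i ∈ s, A i
  · obtain ⟨i, hi, hA⟩ := h
    calc ind (∃ i ∈ s, A i) ≤ ind (A i) := (ind_le_one _).trans (ind_true hA).ge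
      _ ≤ ∑ i ∈ s, ind (A i) :=
        Finset.single_le_sum (f := fun i => ind (A i)) (fun i _ => ind_nonneg _) hi
  · rw [ind_false h]
    exact Finset.sum_nonneg fun i _ => ind_nonneg _

end Indicator

section FiniteBernoulli

variable {ι : Type*} [DecidableEq ι]

/-- The expectation of `f ω`, where the random set `ω ⊆ E` contains each `e ∈ E` independently with
probability `p e`. -/
noncomputable def expect (p : ι → ℝ) (E : Finset ι) (f : Finset ι → ℝ) : ℝ :=
  ∑ ω ∈ E.powerset, (∏ e ∈ ω, p e) * (∏ e ∈ E \ ω, (1 - p e)) * f ω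

/-- The probability of the event `A` under the product measure of `expect`. -/
noncomputable def prob (p : ι → ℝ) (E : Finset ι) (A : Finset ι → Prop) : ℝ :=
  expect p E fun ω => ind (A ω)

variable {p : ι → ℝ} {E S T : Finset ι}

lemma expect_empty (f : Finset ι → ℝ) : expect p ∅ f = f ∅ := by simp [expect]

lemma expect_insert {e : ι} (he : e ∉ E) (f : Finset ι → ℝ) :
    expect p (insert e E) f =
      p e * expect p E (fun ω => f (insert e ω)) + (1 - p e) * expect p E f := by
  unfold expect
  rw [Finset.sum_powerset_insert he, add_comm, Finset.mul_sum, Finset.mul_sum]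
  congr 1 <;> refine Finset.sum_congr rfl fun ω hω => ?_
  all_goals have heω : e ∉ ω := fun h => he (Finset.mem_powerset.1 hω h)
  · rw [Finset.prod_insert heω, Finset.insert_sdiff_insert, Finset.sdiff_insert,
      Finset.erase_eq_of_notMem (by simp [he])]
    ring
  · rw [Finset.insert_sdiff_of_notMem _ heω, Finset.prod_insert (by simp [he])]
    ring

lemma expect_congr {f g : Finset ι → ℝ} (h : ∀ ω ⊆ E, f ω = g ω) :
    expect p E f = expect p E g :=
  Finset.sum_congr rfl fun ω hω => by rw [h ω (Finset.mem_powerset.1 hω)]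

lemma expect_add (E : Finset ι) (f g : Finset ι → ℝ) :
    expect p E (fun ω => f ω + g ω) = expect p E f + expect p E g := by
  simp only [expect, mul_add, Finset.sum_add_distrib]

lemma expect_mul_left (E : Finset ι) (c : ℝ) (f : Finset ι → ℝ) :
    expect p E (fun ω => c * f ω) = c * expect p E f := by
  simp only [expect, Finset.mul_sum, mul_left_comm c]

lemma expect_mul_right (E : Finset ι) (c : ℝ) (f : Finset ι → ℝ) :
    expect p E (fun ω => f ω * c) = expect p E f * c := by
  simp only [expect, Finset.sum_mul, mul_assoc]

lemma expect_sum {κ : Type*} (E : Finset ι) (s : Finset κ) (f : κ → Finset ι → ℝ) :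
    expect p E (fun ω => ∑ i ∈ s, f i ω) = ∑ i ∈ s, expect p E (f i) := by
  simp only [expect, Finset.mul_sum]
  exact Finset.sum_comm

lemma expect_const (E : Finset ι) (c : ℝ) : expect p E (fun _ => c) = c := by
  induction E using Finset.induction_on with
  | empty => rw [expect_empty]
  | insert e E he ih => rw [expect_insert he, ih]; ring

lemma expect_mono (hp : ∀ e, p e ∈ Set.Icc 0 1) {f g : Finset ι → ℝ}
    (h : ∀ ω ⊆ E, f ω ≤ g ω) : expect p E f ≤ expect p E g :=
  Finset.sum_le_sum fun ω hω => mul_le_mul_of_nonneg_left (h ω (Finset.mem_powerset.1 hω)) <|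
    mul_nonneg (Finset.prod_nonneg fun e _ => (hp e).1)
      (Finset.prod_nonneg fun e _ => sub_nonneg.2 (hp e).2)

lemma expect_nonneg (hp : ∀ e, p e ∈ Set.Icc 0 1) {f : Finset ι → ℝ}
    (h : ∀ ω ⊆ E, 0 ≤ f ω) : 0 ≤ expect p E f :=
  (expect_const E 0).symm.trans_le (expect_mono hp h)

lemma expect_union (hST : Disjoint S T) (f : Finset ι → Finset ι → ℝ) :
    expect p (S ∪ T) (fun ω => f (ω ∩ S) (ω ∩ T)) =
      expect p S fun a => expect p T fun b => f a b := by
  induction S using Finset.induction_on generalizing f with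
  | empty =>
    rw [expect_empty, Finset.empty_union]
    exact expect_congr fun ω hω => by rw [Finset.inter_empty, Finset.inter_eq_left.2 hω]
  | insert e S he ih =>
    rw [Finset.disjoint_insert_left] at hST
    have heU : e ∉ S ∪ T := by simp [he, hST.1]
    rw [Finset.insert_union, expect_insert heU, expect_insert he, ← ih hST.2, ← ih hST.2]
    congr 2
    · refine expect_congr fun ω _ => ?_
      rw [← Finset.insert_inter_distrib, Finset.insert_inter_of_notMem hST.1]
    · refine expect_congr fun ω hω => ?_
      rw [Finset.inter_insert_of_notMem fun h => heU (hω h)]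

lemma expect_inter (h : S ⊆ E) (f : Finset ι → ℝ) :
    expect p E (fun ω => f (ω ∩ S)) = expect p S f := by
  have hunion := expect_union (p := p) (S := S) (T := E \ S) Finset.disjoint_sdiff fun a _ => f a
  rw [Finset.union_sdiff_of_subset h] at hunion
  exact hunion.trans (expect_congr fun ω _ => expect_const _ _)

lemma expect_inter_inter (hS : S ⊆ E) (hT : T ⊆ E) (hST : Disjoint S T)
    (f : Finset ι → Finset ι → ℝ) :
    expect p E (fun ω => f (ω ∩ S) (ω ∩ T)) =
      expect p S fun a => expect p T fun b => f a b := by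
  rw [← expect_union hST, ← expect_inter (Finset.union_subset hS hT)]
  refine expect_congr fun ω _ => ?_
  rw [Finset.inter_assoc, Finset.inter_assoc, Finset.union_inter_cancel_left,
    Finset.union_inter_cancel_right]

lemma expect_map (σ : ι ≃ ι) (hσ : ∀ e, p (σ e) = p e) (f : Finset ι → ℝ) :
    expect p (E.map σ.toEmbedding) f = expect p E fun ω => f (ω.map σ.toEmbedding) := by
  induction E using Finset.induction_on generalizing f with
  | empty => simp [expect_empty]
  | insert e E he ih =>
    rw [Finset.map_insert, expect_insert (by simpa using he), expect_insert he, ih, ih]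
    simp only [Finset.map_insert, Equiv.coe_toEmbedding, hσ]

lemma prob_eq_empty (E : Finset ι) : prob p E (fun ω => ω = ∅) = ∏ e ∈ E, (1 - p e) := by
  unfold prob
  induction E using Finset.induction_on with
  | empty => simp [expect_empty, ind]
  | insert e E he ih =>
    simp only [expect_insert he, ih, Finset.prod_insert he,
      ind_false (Finset.insert_ne_empty _ _), expect_const]
    ring

lemma prob_mem {e : ι} (he : e ∈ E) : prob p E (fun ω => e ∈ ω) = p e := by
  obtain ⟨E', he', rfl⟩ : ∃ E', e ∉ E' ∧ insert e E' = E :=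
    ⟨E.erase e, Finset.notMem_erase e E, Finset.insert_erase he⟩
  have hopen : expect p E' (fun ω => ind (e ∈ insert e ω)) = 1 := by
    simp only [ind_true (Finset.mem_insert_self e _), expect_const]
  have hclosed : expect p E' (fun ω => ind (e ∈ ω)) = 0 := by
    rw [expect_congr fun ω hω => ind_false fun h => he' (hω h), expect_const]
  rw [prob, expect_insert he', hopen, hclosed]
  ring

lemma prob_mono (hp : ∀ e, p e ∈ Set.Icc 0 1) {A B : Finset ι → Prop}
    (h : ∀ ω ⊆ E, A ω → B ω) : prob p E A ≤ prob p E B :=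
  expect_mono hp fun ω hω => ind_mono (h ω hω)

lemma prob_nonneg (hp : ∀ e, p e ∈ Set.Icc 0 1) (A : Finset ι → Prop) : 0 ≤ prob p E A :=
  expect_nonneg hp fun _ _ => ind_nonneg _

lemma prob_le_one (hp : ∀ e, p e ∈ Set.Icc 0 1) (A : Finset ι → Prop) : prob p E A ≤ 1 :=
  (expect_mono hp fun _ _ => ind_le_one _).trans_eq (expect_const E 1)

lemma prob_not (E : Finset ι) (A : Finset ι → Prop) :
    prob p E (fun ω => ¬A ω) = 1 - prob p E A := by
  rw [eq_sub_iff_add_eq, prob, prob, ← expect_add]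
  simp only [ind_not, sub_add_cancel, expect_const]

lemma prob_or_le (hp : ∀ e, p e ∈ Set.Icc 0 1) (A B : Finset ι → Prop) :
    prob p E (fun ω => A ω ∨ B ω) ≤ prob p E A + prob p E B := by
  simp only [prob, ← expect_add]
  exact expect_mono hp fun ω _ => ind_or_le _ _

lemma prob_exists_le {κ : Type*} (hp : ∀ e, p e ∈ Set.Icc 0 1) (s : Finset κ)
    (A : κ → Finset ι → Prop) :
    prob p E (fun ω => ∃ i ∈ s, A i ω) ≤ ∑ i ∈ s, prob p E (A i) := by
  simp only [prob, ← expect_sum]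
  exact expect_mono hp fun ω _ => ind_exists_le s fun i => A i ω

/-- `F` occurs disjointly in `ω`: it is witnessed by two disjoint subsets of `ω`. For
`F a b = (A a ∧ B b)` this is the event `A ∘ B` of the van den Berg–Kesten inequality. -/
def OccursDisjointly (F : Finset ι → Finset ι → Prop) (ω : Finset ι) : Prop :=
  ∃ η ζ, η ⊆ ω ∧ ζ ⊆ ω ∧ Disjoint η ζ ∧ F η ζ

section BK

variable {F : Finset ι → Finset ι → Prop}

lemma OccursDisjointly.of_insert
    (hF : ∀ ⦃a a' b b'⦄, a ⊆ a' → b ⊆ b' → F a b → F a' b') {e : ι} {ω : Finset ι}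
    (h : OccursDisjointly F (insert e ω)) :
    OccursDisjointly (fun a b => F (insert e a) b ∨ F a (insert e b)) ω := by
  obtain ⟨η, ζ, hη, hζ, hdisj, h⟩ := h
  refine ⟨η.erase e, ζ.erase e, Finset.subset_insert_iff.1 hη, Finset.subset_insert_iff.1 hζ,
    hdisj.mono (Finset.erase_subset _ _) (Finset.erase_subset _ _), ?_⟩
  by_cases heη : e ∈ η
  · left
    rwa [Finset.insert_erase heη, Finset.erase_eq_of_notMem (Finset.disjoint_left.1 hdisj heη)]
  · right
    rw [Finset.erase_eq_of_notMem heη]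
    exact hF subset_rfl (Finset.insert_erase_subset e ζ) h

lemma expect_expect_insert {e : ι} (he : e ∉ E) (f : Finset ι → Finset ι → ℝ) :
    (expect p (insert e E) fun a => expect p (insert e E) fun b => f a b) =
      p e * (p e * (expect p E fun a => expect p E fun b => f (insert e a) (insert e b)) +
        (1 - p e) * expect p E fun a => expect p E fun b => f (insert e a) b) +
      (1 - p e) * (p e * (expect p E fun a => expect p E fun b => f a (insert e b)) +
        (1 - p e) * expect p E fun a => expect p E fun b => f a b) := by
  simp only [expect_insert he, expect_add, expect_mul_left]

/-- Edges are duplicated one at a time into an independent copy: the inductive step trades the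
disjoint use of one edge for the free use of two independent copies of it. -/
theorem prob_occursDisjointly_le (hp : ∀ e, p e ∈ Set.Icc 0 1) (E : Finset ι)
    (hF : ∀ ⦃a a' b b'⦄, a ⊆ a' → b ⊆ b' → F a b → F a' b') :
    prob p E (OccursDisjointly F) ≤ expect p E fun a => expect p E fun b => ind (F a b) := by
  induction E using Finset.induction_on generalizing F with
  | empty =>
    simp only [prob, expect_empty]
    refine ind_mono ?_
    rintro ⟨η, ζ, hη, hζ, -, h⟩
    exact hF hη hζ h
  | insert e E he ih =>
    let R (G : Finset ι → Finset ι → Prop) : ℝ :=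
      expect p E fun a => expect p E fun b => ind (G a b)
    have R_mono {G G' : Finset ι → Finset ι → Prop} (h : ∀ a b, G a b → G' a b) : R G ≤ R G' :=
      expect_mono hp fun a _ => expect_mono hp fun b _ => ind_mono (h a b)
    have hleft {a b} : F a b → F (insert e a) b := hF (Finset.subset_insert _ _) subset_rfl
    have hright {a b} : F a b → F a (insert e b) := hF subset_rfl (Finset.subset_insert _ _)
    let G₁ (a b : Finset ι) : Prop := F (insert e a) b
    let G₂ (a b : Finset ι) : Prop := F a (insert e b)
    have hor : R (fun a b => G₁ a b ∨ G₂ a b) + R (fun a b => G₁ a b ∧ G₂ a b) = R G₁ + R G₂ := by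
      simp only [R, ← expect_add, ind_or_add_ind_and]
    have hand_ge : R F ≤ R fun a b => G₁ a b ∧ G₂ a b := R_mono fun a b h => ⟨hleft h, hright h⟩
    have hor_le : (R fun a b => G₁ a b ∨ G₂ a b) ≤ R fun a b => F (insert e a) (insert e b) :=
      R_mono fun a b h => h.elim hright hleft
    have hopen : prob p E (fun ω => OccursDisjointly F (insert e ω)) ≤
        R fun a b => G₁ a b ∨ G₂ a b := by
      refine (prob_mono hp fun ω _ => OccursDisjointly.of_insert hF).trans (ih ?_)
      exact fun a a' b b' ha hb => Or.imp (hF (Finset.insert_subset_insert e ha) hb)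
        (hF ha (Finset.insert_subset_insert e hb))
    rw [prob, expect_insert he, expect_expect_insert he]
    change p e * prob p E (fun ω => OccursDisjointly F (insert e ω)) +
      (1 - p e) * prob p E (OccursDisjointly F) ≤
      p e * (p e * R _ + (1 - p e) * R G₁) + (1 - p e) * (p e * R G₂ + (1 - p e) * R F)
    have hpe := (hp e).1
    have hqe := sub_nonneg.2 (hp e).2
    linear_combination p e * hopen + (1 - p e) * ih hF + p e * p e * hor_le +
      p e * (1 - p e) * hand_ge + p e * (1 - p e) * hor

theorem prob_occursDisjointly_le_mul (hp : ∀ e, p e ∈ Set.Icc 0 1) (E : Finset ι)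
    {A B : Finset ι → Prop} (hA : Monotone A) (hB : Monotone B) :
    prob p E (OccursDisjointly fun a b => A a ∧ B b) ≤ prob p E A * prob p E B := by
  refine (prob_occursDisjointly_le hp E fun a a' b b' ha hb => And.imp (hA ha) (hB hb)).trans_eq ?_
  simp only [prob, ind_and, expect_mul_left, expect_mul_right]

end BK

end FiniteBernoulli

/-! ### Connectivity in a finite volume -/

section Connectivity

variable {W : Type*}

/-- `x` and `y` are connected by a path of edges of the finite edge set `ω`. Loops `s(a, a)` may
belong to `ω` but are never used. -/
def Linked (ω : Finset (Sym2 W)) (x y : W) : Prop :=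
  Relation.ReflTransGen (fun a b => a ≠ b ∧ s(a, b) ∈ ω) x y

variable {ω ω' : Finset (Sym2 W)} {B Q : Finset W} {x y z : W}

namespace Linked

lemma refl (ω : Finset (Sym2 W)) (x : W) : Linked ω x x := Relation.ReflTransGen.refl

lemma trans (h : Linked ω x y) (h' : Linked ω y z) : Linked ω x z :=
  Relation.ReflTransGen.trans h h'

lemma mono (hω : ω ⊆ ω') (h : Linked ω x y) : Linked ω' x y :=
  Relation.ReflTransGen.mono (fun _ _ h => ⟨h.1, hω h.2⟩) _ _ h

lemma of_mem (h : s(x, y) ∈ ω) : Linked ω x y := by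
  rcases eq_or_ne x y with rfl | hxy
  · exact refl ω x
  · exact Relation.ReflTransGen.single ⟨hxy, h⟩

lemma symm (h : Linked ω x y) : Linked ω y x := by
  induction h with
  | refl => exact refl ω x
  | tail _ hbc ih => exact (of_mem (Sym2.eq_swap ▸ hbc.2)).trans ih

lemma comm : Linked ω x y ↔ Linked ω y x := ⟨symm, symm⟩

lemma mem_of_subset_sym2 (hω : ω ⊆ B.sym2) (h : Linked ω x y) (hx : x ∈ B) : y ∈ B := by
  induction h with
  | refl => exact hx
  | tail _ hbc _ => exact (Finset.mk_mem_sym2_iff.1 (hω hbc.2)).2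

open scoped Classical in
lemma filter_forall_mem (h : Linked ω x y) :
    Linked (ω.filter fun e => ∀ a ∈ e, Linked ω x a) x y := by
  induction h with
  | refl => exact refl _ x
  | tail hxb hbc ih =>
    refine ih.trans (of_mem (Finset.mem_filter.2 ⟨hbc.2, fun a ha => ?_⟩))
    rcases Sym2.mem_iff.1 ha with rfl | rfl
    · exact hxb
    · exact Relation.ReflTransGen.tail hxb hbc

end Linked

lemma exists_last_exit_of_reflTransGen {r : W → W → Prop} {K : W → Prop}
    (h : Relation.ReflTransGen r x y) (hx : K x) (hy : ¬K y) :
    ∃ u v, K u ∧ ¬K v ∧ r u v ∧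
      Relation.ReflTransGen (fun a b => ¬K a ∧ ¬K b ∧ r a b) v y := by
  suffices hexit : (¬K x ∧ Relation.ReflTransGen (fun a b => ¬K a ∧ ¬K b ∧ r a b) x y) ∨
      ∃ u v, K u ∧ ¬K v ∧ r u v ∧
        Relation.ReflTransGen (fun a b => ¬K a ∧ ¬K b ∧ r a b) v y from
    hexit.resolve_left fun h => h.1 hx
  clear hx
  induction h using Relation.ReflTransGen.head_induction_on with
  | refl => exact Or.inl ⟨hy, .refl⟩
  | @head a c hac _ ih =>
    rcases ih with ⟨hc, hcy⟩ | hexit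
    · by_cases ha : K a
      · exact Or.inr ⟨a, c, ha, hc, hac, hcy⟩
      · exact Or.inl ⟨ha, .head ⟨ha, hc, hac⟩ hcy⟩
    · exact Or.inr hexit

variable [DecidableEq W]

/-- The event that `x` is connected to `u` inside `B`, the edge `s(u, v)` is open, and `v` is
connected to `y`, all three using pairwise disjoint sets of open edges. -/
def ExitsThrough (B : Finset W) (x y u v : W) : Finset (Sym2 W) → Prop :=
  OccursDisjointly fun η ζ => Linked (η ∩ B.sym2) x u ∧
    OccursDisjointly (fun η' ζ' => s(u, v) ∈ η' ∧ Linked ζ' v y) ζ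

/-- The exit edge is the last edge leaving the cluster `K` of `x` inside `B`; it separates the edges
inside `K` from those of the remaining path, which avoids `K`. -/
lemma Linked.inter_sym2_or_exitsThrough (hω : ω ⊆ Q.sym2) (hx : x ∈ B) (h : Linked ω x y) :
    Linked (ω ∩ B.sym2) x y ∨ ∃ u ∈ B, ∃ v ∈ Q \ B, ExitsThrough B x y u v ω := by
  classical
  let K : W → Prop := Linked (ω ∩ B.sym2) x
  refine or_iff_not_imp_left.2 fun hy => ?_
  obtain ⟨u, v, hu, hv, huv, hvy⟩ :=
    exists_last_exit_of_reflTransGen (K := K) h (Linked.refl _ x) hy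
  have huB : u ∈ B := hu.mem_of_subset_sym2 Finset.inter_subset_right hx
  have hvB : v ∉ B := fun hvB => hv (hu.trans (Linked.of_mem (by simp [huv.2, huB, hvB])))
  have hvQ : v ∈ Q := (Finset.mk_mem_sym2_iff.1 (hω huv.2)).2
  have hinside : Linked (ω.filter (fun e => ∀ a ∈ e, K a) ∩ B.sym2) x u :=
    hu.filter_forall_mem.mono fun e he => by
      simp only [Finset.mem_filter, Finset.mem_inter] at he ⊢
      exact ⟨⟨he.1.1, he.2⟩, he.1.2⟩
  have houtside : Linked (ω.filter fun e => ∀ a ∈ e, ¬K a) v y := by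
    refine Relation.ReflTransGen.mono (fun a b h => ⟨h.2.2.1, ?_⟩) _ _ hvy
    simpa only [Finset.mem_filter, Sym2.ball] using ⟨h.2.2.2, h.1, h.2.1⟩
  refine ⟨u, huB, v, Finset.mem_sdiff.2 ⟨hvQ, hvB⟩, ω.filter (fun e => ∀ a ∈ e, K a),
    ω.filter (fun e => ¬∀ a ∈ e, K a), Finset.filter_subset _ _, Finset.filter_subset _ _,
    Finset.disjoint_filter_filter_not _ _ _, hinside, {s(u, v)},
    ω.filter (fun e => ∀ a ∈ e, ¬K a), ?_, ?_, ?_, Finset.mem_singleton_self _, houtside⟩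
  · exact Finset.singleton_subset_iff.2
      (Finset.mem_filter.2 ⟨huv.2, fun h => hv (h v (Sym2.mem_mk_right u v))⟩)
  · refine Finset.monotone_filter_right ω fun e _ he h => ?_
    induction e with
    | _ a b => exact he a (Sym2.mem_mk_left a b) (h a (Sym2.mem_mk_left a b))
  · exact Finset.disjoint_singleton_left.2
      fun h => (Finset.mem_filter.1 h).2 u (Sym2.mem_mk_left u v) hu

/-- The two-point function of percolation restricted to the finite vertex set `B`. -/
noncomputable def tau (p : Sym2 W → ℝ) (B : Finset W) (x y : W) : ℝ :=
  prob p B.sym2 fun ω => Linked ω x y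

variable {p : Sym2 W → ℝ}

lemma tau_comm (B : Finset W) (x y : W) : tau p B x y = tau p B y x := by
  simp only [tau, Linked.comm (x := x)]

lemma tau_nonneg (hp : ∀ e, p e ∈ Set.Icc 0 1) (B : Finset W) (x y : W) : 0 ≤ tau p B x y :=
  prob_nonneg hp _

lemma tau_le_one (hp : ∀ e, p e ∈ Set.Icc 0 1) (B : Finset W) (x y : W) : tau p B x y ≤ 1 :=
  prob_le_one hp _

lemma prob_linked_inter_sym2 (h : B ⊆ Q) (x y : W) :
    prob p Q.sym2 (fun ω => Linked (ω ∩ B.sym2) x y) = tau p B x y :=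
  expect_inter (Finset.sym2_mono h) fun ω => ind (Linked ω x y)

lemma tau_mono (hp : ∀ e, p e ∈ Set.Icc 0 1) (h : B ⊆ Q) (x y : W) :
    tau p B x y ≤ tau p Q x y := by
  rw [← prob_linked_inter_sym2 h]
  exact prob_mono hp fun ω _ hc => hc.mono Finset.inter_subset_left

lemma tau_eq_zero_of_notMem (hx : x ∈ B) (hy : y ∉ B) : tau p B x y = 0 := by
  rw [tau, prob, expect_congr fun ω hω => ind_false fun h => hy (h.mem_of_subset_sym2 hω hx),
    expect_const]

lemma prob_exitsThrough_le (hp : ∀ e, p e ∈ Set.Icc 0 1) (hB : B ⊆ Q) {u v : W} (hu : u ∈ B)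
    (hv : v ∈ Q) (x y : W) :
    prob p Q.sym2 (ExitsThrough B x y u v) ≤ tau p B x u * (p s(u, v) * tau p Q v y) := by
  have hedge : prob p Q.sym2 (fun η => s(u, v) ∈ η) = p s(u, v) :=
    prob_mem (Finset.mk_mem_sym2_iff.2 ⟨hB hu, hv⟩)
  rw [← prob_linked_inter_sym2 hB, ← hedge]
  refine (prob_occursDisjointly_le_mul hp Q.sym2
    (fun a b hab => Linked.mono (Finset.inter_subset_inter_right hab)) ?_).trans
    (mul_le_mul_of_nonneg_left ?_ (prob_nonneg hp _))
  · rintro a b hab ⟨η, ζ, hη, hζ, h⟩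
    exact ⟨η, ζ, hη.trans hab, hζ.trans hab, h⟩
  · exact prob_occursDisjointly_le_mul hp Q.sym2 (fun a b hab h => hab h)
      fun a b hab => Linked.mono hab

theorem tau_le_tau_add_sum_exit (hp : ∀ e, p e ∈ Set.Icc 0 1) (hB : B ⊆ Q) (hx : x ∈ B) (y : W) :
    tau p Q x y ≤
      tau p B x y + ∑ u ∈ B, ∑ v ∈ Q \ B, tau p B x u * (p s(u, v) * tau p Q v y) :=
  calc tau p Q x y
    _ ≤ prob p Q.sym2 fun ω =>
          Linked (ω ∩ B.sym2) x y ∨ ∃ u ∈ B, ∃ v ∈ Q \ B, ExitsThrough B x y u v ω :=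
        prob_mono hp fun ω hω h => h.inter_sym2_or_exitsThrough hω hx
    _ ≤ tau p B x y + ∑ u ∈ B, ∑ v ∈ Q \ B, prob p Q.sym2 (ExitsThrough B x y u v) := by
        refine (prob_or_le hp _ _).trans (add_le_add (prob_linked_inter_sym2 hB x y).le ?_)
        exact (prob_exists_le hp B _).trans
          (Finset.sum_le_sum fun u _ => prob_exists_le hp (Q \ B) _)
    _ ≤ _ := by
        gcongr with u hu v hv
        exact prob_exitsThrough_le hp hB hu (Finset.mem_sdiff.1 hv).1 x y

end Connectivity

/-! ### Splitting connected sets and large clusters -/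

section Splitting

variable {W : Type*} [DecidableEq W]

/-- Every vertex of `X` is reachable from the root `v ∈ X` by edges of `ω` inside `X`. -/
def ConnectedOn (ω : Finset (Sym2 W)) (X : Finset W) (v : W) : Prop :=
  v ∈ X ∧ ∀ w ∈ X, Linked (ω ∩ X.sym2) v w

variable {ω η : Finset (Sym2 W)} {K X Y C : Finset W} {u v : W}

namespace ConnectedOn

lemma union (hX : ConnectedOn ω X v) (hY : ConnectedOn ω Y v) : ConnectedOn ω (X ∪ Y) v := by
  refine ⟨Finset.mem_union_left _ hX.1, fun w hw => ?_⟩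
  rcases Finset.mem_union.1 hw with h | h
  · exact (hX.2 w h).mono
      (Finset.inter_subset_inter_left (Finset.sym2_mono Finset.subset_union_left))
  · exact (hY.2 w h).mono
      (Finset.inter_subset_inter_left (Finset.sym2_mono Finset.subset_union_right))

lemma insert (hX : ConnectedOn ω X u) (hvu : s(v, u) ∈ ω) : ConnectedOn ω (insert v X) v := by
  refine ⟨Finset.mem_insert_self _ _, fun w hw => ?_⟩
  rcases Finset.mem_insert.1 hw with rfl | h
  · exact Linked.refl _ _
  · refine (Linked.of_mem ?_).trans ((hX.2 w h).mono
      (Finset.inter_subset_inter_left (Finset.sym2_mono (Finset.subset_insert v X))))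
    simp [hvu, hX.1]

lemma singleton (ω : Finset (Sym2 W)) (v : W) : ConnectedOn ω {v} v :=
  ⟨Finset.mem_singleton_self v, fun w hw => by
    rw [Finset.mem_singleton.1 hw]; exact Linked.refl _ v⟩

lemma of_forall_edge (hX : ConnectedOn ω X v)
    (hη : ∀ a ∈ X, ∀ b ∈ X, a ≠ b → s(a, b) ∈ ω → s(a, b) ∈ η) : ConnectedOn η X v := by
  refine ⟨hX.1, fun w hw => Relation.ReflTransGen.mono (fun a b h => ?_) _ _ (hX.2 w hw)⟩
  have hab := Finset.mem_inter.1 h.2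
  have habX := Finset.mk_mem_sym2_iff.1 hab.2
  exact ⟨h.1, Finset.mem_inter.2 ⟨hη a habX.1 b habX.2 h.1 hab.1, hab.2⟩⟩

lemma exists_ne_mem_edge (hX : ConnectedOn ω X v) (hcard : 1 < X.card) :
    ∃ u ∈ X.erase v, s(v, u) ∈ ω := by
  obtain ⟨w, hw, hwv⟩ := Finset.exists_mem_ne hcard v
  rcases Relation.ReflTransGen.cases_head (hX.2 w hw) with h | ⟨u, hvu, -⟩
  · exact absurd h.symm hwv
  · obtain ⟨hne, hmem⟩ := hvu
    rw [Finset.mem_inter, Finset.mk_mem_sym2_iff] at hmem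
    exact ⟨u, Finset.mem_erase.2 ⟨hne.symm, hmem.2.2⟩, hmem.1⟩

/-- `C` is the component of a neighbour of the root after the root has been removed. -/
lemma exists_branch (hX : ConnectedOn ω X v) (hcard : 1 < X.card) :
    ∃ C u, C ⊆ X.erase v ∧ s(v, u) ∈ ω ∧ ConnectedOn ω C u ∧ ConnectedOn ω (X \ C) v := by
  classical
  obtain ⟨u, hu, hvu⟩ := hX.exists_ne_mem_edge hcard
  let ω' := ω ∩ (X.erase v).sym2
  let C := (X.erase v).filter fun w => Linked ω' u w
  have hCX : C ⊆ X.erase v := Finset.filter_subset _ _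
  refine ⟨C, u, hCX, hvu, ⟨Finset.mem_filter.2 ⟨hu, Linked.refl _ u⟩, fun w hw => ?_⟩,
    Finset.mem_sdiff.2 ⟨hX.1, fun h => by simpa using hCX h⟩, fun w hw => ?_⟩
  · refine (Finset.mem_filter.1 hw).2.filter_forall_mem.mono fun e he => ?_
    simp only [ω', C, Finset.mem_filter, Finset.mem_inter, Finset.mem_sym2_iff] at he ⊢
    exact ⟨he.1.1, fun a ha => ⟨he.1.2 a ha, he.2 a ha⟩⟩
  · obtain ⟨hwX, hwC⟩ := Finset.mem_sdiff.1 hw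
    clear hw
    have hvw : Linked (ω ∩ X.sym2) v w := hX.2 w hwX
    induction hvw with
    | refl => exact Linked.refl _ v
    | @tail a b _ hab ih =>
      obtain ⟨habω, haX, -⟩ : s(a, b) ∈ ω ∧ a ∈ X ∧ b ∈ X := by simpa using hab.2
      rcases eq_or_ne b v with rfl | hb
      · exact Linked.refl _ b
      have hbe : b ∈ X.erase v := Finset.mem_erase.2 ⟨hb, hwX⟩
      have haC : a ∉ C := fun ha => hwC <| Finset.mem_filter.2
        ⟨hbe, (Finset.mem_filter.1 ha).2.trans (Linked.of_mem
          (Finset.mem_inter.2 ⟨habω, Finset.mk_mem_sym2_iff.2 ⟨hCX ha, hbe⟩⟩))⟩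
      exact (ih haX haC).trans (Linked.of_mem (by simp [habω, haX, haC, hwX, hwC]))

end ConnectedOn

/-- `K` is the union of two connected sets `X` and `(K \ X) ∪ {v}` sharing only the root `v`. -/
structure IsCut (ω : Finset (Sym2 W)) (K X : Finset W) (v : W) : Prop where
  subset : X ⊆ K
  left : ConnectedOn ω X v
  right : ConnectedOn ω (insert v (K \ X)) v

namespace IsCut

lemma refl (hK : ConnectedOn ω K v) : IsCut ω K K v :=
  ⟨subset_rfl, hK, by simpa using ConnectedOn.singleton ω v⟩

lemma erase_root (h : IsCut ω K X v) (hvu : s(v, u) ∈ ω)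
    (hC : ConnectedOn ω (X.erase v) u) : IsCut ω K (X.erase v) u := by
  refine ⟨(Finset.erase_subset v X).trans h.subset, hC, ?_⟩
  have hKX : K \ X.erase v = insert v (K \ X) := Finset.sdiff_erase (h.subset h.left.1)
  rw [hKX]
  exact h.right.insert (Sym2.eq_swap ▸ hvu)

lemma insert_root (h : IsCut ω K X v) (hCX : C ⊆ X) (hvu : s(v, u) ∈ ω)
    (hC : ConnectedOn ω C u) (hXC : ConnectedOn ω (X \ C) v) : IsCut ω K (insert v C) v := by
  have hvX := h.left.1
  have hXK := h.subset
  refine ⟨Finset.insert_subset (hXK hvX) (hCX.trans hXK), hC.insert hvu, ?_⟩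
  have hunion : insert v (K \ insert v C) = insert v (K \ X) ∪ (X \ C) := by grind
  rw [hunion]
  exact h.right.union hXC

lemma sdiff (h : IsCut ω K X v) (hCX : C ⊆ X) (hvu : s(v, u) ∈ ω)
    (hC : ConnectedOn ω C u) (hXC : ConnectedOn ω (X \ C) v) : IsCut ω K (X \ C) v := by
  have hXK := h.subset
  refine ⟨Finset.sdiff_subset.trans hXK, hXC, ?_⟩
  have hunion : insert v (K \ (X \ C)) = insert v (K \ X) ∪ insert v C := by grind
  rw [hunion]
  exact h.right.union (hC.insert hvu)

/-- Shrink `X` until it has at most `2 * s` vertices: removing a branch `C` at the root, either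
`C ∪ {v}` or `X \ C` still has at least `s` of them. -/
lemma exists_balanced {s : ℕ} (hs : 1 ≤ s) (hK : 3 * s ≤ K.card) (h : IsCut ω K X v)
    (hsX : s ≤ X.card) :
    ∃ X v, IsCut ω K X v ∧ s ≤ X.card ∧ s ≤ (insert v (K \ X)).card := by
  induction hn : X.card using Nat.strong_induction_on generalizing X v with
  | _ n ih =>
  rcases le_or_gt X.card (2 * s) with hsmall | hlarge
  · refine ⟨X, v, h, hsX, ?_⟩
    have hcardX := Finset.card_sdiff_add_card_eq_card h.subset
    have hcardKX := Finset.card_le_card (Finset.subset_insert v (K \ X))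
    omega
  obtain ⟨C, u, hCv, hvu, hC, hXC⟩ := h.left.exists_branch (by omega)
  have hCX : C ⊆ X := hCv.trans (Finset.erase_subset v X)
  have hcard : (X \ C).card + C.card = X.card := Finset.card_sdiff_add_card_eq_card hCX
  have hcardC : 1 ≤ C.card := Finset.card_pos.2 ⟨u, hC.1⟩
  have hcard_erase : (X.erase v).card + 1 = X.card := Finset.card_erase_add_one h.left.1
  rcases eq_or_ne C (X.erase v) with rfl | hne
  · exact ih _ (by omega) (h.erase_root hvu hC) (by omega) rfl
  have hlt : C.card < (X.erase v).card := Finset.card_lt_card (hCv.ssubset_of_ne hne)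
  have hcard_insert : (insert v C).card = C.card + 1 :=
    Finset.card_insert_of_notMem fun hv => by simpa using hCv hv
  rcases le_or_gt s (C.card + 1) with hsC | hsC
  · exact ih _ (by omega) (h.insert_root hCX hvu hC hXC) (by omega) rfl
  · exact ih _ (by omega) (h.sdiff hCX hvu hC hXC) (by omega) rfl

end IsCut

end Splitting

section LargeClusters

variable {W : Type*}

open scoped Classical in
/-- The part in `Λ` of the `ω`-cluster of `x`. -/
noncomputable def clusterIn (Λ : Finset W) (ω : Finset (Sym2 W)) (x : W) : Finset W :=
  Λ.filter fun y => Linked ω x y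

/-- The vertices of `Λ` whose cluster has at least `m` vertices. -/
noncomputable def bigSet (Λ : Finset W) (m : ℕ) (ω : Finset (Sym2 W)) : Finset W :=
  Λ.filter fun x => m ≤ (clusterIn Λ ω x).card

variable {Λ X U : Finset W} {ω η : Finset (Sym2 W)} {m s t : ℕ} {v x y : W}

lemma mem_clusterIn : y ∈ clusterIn Λ ω x ↔ y ∈ Λ ∧ Linked ω x y := by simp [clusterIn]

lemma mem_bigSet : x ∈ bigSet Λ m ω ↔ x ∈ Λ ∧ m ≤ (clusterIn Λ ω x).card := by simp [bigSet]

lemma clusterIn_subset : clusterIn Λ ω x ⊆ Λ := fun _ hy => (mem_clusterIn.1 hy).1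

lemma bigSet_subset : bigSet Λ m ω ⊆ Λ := Finset.filter_subset _ _

lemma self_mem_clusterIn (hx : x ∈ Λ) : x ∈ clusterIn Λ ω x :=
  mem_clusterIn.2 ⟨hx, Linked.refl ω x⟩

lemma clusterIn_mono (h : ω ⊆ η) (x : W) : clusterIn Λ ω x ⊆ clusterIn Λ η x := fun _ hy =>
  mem_clusterIn.2 ⟨clusterIn_subset hy, (mem_clusterIn.1 hy).2.mono h⟩

lemma bigSet_mono (h : ω ⊆ η) : bigSet Λ m ω ⊆ bigSet Λ m η := fun y hy =>
  mem_bigSet.2 ⟨bigSet_subset hy,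
    (mem_bigSet.1 hy).2.trans (Finset.card_le_card (clusterIn_mono h y))⟩

lemma clusterIn_congr (h : Linked ω x y) : clusterIn Λ ω x = clusterIn Λ ω y := by
  ext z
  rw [mem_clusterIn, mem_clusterIn]
  exact and_congr_right fun _ => ⟨h.symm.trans, h.trans⟩

lemma clusterIn_subset_bigSet (hx : x ∈ bigSet Λ m ω) : clusterIn Λ ω x ⊆ bigSet Λ m ω :=
  fun _ hy => mem_bigSet.2 ⟨clusterIn_subset hy,
    clusterIn_congr (Λ := Λ) (mem_clusterIn.1 hy).2 ▸ (mem_bigSet.1 hx).2⟩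

lemma le_card_bigSet (h : (bigSet Λ m ω).Nonempty) : m ≤ (bigSet Λ m ω).card := by
  obtain ⟨x, hx⟩ := h
  exact (mem_bigSet.1 hx).2.trans (Finset.card_le_card (clusterIn_subset_bigSet hx))

lemma ConnectedOn.subset_bigSet [DecidableEq W] (hX : ConnectedOn ω X v) (hXΛ : X ⊆ Λ)
    (hm : m ≤ X.card) : X ⊆ bigSet Λ m ω := by
  have hlink (w) (hw : w ∈ X) : Linked ω v w := (hX.2 w hw).mono Finset.inter_subset_left
  exact fun w hw => mem_bigSet.2 ⟨hXΛ hw, hm.trans <| Finset.card_le_card fun z hz =>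
    mem_clusterIn.2 ⟨hXΛ hz, (hlink w hw).symm.trans (hlink z hz)⟩⟩

lemma connectedOn_clusterIn [DecidableEq W] (hω : ω ⊆ Λ.sym2) (hx : x ∈ Λ) :
    ConnectedOn ω (clusterIn Λ ω x) x := by
  classical
  refine ⟨self_mem_clusterIn hx, fun w hw => ?_⟩
  refine (mem_clusterIn.1 hw).2.filter_forall_mem.mono fun e he => ?_
  simp only [Finset.mem_filter, Finset.mem_inter, Finset.mem_sym2_iff, mem_clusterIn] at he ⊢
  exact ⟨he.1, fun a ha => ⟨(he.2 a ha).mem_of_subset_sym2 hω hx, he.2 a ha⟩⟩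

lemma mem_bigSet_of_forall_edge (hω : ω ⊆ Λ.sym2) (hx : x ∈ bigSet Λ m ω)
    (hη : ∀ a ∈ clusterIn Λ ω x, ∀ b ∈ clusterIn Λ ω x, s(a, b) ∈ ω → s(a, b) ∈ η) :
    x ∈ bigSet Λ m η := by
  classical
  exact ((connectedOn_clusterIn hω (bigSet_subset hx)).of_forall_edge
    fun a ha b hb _ => hη a ha b hb).subset_bigSet clusterIn_subset (mem_bigSet.1 hx).2
    (self_mem_clusterIn (bigSet_subset hx))

lemma occursDisjointly_of_connectedOn [DecidableEq W] (hK : ConnectedOn ω X v) (hXΛ : X ⊆ Λ)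
    (ht : 1 ≤ t) (hmt : m ≤ t) (hcard : 3 * t ≤ X.card) :
    OccursDisjointly (fun η ζ => t ≤ (bigSet Λ m η).card ∧ t ≤ (bigSet Λ m ζ).card) ω := by
  obtain ⟨Y, u, hcut, hY, hZ⟩ := (IsCut.refl hK).exists_balanced ht hcard (by omega)
  have hYΛ : Y ⊆ Λ := hcut.subset.trans hXΛ
  refine ⟨ω ∩ Y.sym2, ω \ Y.sym2, Finset.inter_subset_left, Finset.sdiff_subset,
    (Finset.disjoint_sdiff_inter ω _).symm,
    hY.trans (Finset.card_le_card ((hcut.left.of_forall_edge ?_).subset_bigSet hYΛ (by omega))),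
    hZ.trans (Finset.card_le_card ((hcut.right.of_forall_edge ?_).subset_bigSet
      (Finset.insert_subset (hYΛ hcut.left.1) (Finset.sdiff_subset.trans hXΛ)) (by omega)))⟩
  · exact fun a ha b hb _ hab => by simp [hab, ha, hb]
  · intro a ha b hb hne hab
    rw [Finset.mem_sdiff, Finset.mk_mem_sym2_iff]
    refine ⟨hab, fun habY => hne ?_⟩
    grind

lemma exists_cluster_union_card (hU : ∀ x ∈ U, clusterIn Λ ω x ⊆ U) (hUΛ : U ⊆ Λ) (ht : 1 ≤ t)
    (hs : ∀ x ∈ U, (clusterIn Λ ω x).card ≤ s) (htU : t ≤ U.card) :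
    ∃ U' ⊆ U, (∀ x ∈ U', clusterIn Λ ω x ⊆ U') ∧ t ≤ U'.card ∧ U'.card < t + s := by
  classical
  induction hn : U.card using Nat.strong_induction_on generalizing U with
  | _ n ih =>
  rcases lt_or_ge U.card (t + s) with hlt | hge
  · exact ⟨U, subset_rfl, hU, htU, hlt⟩
  obtain ⟨x, hx⟩ : U.Nonempty := Finset.card_pos.1 (by omega)
  have hcard := Finset.card_sdiff_add_card_eq_card (hU x hx)
  have hpos : 1 ≤ (clusterIn Λ ω x).card := Finset.card_pos.2 ⟨x, self_mem_clusterIn (hUΛ hx)⟩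
  have hsx := hs x hx
  have hsub : U \ clusterIn Λ ω x ⊆ U := Finset.sdiff_subset
  obtain ⟨U', hU', hrest⟩ := ih (U \ clusterIn Λ ω x).card (by omega)
    (fun y hy z hz => Finset.mem_sdiff.2 ⟨hU y (hsub hy) hz, fun hzx =>
      (Finset.mem_sdiff.1 hy).2 (mem_clusterIn.2 ⟨hUΛ (hsub hy),
        (mem_clusterIn.1 hzx).2.trans (mem_clusterIn.1 hz).2.symm⟩)⟩)
    (hsub.trans hUΛ) (fun y hy => hs y (hsub hy)) (by omega) rfl
  exact ⟨U', hU'.trans hsub, hrest⟩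

lemma occursDisjointly_of_card_clusterIn_le (hω : ω ⊆ Λ.sym2) (ht : 1 ≤ t)
    (hsmall : ∀ x ∈ Λ, (clusterIn Λ ω x).card ≤ 3 * t) (hbig : 5 * t ≤ (bigSet Λ m ω).card) :
    OccursDisjointly (fun η ζ => t ≤ (bigSet Λ m η).card ∧ t ≤ (bigSet Λ m ζ).card) ω := by
  classical
  obtain ⟨U, hUbig, hU, htU, hUt⟩ := exists_cluster_union_card
    (fun x hx => clusterIn_subset_bigSet hx) bigSet_subset ht
    (fun x hx => hsmall x (bigSet_subset hx)) (show t ≤ (bigSet Λ m ω).card by omega)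
  have hcard := Finset.card_sdiff_add_card_eq_card hUbig
  refine ⟨ω ∩ U.sym2, ω \ U.sym2, Finset.inter_subset_left, Finset.sdiff_subset,
    (Finset.disjoint_sdiff_inter ω _).symm, htU.trans (Finset.card_le_card fun x hx => ?_),
    le_trans (show t ≤ (bigSet Λ m ω \ U).card by omega) (Finset.card_le_card fun x hx => ?_)⟩
  · exact mem_bigSet_of_forall_edge hω (hUbig hx) fun a ha b hb hab => by
      simp [hab, hU x hx ha, hU x hx hb]
  · obtain ⟨hx, hxU⟩ := Finset.mem_sdiff.1 hx
    refine mem_bigSet_of_forall_edge hω hx fun a ha b _ hab => ?_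
    have haU : a ∉ U := fun haU => hxU (hU a haU
      (mem_clusterIn.2 ⟨bigSet_subset hx, (mem_clusterIn.1 ha).2.symm⟩))
    simp [hab, haU]

theorem occursDisjointly_card_bigSet (hω : ω ⊆ Λ.sym2) (ht : 1 ≤ t) (hmt : m ≤ t)
    (hbig : 5 * t ≤ (bigSet Λ m ω).card) :
    OccursDisjointly (fun η ζ => t ≤ (bigSet Λ m η).card ∧ t ≤ (bigSet Λ m ζ).card) ω := by
  classical
  by_cases hlarge : ∃ x ∈ Λ, 3 * t ≤ (clusterIn Λ ω x).card
  · obtain ⟨x, hx, hcard⟩ := hlarge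
    exact occursDisjointly_of_connectedOn (connectedOn_clusterIn hω hx) clusterIn_subset ht hmt
      hcard
  · push Not at hlarge
    exact occursDisjointly_of_card_clusterIn_le hω ht (fun x hx => (hlarge x hx).le) hbig

variable [DecidableEq W] {p : Sym2 W → ℝ}

theorem prob_pow_mul_le_card_bigSet_le (hp : ∀ e, p e ∈ Set.Icc 0 1) (Λ : Finset W)
    (hm : 1 ≤ m) (j : ℕ) :
    prob p Λ.sym2 (fun ω => 5 ^ j * m ≤ (bigSet Λ m ω).card) ≤
      prob p Λ.sym2 (fun ω => m ≤ (bigSet Λ m ω).card) ^ 2 ^ j := by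
  induction j with
  | zero => simp
  | succ j ih =>
    have hmt : m ≤ 5 ^ j * m := Nat.le_mul_of_pos_left m (by positivity)
    have hmono : Monotone fun ω => 5 ^ j * m ≤ (bigSet Λ m ω).card :=
      fun a b hab h => h.trans (Finset.card_le_card (bigSet_mono hab))
    calc prob p Λ.sym2 (fun ω => 5 ^ (j + 1) * m ≤ (bigSet Λ m ω).card)
      _ ≤ prob p Λ.sym2 (OccursDisjointly fun η ζ =>
            5 ^ j * m ≤ (bigSet Λ m η).card ∧ 5 ^ j * m ≤ (bigSet Λ m ζ).card) :=
          prob_mono hp fun ω hω h => occursDisjointly_card_bigSet hω (hm.trans hmt) hmt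
            (by rwa [← mul_assoc, ← pow_succ'])
      _ ≤ prob p Λ.sym2 (fun ω => 5 ^ j * m ≤ (bigSet Λ m ω).card) *
            prob p Λ.sym2 (fun ω => 5 ^ j * m ≤ (bigSet Λ m ω).card) :=
          prob_occursDisjointly_le_mul hp _ hmono hmono
      _ ≤ _ := by
          rw [pow_succ, pow_mul, sq]
          exact mul_le_mul ih ih (prob_nonneg hp _) (pow_nonneg (prob_nonneg hp _) _)

lemma sq_le_sum_ind_pow_mul_le {Y N : ℕ} (hm : 1 ≤ m) (hY : Y ≠ 0 → m ≤ Y) (hYN : Y ≤ N) :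
    (Y : ℝ) ^ 2 ≤
      ∑ j ∈ Finset.range (N + 1), (m : ℝ) ^ 2 * (25 ^ (j + 1) * ind (5 ^ j * m ≤ Y)) := by
  have hnonneg (j) : 0 ≤ (m : ℝ) ^ 2 * (25 ^ (j + 1) * ind (5 ^ j * m ≤ Y)) :=
    mul_nonneg (by positivity) (mul_nonneg (by positivity) (ind_nonneg _))
  rcases eq_or_ne Y 0 with rfl | hY0
  · simpa using Finset.sum_nonneg fun j _ => hnonneg j
  let j := Nat.log 5 (Y / m)
  have hYm : Y / m ≠ 0 := (Nat.div_pos (hY hY0) hm).ne'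
  have hlower : 5 ^ j * m ≤ Y := (Nat.le_div_iff_mul_le hm).1 (Nat.pow_log_le_self 5 hYm)
  have hupper : (Y : ℝ) ≤ 5 ^ (j + 1) * m := by
    exact_mod_cast ((Nat.div_lt_iff_lt_mul hm).1 (Nat.lt_pow_succ_log_self (by norm_num) _)).le
  have hjN : j < N + 1 :=
    Nat.lt_succ_of_le ((Nat.log_le_self 5 _).trans ((Nat.div_le_self Y m).trans hYN))
  calc (Y : ℝ) ^ 2 ≤ (5 ^ (j + 1) * m) ^ 2 := by gcongr
    _ = (m : ℝ) ^ 2 * (25 ^ (j + 1) * ind (5 ^ j * m ≤ Y)) := by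
        rw [ind_true hlower, mul_pow, ← pow_mul, mul_comm (j + 1), pow_mul]
        norm_num
        ring
    _ ≤ _ := Finset.single_le_sum (fun j _ => hnonneg j) (Finset.mem_range.2 hjN)

/-- The constant bounding `E[Y²] / m²` for the number `Y` of vertices in clusters of size at
least `m`, when `ℙ(Y ≥ m) ≤ q < 1`; it sums the tail bounds `ℙ(Y ≥ 5 ^ j * m) ≤ q ^ 2 ^ j`. -/
noncomputable def secondMomentConst (q : ℝ) : ℝ := ∑' j : ℕ, 25 ^ (j + 1) * q ^ 2 ^ j

lemma summable_secondMomentConst {q : ℝ} (hq0 : 0 ≤ q) (hq1 : q < 1) :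
    Summable fun j : ℕ => 25 ^ (j + 1) * q ^ 2 ^ j := by
  rcases hq0.eq_or_lt with rfl | hq0
  · exact summable_zero.congr fun j => by rw [zero_pow (by positivity), mul_zero]
  have hratio : Filter.Tendsto (fun j : ℕ => 25 * q ^ 2 ^ j) Filter.atTop (nhds 0) := by
    simpa using ((tendsto_pow_atTop_nhds_zero_of_lt_one hq0.le hq1).comp
      (tendsto_pow_atTop_atTop_of_one_lt one_lt_two)).const_mul 25
  refine summable_of_ratio_test_tendsto_lt_one zero_lt_one ?_ (hratio.congr fun j => ?_)
  · exact Filter.Eventually.of_forall fun j => by positivity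
  · rw [Real.norm_of_nonneg (by positivity), Real.norm_of_nonneg (by positivity),
      pow_succ (25 : ℝ) (j + 1), pow_succ 2 j, mul_two, pow_add q]
    field_simp

lemma secondMomentConst_nonneg {q : ℝ} (hq0 : 0 ≤ q) : 0 ≤ secondMomentConst q :=
  tsum_nonneg fun j => by positivity

theorem expect_sq_card_bigSet_le (hp : ∀ e, p e ∈ Set.Icc 0 1) (Λ : Finset W) (hm : 1 ≤ m) {q : ℝ}
    (hq : prob p Λ.sym2 (fun ω => m ≤ (bigSet Λ m ω).card) ≤ q) (hq1 : q < 1) :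
    expect p Λ.sym2 (fun ω => ((bigSet Λ m ω).card : ℝ) ^ 2) ≤ m ^ 2 * secondMomentConst q := by
  have hq0 : 0 ≤ q := (prob_nonneg hp _).trans hq
  calc expect p Λ.sym2 (fun ω => ((bigSet Λ m ω).card : ℝ) ^ 2)
    _ ≤ expect p Λ.sym2 fun ω => ∑ j ∈ Finset.range (Λ.card + 1),
          (m : ℝ) ^ 2 * (25 ^ (j + 1) * ind (5 ^ j * m ≤ (bigSet Λ m ω).card)) :=
        expect_mono hp fun ω _ => sq_le_sum_ind_pow_mul_le hm
          (fun h => le_card_bigSet (Finset.card_ne_zero.1 h)) (Finset.card_le_card bigSet_subset)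
    _ = (m : ℝ) ^ 2 * ∑ j ∈ Finset.range (Λ.card + 1),
          25 ^ (j + 1) * prob p Λ.sym2 (fun ω => 5 ^ j * m ≤ (bigSet Λ m ω).card) := by
        simp only [expect_sum, expect_mul_left, Finset.mul_sum, prob]
    _ ≤ (m : ℝ) ^ 2 * ∑ j ∈ Finset.range (Λ.card + 1), 25 ^ (j + 1) * q ^ 2 ^ j := by
        gcongr with j
        exact (prob_pow_mul_le_card_bigSet_le hp Λ hm j).trans
          (pow_le_pow_left₀ (prob_nonneg hp _) hq _)
    _ ≤ _ := by
        gcongr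
        exact (summable_secondMomentConst hq0 hq1).sum_le_tsum _ fun j _ => by positivity

end LargeClusters

/-! ### Joining the clusters of two disjoint sets -/

section CrossEdges

variable {W : Type*} {p : Sym2 W → ℝ} {A A' B B' Λ : Finset W} {l : ℝ}

lemma disjoint_sym2 (h : Disjoint B B') : Disjoint B.sym2 B'.sym2 := by
  refine Finset.disjoint_left.2 fun e he he' => ?_
  induction e with
  | _ u v =>
    exact Finset.disjoint_left.1 h (Finset.mk_mem_sym2_iff.1 he).1
      (Finset.mk_mem_sym2_iff.1 he').1

variable [DecidableEq W]

/-- The edges with one endpoint in `A` and the other in `A'`. -/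
def crossEdges (A A' : Finset W) : Finset (Sym2 W) := (A ×ˢ A').image fun q => s(q.1, q.2)

lemma mem_crossEdges {e : Sym2 W} :
    e ∈ crossEdges A A' ↔ ∃ u ∈ A, ∃ v ∈ A', s(u, v) = e := by
  simp [crossEdges, and_assoc]

lemma crossEdges_mono (h : A ⊆ B) (h' : A' ⊆ B') : crossEdges A A' ⊆ crossEdges B B' :=
  Finset.image_subset_image (Finset.product_subset_product h h')

lemma crossEdges_subset_sym2 (h : A ⊆ Λ) (h' : A' ⊆ Λ) : crossEdges A A' ⊆ Λ.sym2 := by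
  intro e he
  obtain ⟨u, hu, v, hv, rfl⟩ := mem_crossEdges.1 he
  exact Finset.mk_mem_sym2_iff.2 ⟨h hu, h' hv⟩

lemma card_crossEdges (h : Disjoint A A') : (crossEdges A A').card = A.card * A'.card := by
  rw [crossEdges, Finset.card_image_of_injOn, Finset.card_product]
  rintro ⟨u, v⟩ huv ⟨u', v'⟩ huv' heq
  simp only [Finset.coe_product, Set.mem_prod, Finset.mem_coe] at huv huv'
  rcases Sym2.eq_iff.1 heq with ⟨rfl, rfl⟩ | ⟨rfl, rfl⟩
  · rfl
  · exact absurd huv'.2 (Finset.disjoint_left.1 h huv.1)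

lemma disjoint_sym2_crossEdges_left (h : Disjoint B B') : Disjoint B.sym2 (crossEdges B B') := by
  refine Finset.disjoint_right.2 fun e he => ?_
  obtain ⟨u, -, v, hv, rfl⟩ := mem_crossEdges.1 he
  exact fun huv => Finset.disjoint_left.1 h (Finset.mk_mem_sym2_iff.1 huv).2 hv

lemma disjoint_sym2_crossEdges_right (h : Disjoint B B') :
    Disjoint B'.sym2 (crossEdges B B') := by
  refine Finset.disjoint_right.2 fun e he => ?_
  obtain ⟨u, hu, v, -, rfl⟩ := mem_crossEdges.1 he
  exact fun huv => Finset.disjoint_left.1 h hu (Finset.mk_mem_sym2_iff.1 huv).1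

lemma expect_sym2_inter_crossEdges (hB : B ⊆ Λ) (hB' : B' ⊆ Λ) (hd : Disjoint B B')
    (f : Finset (Sym2 W) → Finset (Sym2 W) → Finset (Sym2 W) → ℝ) :
    expect p Λ.sym2 (fun ω => f (ω ∩ B.sym2) (ω ∩ B'.sym2) (ω ∩ crossEdges B B')) =
      expect p B.sym2 fun a => expect p B'.sym2 fun a' =>
        expect p (crossEdges B B') fun x => f a a' x := by
  have hdisj : Disjoint B.sym2 (B'.sym2 ∪ crossEdges B B') :=
    Finset.disjoint_union_right.2 ⟨disjoint_sym2 hd, disjoint_sym2_crossEdges_left hd⟩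
  have hindep := expect_inter_inter (p := p) (Finset.sym2_mono hB)
    (Finset.union_subset (Finset.sym2_mono hB') (crossEdges_subset_sym2 hB hB')) hdisj
    (fun a b => f a (b ∩ B'.sym2) (b ∩ crossEdges B B'))
  simp only [fun a => expect_union (p := p) (disjoint_sym2_crossEdges_right hd) (f a)] at hindep
  rw [← hindep]
  refine expect_congr fun ω _ => ?_
  rw [Finset.inter_assoc, Finset.inter_assoc, Finset.union_inter_cancel_left,
    Finset.union_inter_cancel_right]

lemma inter_crossEdges_eq_empty {ω : Finset (Sym2 W)} :
    ω ∩ crossEdges A A' = ∅ ↔ ∀ u ∈ A, ∀ v ∈ A', s(u, v) ∉ ω := by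
  simp only [Finset.eq_empty_iff_forall_notMem, Finset.mem_inter, mem_crossEdges]
  grind

lemma prob_forall_cross_notMem_le (hp : ∀ e, p e ∈ Set.Icc 0 1) (hA : A ⊆ B) (hA' : A' ⊆ B')
    (hd : Disjoint B B') (hl : ∀ u ∈ B, ∀ v ∈ B', 1 - p s(u, v) ≤ Real.exp (-l)) :
    prob p (crossEdges B B') (fun ω => ∀ u ∈ A, ∀ v ∈ A', s(u, v) ∉ ω) ≤
      Real.exp (-(l * (A.card * A'.card))) := by
  calc prob p (crossEdges B B') (fun ω => ∀ u ∈ A, ∀ v ∈ A', s(u, v) ∉ ω)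
    _ = ∏ e ∈ crossEdges A A', (1 - p e) := by
        simp only [← inter_crossEdges_eq_empty, prob]
        rw [expect_inter (crossEdges_mono hA hA') fun ω => ind (ω = ∅), ← prob, prob_eq_empty]
    _ ≤ ∏ _ ∈ crossEdges A A', Real.exp (-l) := by
        refine Finset.prod_le_prod (fun e _ => sub_nonneg.2 (hp e).2) fun e he => ?_
        obtain ⟨u, hu, v, hv, rfl⟩ := mem_crossEdges.1 he
        exact hl u (hA hu) v (hA' hv)
    _ = Real.exp (-(l * (A.card * A'.card))) := by
        rw [Finset.prod_const, card_crossEdges (hd.mono hA hA'), ← Real.exp_nat_mul]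
        push_cast
        ring_nf

lemma mul_one_sub_exp_div_le {m t : ℝ} (hm : 0 < m) (ht0 : 0 ≤ t) (htm : t ≤ m) :
    t * ((1 - Real.exp (-(l * m))) / m) ≤ 1 - Real.exp (-(l * t)) := by
  have hconv := convexOn_exp.2 (Set.mem_univ (-(l * m))) (Set.mem_univ (0 : ℝ))
    (show 0 ≤ t / m by positivity) (sub_nonneg.2 ((div_le_one hm).2 htm)) (by ring)
  have hpoint : t / m * -(l * m) = -(l * t) := by field_simp
  simp only [smul_eq_mul, mul_zero, add_zero, Real.exp_zero, mul_one, hpoint] at hconv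
  calc t * ((1 - Real.exp (-(l * m))) / m) = t / m - t / m * Real.exp (-(l * m)) := by ring
    _ ≤ 1 - Real.exp (-(l * t)) := by linarith

end CrossEdges

section TauSum

variable {W : Type*} {l : ℝ} {m : ℕ}

/-- The number of vertices of the cluster of `x` in `B`, replaced by `0` if it is at least `m`. -/
noncomputable def smallClusterCard (B : Finset W) (m : ℕ) (x : W) (ω : Finset (Sym2 W)) : ℝ :=
  (clusterIn B ω x).card * ind ((clusterIn B ω x).card < m)

lemma sum_card_clusterIn_le (B : Finset W) (m : ℕ) (ω : Finset (Sym2 W)) :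
    ∑ x ∈ B, ((clusterIn B ω x).card : ℝ) ≤
      ∑ x ∈ B, smallClusterCard B m x ω + ((bigSet B m ω).card : ℝ) ^ 2 := by
  classical
  have hpoint (x) (hx : x ∈ B) : ((clusterIn B ω x).card : ℝ) ≤ smallClusterCard B m x ω +
      if x ∈ bigSet B m ω then ((bigSet B m ω).card : ℝ) else 0 := by
    rw [smallClusterCard]
    by_cases h : (clusterIn B ω x).card < m
    · rw [ind_true h, mul_one]
      split_ifs <;> simp
    · have hbig : x ∈ bigSet B m ω := mem_bigSet.2 ⟨hx, not_lt.1 h⟩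
      rw [ind_false h, if_pos hbig, mul_zero, zero_add]
      exact_mod_cast Finset.card_le_card (clusterIn_subset_bigSet hbig)
  refine (Finset.sum_le_sum hpoint).trans_eq ?_
  rw [Finset.sum_add_distrib, Finset.sum_ite_mem, Finset.inter_eq_right.2 bigSet_subset,
    Finset.sum_const, nsmul_eq_mul, sq]

lemma one_sub_exp_neg_nonneg {t : ℝ} (ht : 0 ≤ t) : 0 ≤ 1 - Real.exp (-t) :=
  sub_nonneg.2 (Real.exp_le_one_iff.2 (neg_nonpos.2 ht))

lemma smallClusterCard_mul_le (hl : 0 ≤ l) (hm : 1 ≤ m) (B B' : Finset W) (x y : W)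
    (a a' : Finset (Sym2 W)) :
    (1 - Real.exp (-(l * (m : ℝ) ^ 2))) / (m : ℝ) ^ 2 *
        (smallClusterCard B m x a * smallClusterCard B' m y a') ≤
      1 - Real.exp (-(l * ((clusterIn B a x).card * (clusterIn B' a' y).card))) := by
  simp only [smallClusterCard]
  set k := (clusterIn B a x).card
  set k' := (clusterIn B' a' y).card
  have hnonneg : 0 ≤ 1 - Real.exp (-(l * ((k : ℝ) * k'))) :=
    one_sub_exp_neg_nonneg (by positivity)
  by_cases hk : k < m
  · by_cases hk' : k' < m
    · have hkk : (k : ℝ) * k' ≤ (m : ℝ) ^ 2 := by rw [sq]; gcongr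
      rw [ind_true hk, ind_true hk', mul_one, mul_one, mul_comm]
      exact mul_one_sub_exp_div_le (by positivity) (by positivity) hkk
    · simpa [ind_false hk'] using hnonneg
  · simpa [ind_false hk] using hnonneg

variable [DecidableEq W] {p : Sym2 W → ℝ} {B B' Λ : Finset W}

/-- The sum over all pairs of vertices of `B` of the two-point function inside `B`. -/
noncomputable def tauSum (p : Sym2 W → ℝ) (B : Finset W) : ℝ := ∑ x ∈ B, ∑ y ∈ B, tau p B x y

/-- The part of `tauSum p B` carried by clusters with fewer than `m` vertices. -/
noncomputable def smallTauSum (p : Sym2 W → ℝ) (B : Finset W) (m : ℕ) : ℝ :=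
  ∑ x ∈ B, expect p B.sym2 (smallClusterCard B m x)

lemma tauSum_nonneg (hp : ∀ e, p e ∈ Set.Icc 0 1) (B : Finset W) : 0 ≤ tauSum p B :=
  Finset.sum_nonneg fun x _ => Finset.sum_nonneg fun y _ => tau_nonneg hp B x y

lemma tauSum_le_sq_card (hp : ∀ e, p e ∈ Set.Icc 0 1) (B : Finset W) :
    tauSum p B ≤ (B.card : ℝ) ^ 2 :=
  calc tauSum p B ≤ ∑ _x ∈ B, ∑ _y ∈ B, (1 : ℝ) :=
        Finset.sum_le_sum fun x _ => Finset.sum_le_sum fun y _ => tau_le_one hp B x y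
    _ = (B.card : ℝ) ^ 2 := by simp [sq]

lemma sum_tau_le_tauSum (hp : ∀ e, p e ∈ Set.Icc 0 1) (hB : B ⊆ Λ) (hB' : B' ⊆ Λ) :
    ∑ x ∈ B, ∑ y ∈ B', tau p Λ x y ≤ tauSum p Λ :=
  calc ∑ x ∈ B, ∑ y ∈ B', tau p Λ x y ≤ ∑ x ∈ B, ∑ y ∈ Λ, tau p Λ x y :=
        Finset.sum_le_sum fun _ _ =>
          Finset.sum_le_sum_of_subset_of_nonneg hB' fun _ _ _ => tau_nonneg hp _ _ _
    _ ≤ tauSum p Λ := Finset.sum_le_sum_of_subset_of_nonneg hB fun _ _ _ =>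
        Finset.sum_nonneg fun _ _ => tau_nonneg hp _ _ _

lemma tauSum_eq_expect (B : Finset W) :
    tauSum p B = expect p B.sym2 fun ω => ∑ x ∈ B, ((clusterIn B ω x).card : ℝ) := by
  classical
  simp only [tauSum, tau, prob, ← expect_sum]
  refine expect_congr fun ω _ => Finset.sum_congr rfl fun x _ => ?_
  simp only [ind, Finset.sum_boole]
  congr 2

lemma tauSum_le_smallTauSum_add (hp : ∀ e, p e ∈ Set.Icc 0 1) (B : Finset W) (m : ℕ) :
    tauSum p B ≤
      smallTauSum p B m + expect p B.sym2 fun ω => ((bigSet B m ω).card : ℝ) ^ 2 := by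
  rw [tauSum_eq_expect, smallTauSum, ← expect_sum, ← expect_add]
  exact expect_mono hp fun ω _ => sum_card_clusterIn_le B m ω

lemma linked_of_cross_mem {ω : Finset (Sym2 W)} {x y u v : W}
    (hu : u ∈ clusterIn B (ω ∩ B.sym2) x) (hv : v ∈ clusterIn B' (ω ∩ B'.sym2) y)
    (huv : s(u, v) ∈ ω) : Linked ω x y :=
  ((mem_clusterIn.1 hu).2.mono Finset.inter_subset_left).trans <| (Linked.of_mem huv).trans
    ((mem_clusterIn.1 hv).2.mono Finset.inter_subset_left).symm

lemma expect_smallClusterCard_mul_le_tau (hp : ∀ e, p e ∈ Set.Icc 0 1) (hB : B ⊆ Λ)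
    (hB' : B' ⊆ Λ) (hd : Disjoint B B') (hl0 : 0 ≤ l)
    (hl : ∀ u ∈ B, ∀ v ∈ B', 1 - p s(u, v) ≤ Real.exp (-l)) (hm : 1 ≤ m) (x y : W) :
    (1 - Real.exp (-(l * (m : ℝ) ^ 2))) / (m : ℝ) ^ 2 *
        (expect p B.sym2 (smallClusterCard B m x) * expect p B'.sym2 (smallClusterCard B' m y)) ≤
      tau p Λ x y := by
  let joined (a a' b : Finset (Sym2 W)) : Prop :=
    ¬∀ u ∈ clusterIn B a x, ∀ v ∈ clusterIn B' a' y, s(u, v) ∉ b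
  have hjoined : (expect p B.sym2 fun a => expect p B'.sym2 fun a' =>
      prob p (crossEdges B B') (joined a a')) ≤ tau p Λ x y := by
    simp only [prob]
    rw [← expect_sym2_inter_crossEdges hB hB' hd fun a a' b => ind (joined a a' b)]
    refine expect_mono hp fun ω _ => ind_mono fun h => ?_
    simp only [joined, not_forall, not_not] at h
    obtain ⟨u, hu, v, hv, huv⟩ := h
    exact linked_of_cross_mem hu hv (Finset.mem_inter.1 huv).1
  refine le_trans ?_ hjoined
  rw [← expect_mul_right, ← expect_mul_left]
  refine expect_mono hp fun a _ => ?_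
  rw [← expect_mul_left, ← expect_mul_left]
  refine expect_mono hp fun a' _ => (smallClusterCard_mul_le hl0 hm B B' x y a a').trans ?_
  rw [prob_not]
  exact sub_le_sub_left (prob_forall_cross_notMem_le hp clusterIn_subset clusterIn_subset hd hl) 1

theorem smallTauSum_mul_le_tauSum (hp : ∀ e, p e ∈ Set.Icc 0 1) (hB : B ⊆ Λ) (hB' : B' ⊆ Λ)
    (hd : Disjoint B B') (hl0 : 0 ≤ l)
    (hl : ∀ u ∈ B, ∀ v ∈ B', 1 - p s(u, v) ≤ Real.exp (-l)) (hm : 1 ≤ m) :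
    (1 - Real.exp (-(l * (m : ℝ) ^ 2))) / (m : ℝ) ^ 2 * (smallTauSum p B m * smallTauSum p B' m) ≤
      tauSum p Λ := by
  refine le_trans ?_ (sum_tau_le_tauSum hp hB hB')
  rw [smallTauSum, smallTauSum, Finset.sum_mul_sum, Finset.mul_sum]
  simp only [Finset.mul_sum _ _ (_ / _)]
  exact Finset.sum_le_sum fun x _ => Finset.sum_le_sum fun y _ =>
    expect_smallClusterCard_mul_le_tau hp hB hB' hd hl0 hl hm x y

end TauSum

/-! ### Relabelling of the vertices -/

section Relabelling

variable {W : Type*}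

/-- The permutation of the edges induced by a permutation of the vertices. -/
def edgePerm (σ : W ≃ W) : Sym2 W ≃ Sym2 W where
  toFun := Sym2.map σ
  invFun := Sym2.map σ.symm
  left_inv e := by rw [Sym2.map_map]; simp
  right_inv e := by rw [Sym2.map_map]; simp

lemma mk_mem_map_edgePerm (σ : W ≃ W) (ω : Finset (Sym2 W)) (x y : W) :
    s(σ x, σ y) ∈ ω.map (edgePerm σ).toEmbedding ↔ s(x, y) ∈ ω := by
  rw [Finset.mem_map_equiv]
  simp [edgePerm]

lemma linked_map_edgePerm (σ : W ≃ W) (ω : Finset (Sym2 W)) (x y : W) :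
    Linked (ω.map (edgePerm σ).toEmbedding) (σ x) (σ y) ↔ Linked ω x y := by
  have hadj (a b : W) : (σ a ≠ σ b ∧ s(σ a, σ b) ∈ ω.map (edgePerm σ).toEmbedding) ↔
      a ≠ b ∧ s(a, b) ∈ ω := by
    rw [mk_mem_map_edgePerm, ne_eq, σ.injective.eq_iff]
  constructor <;> intro h
  · have hlift := Relation.ReflTransGen.lift (p := fun a b => a ≠ b ∧ s(a, b) ∈ ω) σ.symm
      (fun a b hab => (hadj _ _).1 (by simpa using hab)) _ _ h
    simpa [Function.onFun, Linked] using hlift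
  · exact Relation.ReflTransGen.lift σ (fun a b hab => (hadj a b).2 hab) _ _ h

lemma clusterIn_map (σ : W ≃ W) (ω : Finset (Sym2 W)) (B : Finset W) (x : W) :
    clusterIn (B.map σ.toEmbedding) (ω.map (edgePerm σ).toEmbedding) (σ x) =
      (clusterIn B ω x).map σ.toEmbedding := by
  ext y
  obtain ⟨y, rfl⟩ := σ.surjective y
  simp [mem_clusterIn, linked_map_edgePerm]

lemma bigSet_map (σ : W ≃ W) (ω : Finset (Sym2 W)) (B : Finset W) (m : ℕ) :
    bigSet (B.map σ.toEmbedding) m (ω.map (edgePerm σ).toEmbedding) =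
      (bigSet B m ω).map σ.toEmbedding := by
  ext y
  obtain ⟨y, rfl⟩ := σ.surjective y
  simp [mem_bigSet, clusterIn_map]

variable [DecidableEq W] {p : Sym2 W → ℝ}

lemma expect_sym2_map (σ : W ≃ W) (hσ : ∀ x y, p s(σ x, σ y) = p s(x, y)) (B : Finset W)
    (f : Finset (Sym2 W) → ℝ) :
    expect p (B.map σ.toEmbedding).sym2 f =
      expect p B.sym2 fun ω => f (ω.map (edgePerm σ).toEmbedding) := by
  have hp (e : Sym2 W) : p (edgePerm σ e) = p e := by
    induction e with
    | _ u v => exact hσ u v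
  rw [Finset.sym2_map]
  exact expect_map (edgePerm σ) hp f

lemma tau_map (σ : W ≃ W) (hσ : ∀ x y, p s(σ x, σ y) = p s(x, y)) (B : Finset W) (x y : W) :
    tau p (B.map σ.toEmbedding) (σ x) (σ y) = tau p B x y := by
  simp only [tau, prob, expect_sym2_map σ hσ, linked_map_edgePerm]

lemma smallTauSum_map (σ : W ≃ W) (hσ : ∀ x y, p s(σ x, σ y) = p s(x, y)) (B : Finset W)
    (m : ℕ) : smallTauSum p (B.map σ.toEmbedding) m = smallTauSum p B m := by
  rw [smallTauSum, smallTauSum, Finset.sum_map]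
  refine Finset.sum_congr rfl fun x _ => ?_
  rw [expect_sym2_map σ hσ]
  refine expect_congr fun ω _ => ?_
  simp [smallClusterCard, clusterIn_map]

lemma prob_le_card_bigSet_map (σ : W ≃ W) (hσ : ∀ x y, p s(σ x, σ y) = p s(x, y))
    (B : Finset W) (m k : ℕ) :
    prob p (B.map σ.toEmbedding).sym2
        (fun ω => k ≤ (bigSet (B.map σ.toEmbedding) m ω).card) =
      prob p B.sym2 fun ω => k ≤ (bigSet B m ω).card := by
  simp only [prob, expect_sym2_map σ hσ, bigSet_map, Finset.card_map]

end Relabelling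

/-! ### The lattice -/

section Lattice

variable {d : ℕ}

lemma normInf_le {x : V d} {n : ℕ} : normInf x ≤ n ↔ ∀ i, (x i).natAbs ≤ n := by
  simp [normInf]

lemma natAbs_le_normInf (x : V d) (i : Fin d) : (x i).natAbs ≤ normInf x := normInf_le.1 le_rfl i

lemma normInf_eq_zero {x : V d} : normInf x = 0 ↔ x = 0 := by
  rw [← Nat.le_zero, normInf_le]
  simp [funext_iff]

lemma one_le_normInf_sub {x y : V d} (h : x ≠ y) : 1 ≤ normInf (x - y) := by
  rwa [Nat.one_le_iff_ne_zero, Ne, normInf_eq_zero, sub_eq_zero]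

lemma normInf_add_le (x y : V d) : normInf (x + y) ≤ normInf x + normInf y :=
  normInf_le.2 fun i => (Int.natAbs_add_le (x i) (y i)).trans
    (add_le_add (natAbs_le_normInf x i) (natAbs_le_normInf y i))

lemma normInf_neg (x : V d) : normInf (-x) = normInf x := by simp [normInf]

lemma normInf_sub_comm (x y : V d) : normInf (x - y) = normInf (y - x) := by
  rw [← normInf_neg, neg_sub]

lemma normInf_sub_le (x y z : V d) : normInf (x - z) ≤ normInf (x - y) + normInf (y - z) := by
  simpa using normInf_add_le (x - y) (y - z)

/-- The cube of side length `L` whose corner with smallest coordinates is `x`. -/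
noncomputable def box (L : ℕ) (x : V d) : Finset (V d) :=
  Fintype.piFinset fun i => Finset.Ico (x i) (x i + L)

lemma mem_box {L : ℕ} {x y : V d} : y ∈ box L x ↔ ∀ i, x i ≤ y i ∧ y i < x i + L := by
  simp [box]

lemma card_box (L : ℕ) (x : V d) : (box L x).card = L ^ d := by
  simp [box, Fintype.card_piFinset]

lemma box_map_addRight (L : ℕ) (x z : V d) :
    (box L x).map (Equiv.addRight z).toEmbedding = box L (x + z) := by
  ext y
  rw [Finset.mem_map_equiv, mem_box, mem_box]
  refine forall_congr' fun i => ?_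
  simp only [Equiv.addRight_symm, Equiv.coe_addRight, Pi.add_apply, Pi.neg_apply]
  omega

lemma box_subset_box {L M : ℕ} {x y : V d} (h : ∀ i, y i ≤ x i ∧ x i + L ≤ y i + M) :
    box L x ⊆ box M y := by
  intro z hz
  rw [mem_box] at hz ⊢
  grind

lemma normInf_sub_le_of_mem_box {L : ℕ} {x u v : V d} (hu : u ∈ box L x) (hv : v ∈ box L x) :
    normInf (u - v) ≤ L := by
  refine normInf_le.2 fun i => ?_
  have hui := mem_box.1 hu i
  have hvi := mem_box.1 hv i
  simp only [Pi.sub_apply]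
  omega

lemma disjoint_box_box {L : ℕ} {x y : V d} {i : Fin d} (h : x i + L ≤ y i) :
    Disjoint (box L x) (box L y) := by
  refine Finset.disjoint_left.2 fun z hx hy => ?_
  have hxi := mem_box.1 hx i
  have hyi := mem_box.1 hy i
  omega

end Lattice

/-! ### Power-law edge probabilities -/

/-- Translation-invariant edge probabilities `p s(x, y) = 1 - exp (-J)` on `ℤ^d` for which `J` is
at least `c ‖x - y‖ ^ (-(d + α))` and `p s(x, y)` at most `C ‖x - y‖ ^ (-(d + α))`. -/
structure PowerLaw (d : ℕ) (p : Sym2 (V d) → ℝ) (α c C : ℝ) : Prop where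
  mem_Icc : ∀ e, p e ∈ Set.Icc 0 1
  translate : ∀ z x y : V d, p s(x + z, y + z) = p s(x, y)
  one_sub_le : ∀ x y : V d, x ≠ y →
    1 - p s(x, y) ≤ Real.exp (-(c * (normInf (x - y) : ℝ) ^ (-((d : ℝ) + α))))
  le : ∀ x y : V d, x ≠ y → p s(x, y) ≤ C * (normInf (x - y) : ℝ) ^ (-((d : ℝ) + α))

namespace PowerLaw

variable {d : ℕ} {p : Sym2 (V d) → ℝ} {α c C : ℝ}

lemma one_sub_le_of_normInf_le (h : PowerLaw d p α c C) (hc : 0 ≤ c) (hα : 0 ≤ α) {L : ℕ}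
    {u v : V d} (hne : u ≠ v) (hL : normInf (u - v) ≤ L) :
    1 - p s(u, v) ≤ Real.exp (-(c * (L : ℝ) ^ (-((d : ℝ) + α)))) := by
  have hpos : (0 : ℝ) < normInf (u - v) := by exact_mod_cast one_le_normInf_sub hne
  have hexp : -((d : ℝ) + α) ≤ 0 := by linarith [(Nat.cast_nonneg d : (0 : ℝ) ≤ d)]
  refine (h.one_sub_le u v hne).trans (Real.exp_le_exp.2 (neg_le_neg ?_))
  exact mul_le_mul_of_nonneg_left
    (Real.rpow_le_rpow_of_nonpos hpos (by exact_mod_cast hL) hexp) hc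

lemma smallTauSum_box (h : PowerLaw d p α c C) (L m : ℕ) (x : V d) :
    smallTauSum p (box L x) m = smallTauSum p (box L 0) m := by
  have hmap := smallTauSum_map (p := p) (Equiv.addRight x) (h.translate x) (box L 0) m
  rwa [box_map_addRight, zero_add] at hmap

lemma prob_le_card_bigSet_box (h : PowerLaw d p α c C) (L m k : ℕ) (x : V d) :
    prob p (box L x).sym2 (fun ω => k ≤ (bigSet (box L x) m ω).card) =
      prob p (box L 0).sym2 fun ω => k ≤ (bigSet (box L 0) m ω).card := by
  have hmap := prob_le_card_bigSet_map (p := p) (Equiv.addRight x) (h.translate x) (box L 0) m k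
  rwa [box_map_addRight, zero_add] at hmap

lemma smallTauSum_sq_le_tauSum_box (h : PowerLaw d p α c C) (hd : 1 ≤ d) (hc : 0 ≤ c)
    (hα : 0 ≤ α) (L : ℕ) {b m : ℕ} (hb : 2 ≤ b) (hm : 1 ≤ m) :
    (1 - Real.exp (-(c * ((b * L : ℕ) : ℝ) ^ (-((d : ℝ) + α)) * (m : ℝ) ^ 2))) / (m : ℝ) ^ 2 *
        smallTauSum p (box L 0) m ^ 2 ≤ tauSum p (box (b * L) 0) := by
  set z : V d := fun _ => L
  have hbL : 2 * (L : ℤ) ≤ (b * L : ℕ) := by exact_mod_cast Nat.mul_le_mul_right L hb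
  have hsub : box L (0 : V d) ⊆ box (b * L) 0 :=
    box_subset_box fun i => ⟨le_rfl, by simp only [Pi.zero_apply]; omega⟩
  have hsub' : box L z ⊆ box (b * L) 0 :=
    box_subset_box fun i => by simp only [z, Pi.zero_apply]; omega
  have hdisj : Disjoint (box L (0 : V d)) (box L z) :=
    disjoint_box_box (i := ⟨0, hd⟩) (by simp [z])
  rw [sq (smallTauSum p _ m)]
  nth_rw 2 [← h.smallTauSum_box L m z]
  exact smallTauSum_mul_le_tauSum h.mem_Icc hsub hsub' hdisj (by positivity)
    (fun u hu v hv => h.one_sub_le_of_normInf_le hc hα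
      (fun huv => Finset.disjoint_left.1 hdisj hu (huv ▸ hv))
      (normInf_sub_le_of_mem_box (hsub hu) (hsub' hv))) hm

-- The truncation at `m` loses at most half of `tauSum` because of the second moment bound.
theorem tauSum_box_sq_le (h : PowerLaw d p α c C) (hd : 1 ≤ d) (hc : 0 ≤ c) (hα : 0 ≤ α)
    {L b m : ℕ} (hb : 2 ≤ b) (hm : 1 ≤ m) {q : ℝ} (hq1 : q < 1)
    (hq : prob p (box L (0 : V d)).sym2 (fun ω => m ≤ (bigSet (box L 0) m ω).card) ≤ q)
    (hS : 2 * ((m : ℝ) ^ 2 * secondMomentConst q) ≤ tauSum p (box L (0 : V d))) :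
    (1 - Real.exp (-(c * ((b * L : ℕ) : ℝ) ^ (-((d : ℝ) + α)) * (m : ℝ) ^ 2))) /
        (4 * (m : ℝ) ^ 2) * tauSum p (box L (0 : V d)) ^ 2 ≤ tauSum p (box (b * L) (0 : V d)) := by
  have hhalf : tauSum p (box L (0 : V d)) / 2 ≤ smallTauSum p (box L 0) m := by
    linarith [expect_sq_card_bigSet_le h.mem_Icc (box L (0 : V d)) hm hq hq1,
      tauSum_le_smallTauSum_add h.mem_Icc (box L (0 : V d)) m]
  have hnonneg : 0 ≤ tauSum p (box L (0 : V d)) := tauSum_nonneg h.mem_Icc _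
  refine le_trans ?_ (h.smallTauSum_sq_le_tauSum_box hd hc hα L hb hm)
  have hexp := one_sub_exp_neg_nonneg
    (t := c * ((b * L : ℕ) : ℝ) ^ (-((d : ℝ) + α)) * (m : ℝ) ^ 2) (by positivity)
  calc _ = (1 - Real.exp (-(c * ((b * L : ℕ) : ℝ) ^ (-((d : ℝ) + α)) * (m : ℝ) ^ 2))) /
          (m : ℝ) ^ 2 * (tauSum p (box L (0 : V d)) / 2) ^ 2 := by
        field_simp
        ring
    _ ≤ _ := by gcongr

end PowerLaw

/-! ### Growth of the two-point sums -/

section Growth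

lemma natCast_pow_rpow (b n : ℕ) (s : ℝ) : ((b ^ n : ℕ) : ℝ) ^ s = ((b : ℝ) ^ s) ^ n := by
  rw [Nat.cast_pow, ← Real.rpow_natCast, ← Real.rpow_natCast,
    ← Real.rpow_mul b.cast_nonneg, ← Real.rpow_mul b.cast_nonneg, mul_comm]

lemma exists_nat_le_sq_le {r : ℝ} (hr : 1 ≤ r) :
    ∃ m : ℕ, 1 ≤ m ∧ r ≤ (m : ℝ) ^ 2 ∧ (m : ℝ) ^ 2 ≤ 4 * r := by
  have hsqrt : 1 ≤ √r := Real.one_le_sqrt.2 hr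
  have hsq : √r ^ 2 = r := Real.sq_sqrt (by linarith)
  have hle : √r ≤ ⌈√r⌉₊ := Nat.le_ceil _
  have hlt : (⌈√r⌉₊ : ℝ) < √r + 1 := Nat.ceil_lt_add_one (by linarith)
  exact ⟨⌈√r⌉₊, by exact_mod_cast hsqrt.trans hle, by nlinarith, by nlinarith⟩

-- Once `S n` exceeds `A * D ^ n`, each later step gains a factor of at least `M * D`, so that
-- `S` eventually overtakes `M ^ n`.
lemma le_mul_pow_of_quadratic_growth {S : ℕ → ℝ} {A D M κ : ℝ} (hD : 1 < D) (hM : 1 ≤ M)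
    (hA : 0 < A) (hκ : 0 ≤ κ) (hAM : M * D ≤ κ * A) (hS : ∀ n, S n ≤ M ^ n)
    (hstep : ∀ n, A * D ^ n ≤ S n → κ / D ^ n * S n ^ 2 ≤ S (n + 1)) (n : ℕ) :
    S n ≤ A * D ^ n := by
  by_contra! hn
  have hgrow (k : ℕ) : A * M ^ k * D ^ (n + k) ≤ S (n + k) := by
    induction k with
    | zero => simpa using hn.le
    | succ k ih =>
      have hlarge : A * D ^ (n + k) ≤ S (n + k) := by
        refine le_trans ?_ ih
        gcongr
        exact le_mul_of_one_le_right hA.le (one_le_pow₀ hM)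
      have hpos : 0 ≤ S (n + k) := le_trans (by positivity) hlarge
      calc A * M ^ (k + 1) * D ^ (n + (k + 1)) = M * D * (A * M ^ k * D ^ (n + k)) := by ring
        _ ≤ κ * A * S (n + k) := by gcongr
        _ = κ / D ^ (n + k) * (A * D ^ (n + k) * S (n + k)) := by field_simp
        _ ≤ κ / D ^ (n + k) * (S (n + k) * S (n + k)) := by gcongr
        _ = κ / D ^ (n + k) * S (n + k) ^ 2 := by ring
        _ ≤ S (n + k + 1) := hstep _ hlarge
  obtain ⟨k, hk⟩ := pow_unbounded_of_one_lt (M ^ n / A) hD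
  have hle : A * D ^ (n + k) * M ^ k ≤ M ^ n * M ^ k := by
    calc A * D ^ (n + k) * M ^ k = A * M ^ k * D ^ (n + k) := by ring
      _ ≤ M ^ n * M ^ k := by rw [← pow_add]; exact (hgrow k).trans (hS _)
  have hle' : A * D ^ (n + k) ≤ M ^ n := le_of_mul_le_mul_right hle (by positivity)
  have hpow : D ^ k ≤ D ^ (n + k) := pow_le_pow_right₀ hD.le (Nat.le_add_left k n)
  rw [div_lt_iff₀ hA] at hk
  nlinarith

variable {d b : ℕ} {p : Sym2 (V d) → ℝ} {α c C K D η : ℝ}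

lemma PowerLaw.tauSum_box_pow_succ_ge (h : PowerLaw d p α c C) (hd : 1 ≤ d) (hc : 0 ≤ c)
    (hα : 0 ≤ α) (hb : 2 ≤ b) (hη0 : 0 < η) (hη1 : η ≤ 1) (hK : 1 ≤ K)
    (hD : D = (b : ℝ) ^ ((d : ℝ) + α)) (n : ℕ)
    (hsmall : ∀ m : ℕ, 1 ≤ m → K ^ 2 * D ^ n ≤ (m : ℝ) ^ 2 →
      prob p (box (b ^ n) (0 : V d)).sym2
        (fun ω => m ≤ (bigSet (box (b ^ n) 0) m ω).card) ≤ 1 - η)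
    (hS : 8 * K ^ 2 * secondMomentConst (1 - η) * D ^ n ≤ tauSum p (box (b ^ n) (0 : V d))) :
    (1 - Real.exp (-(c * K ^ 2 / D))) / (16 * K ^ 2) / D ^ n *
      tauSum p (box (b ^ n) (0 : V d)) ^ 2 ≤ tauSum p (box (b ^ (n + 1)) (0 : V d)) := by
  have hD1 : 1 ≤ D := hD ▸ Real.one_le_rpow (by exact_mod_cast (by omega : 1 ≤ b)) (by positivity)
  have hDn : 1 ≤ D ^ n := one_le_pow₀ hD1
  obtain ⟨m, hm, hlo, hhi⟩ := exists_nat_le_sq_le (one_le_mul_of_one_le_of_one_le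
    (one_le_pow₀ hK : 1 ≤ K ^ 2) hDn)
  have hG := secondMomentConst_nonneg (q := 1 - η) (by linarith)
  have hgrow := h.tauSum_box_sq_le hd hc hα hb hm (sub_lt_self 1 hη0) (hsmall m hm hlo) (by
    calc 2 * ((m : ℝ) ^ 2 * secondMomentConst (1 - η))
        ≤ 2 * (4 * (K ^ 2 * D ^ n) * secondMomentConst (1 - η)) := by gcongr
      _ = 8 * K ^ 2 * secondMomentConst (1 - η) * D ^ n := by ring
      _ ≤ _ := hS)
  rw [← pow_succ', natCast_pow_rpow, Real.rpow_neg b.cast_nonneg, ← hD, inv_pow] at hgrow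
  refine le_trans (mul_le_mul_of_nonneg_right ?_ (sq_nonneg _)) hgrow
  have hexp : c * K ^ 2 / D ≤ c * (D ^ (n + 1))⁻¹ * (m : ℝ) ^ 2 :=
    calc c * K ^ 2 / D = c * (D ^ (n + 1))⁻¹ * (K ^ 2 * D ^ n) := by field_simp; ring
      _ ≤ _ := by gcongr
  have hnonneg := one_sub_exp_neg_nonneg (t := c * K ^ 2 / D) (by positivity)
  calc (1 - Real.exp (-(c * K ^ 2 / D))) / (16 * K ^ 2) / D ^ n
      = (1 - Real.exp (-(c * K ^ 2 / D))) / (4 * (4 * (K ^ 2 * D ^ n))) := by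
        rw [div_div]
        ring_nf
    _ ≤ (1 - Real.exp (-(c * K ^ 2 / D))) / (4 * (m : ℝ) ^ 2) := by gcongr
    _ ≤ _ := by gcongr

lemma tauSum_box_pow_le (hp : ∀ e, p e ∈ Set.Icc 0 1) (n : ℕ) :
    tauSum p (box (b ^ n) (0 : V d)) ≤ ((b : ℝ) ^ (2 * d)) ^ n := by
  refine (tauSum_le_sq_card hp _).trans_eq ?_
  rw [card_box]
  push_cast
  ring

theorem exists_likely_largeCluster_or_tauSum_le (hd : 1 ≤ d) (hα : 0 < α) (hc : 0 < c)
    (hb : 2 ≤ b) (hη0 : 0 < η) (hη1 : η ≤ 1) (hK : 1 ≤ K) :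
    ∃ A : ℝ, 0 < A ∧ ∀ p : Sym2 (V d) → ℝ, PowerLaw d p α c C →
      (∃ n m : ℕ, 1 ≤ m ∧ K ^ 2 * ((b : ℝ) ^ ((d : ℝ) + α)) ^ n ≤ (m : ℝ) ^ 2 ∧
        1 - η < prob p (box (b ^ n) (0 : V d)).sym2
          fun ω => m ≤ (bigSet (box (b ^ n) 0) m ω).card) ∨
      ∀ n : ℕ, tauSum p (box (b ^ n) (0 : V d)) ≤ A * ((b : ℝ) ^ ((d : ℝ) + α)) ^ n := by
  have hb1 : (1 : ℝ) < b := by exact_mod_cast hb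
  set D : ℝ := (b : ℝ) ^ ((d : ℝ) + α) with hDdef
  set M : ℝ := (b : ℝ) ^ (2 * d)
  set G : ℝ := secondMomentConst (1 - η)
  have hD : 1 < D := Real.one_lt_rpow hb1 (by positivity)
  have hM : 1 ≤ M := one_le_pow₀ hb1.le
  set κ := (1 - Real.exp (-(c * K ^ 2 / D))) / (16 * K ^ 2)
  have hκ : 0 < κ := by
    have hexp : Real.exp (-(c * K ^ 2 / D)) < 1 :=
      Real.exp_lt_one_iff.2 (neg_lt_zero.2 (by positivity))
    exact div_pos (sub_pos.2 hexp) (by positivity)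
  have hA : 0 < max (8 * K ^ 2 * G) (M * D / κ) := lt_max_of_lt_right (by positivity)
  refine ⟨_, hA, fun p h => or_iff_not_imp_left.2 fun hsmall => ?_⟩
  push Not at hsmall
  refine le_mul_pow_of_quadratic_growth hD hM hA hκ.le ?_ (tauSum_box_pow_le h.mem_Icc)
    fun n hn => h.tauSum_box_pow_succ_ge hd hc.le hα.le hb hη0 hη1 hK hDdef n (hsmall n) ?_
  · rw [← div_le_iff₀' hκ]
    exact le_max_right _ _
  · exact (mul_le_mul_of_nonneg_right (le_max_left _ _) (by positivity)).trans hn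

end Growth

/-! ### Hierarchical merging of clusters -/

section Merging

variable {W ι : Type*}

/-- At most one of the sets `A i` is empty, and any two nonempty ones are joined by an edge of
`ω`. -/
def Merging (A : ι → Finset W) (ω : Finset (Sym2 W)) : Prop :=
  ∀ i i', i ≠ i' → ((A i).Nonempty ∨ (A i').Nonempty) ∧
    ((A i).Nonempty → (A i').Nonempty → ∃ u ∈ A i, ∃ v ∈ A i', s(u, v) ∈ ω)

lemma Merging.linked {A : ι → Finset W} {ω : Finset (Sym2 W)} (h : Merging A ω)
    (hA : ∀ i, ∀ u ∈ A i, ∀ v ∈ A i, Linked ω u v) {i i' : ι} {u v : W} (hu : u ∈ A i)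
    (hv : v ∈ A i') : Linked ω u v := by
  rcases eq_or_ne i i' with rfl | hne
  · exact hA i u hu v hv
  · obtain ⟨u', hu', v', hv', huv⟩ := (h i i' hne).2 ⟨u, hu⟩ ⟨v, hv⟩
    exact (hA i u hu u' hu').trans ((Linked.of_mem huv).trans (hA i' v' hv' v hv))

variable [DecidableEq W] {p : Sym2 W → ℝ} {B B' Λ : Finset W}

lemma merging_inter_iff {A : ι → Finset W} {ω E : Finset (Sym2 W)}
    (hE : ∀ i i', ∀ u ∈ A i, ∀ v ∈ A i', s(u, v) ∈ E) : Merging A (ω ∩ E) ↔ Merging A ω := by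
  simp only [Merging, Finset.mem_inter]
  grind

lemma Merging.card_mul_le_card_biUnion [Fintype ι] {A : ι → Finset W} {ω : Finset (Sym2 W)}
    (h : Merging A ω) (hdisj : ∀ i i', i ≠ i' → Disjoint (A i) (A i')) {s : ℕ}
    (hs : ∀ i, (A i).Nonempty → s ≤ (A i).card) :
    (Fintype.card ι - 1) * s ≤ (Finset.univ.biUnion A).card := by
  classical
  have hempty : (Finset.univ.filter fun i => ¬(A i).Nonempty).card ≤ 1 := by
    rw [Finset.card_le_one]
    intro i hi i' hi'
    by_contra hne
    rw [Finset.mem_filter] at hi hi'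
    exact (h i i' hne).1.elim hi.2 hi'.2
  have hnonempty : Fintype.card ι - 1 ≤ (Finset.univ.filter fun i => (A i).Nonempty).card := by
    have hsplit := Finset.card_filter_add_card_filter_not (s := Finset.univ)
      fun i => (A i).Nonempty
    rw [Finset.card_univ] at hsplit
    omega
  calc (Fintype.card ι - 1) * s ≤ (Finset.univ.filter fun i => (A i).Nonempty).card * s :=
        Nat.mul_le_mul_right s hnonempty
    _ ≤ ∑ i ∈ Finset.univ.filter fun i => (A i).Nonempty, (A i).card := by
        rw [← smul_eq_mul]
        exact Finset.card_nsmul_le_sum _ _ _ fun i hi => hs i (Finset.mem_filter.1 hi).2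
    _ ≤ ∑ i, (A i).card := Finset.sum_le_sum_of_subset (Finset.subset_univ _)
    _ = (Finset.univ.biUnion A).card :=
        (Finset.card_biUnion fun i _ i' _ hne => hdisj i i' hne).symm

lemma prob_both_empty_le (hp : ∀ e, p e ∈ Set.Icc 0 1) (hB : B ⊆ Λ) (hB' : B' ⊆ Λ)
    (hd : Disjoint B B') {f f' : Finset (Sym2 W) → Finset W}
    (hf : ∀ ω, f (ω ∩ B.sym2) = f ω) (hf' : ∀ ω, f' (ω ∩ B'.sym2) = f' ω) {δ : ℝ}
    (hδ : prob p B.sym2 (fun ω => f ω = ∅) ≤ δ) (hδ' : prob p B'.sym2 (fun ω => f' ω = ∅) ≤ δ) :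
    prob p Λ.sym2 (fun ω => f ω = ∅ ∧ f' ω = ∅) ≤ δ ^ 2 := by
  have hindep := expect_inter_inter (p := p) (Finset.sym2_mono hB) (Finset.sym2_mono hB')
    (disjoint_sym2 hd) fun a a' => ind (f a = ∅) * ind (f' a' = ∅)
  simp only [hf, hf', expect_mul_left, expect_mul_right] at hindep
  simp only [prob, ind_and, hindep]
  rw [sq]
  exact mul_le_mul hδ hδ' (prob_nonneg hp _) ((prob_nonneg hp _).trans hδ)

lemma prob_nonempty_not_joined_le (hp : ∀ e, p e ∈ Set.Icc 0 1) (hB : B ⊆ Λ) (hB' : B' ⊆ Λ)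
    (hd : Disjoint B B') {f f' : Finset (Sym2 W) → Finset W}
    (hf : ∀ ω, f (ω ∩ B.sym2) = f ω) (hf' : ∀ ω, f' (ω ∩ B'.sym2) = f' ω)
    (hfB : ∀ ω, f ω ⊆ B) (hfB' : ∀ ω, f' ω ⊆ B') {s : ℕ} {l : ℝ} (hl0 : 0 ≤ l)
    (hl : ∀ u ∈ B, ∀ v ∈ B', 1 - p s(u, v) ≤ Real.exp (-l))
    (hs : ∀ ω, (f ω).Nonempty → s ≤ (f ω).card)
    (hs' : ∀ ω, (f' ω).Nonempty → s ≤ (f' ω).card) :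
    prob p Λ.sym2 (fun ω => (f ω).Nonempty ∧ (f' ω).Nonempty ∧
      ∀ u ∈ f ω, ∀ v ∈ f' ω, s(u, v) ∉ ω) ≤ Real.exp (-(l * (s : ℝ) ^ 2)) := by
  let unjoined (a a' b : Finset (Sym2 W)) : Prop :=
    (f a).Nonempty ∧ (f' a').Nonempty ∧ ∀ u ∈ f a, ∀ v ∈ f' a', s(u, v) ∉ b
  have hunjoined (a a' : Finset (Sym2 W)) :
      prob p (crossEdges B B') (unjoined a a') ≤ Real.exp (-(l * (s : ℝ) ^ 2)) := by
    by_cases hne : (f a).Nonempty ∧ (f' a').Nonempty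
    · refine (prob_mono hp fun _ _ h => h.2.2).trans
        ((prob_forall_cross_notMem_le hp (hfB a) (hfB' a') hd hl).trans ?_)
      have hcard := hs a hne.1
      have hcard' := hs' a' hne.2
      rw [sq]
      gcongr
    · calc prob p (crossEdges B B') (unjoined a a') = expect p (crossEdges B B') fun _ => 0 :=
            expect_congr fun _ _ => ind_false fun h => hne ⟨h.1, h.2.1⟩
        _ = 0 := expect_const _ _
        _ ≤ _ := (Real.exp_pos _).le
  calc _ = expect p Λ.sym2 fun ω =>
          ind (unjoined (ω ∩ B.sym2) (ω ∩ B'.sym2) (ω ∩ crossEdges B B')) := by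
        refine expect_congr fun ω _ => congrArg ind (propext ?_)
        simp only [unjoined, hf, hf', Finset.mem_inter, mem_crossEdges]
        grind
    _ = expect p B.sym2 fun a => expect p B'.sym2 fun a' =>
          prob p (crossEdges B B') (unjoined a a') :=
        expect_sym2_inter_crossEdges hB hB' hd fun a a' b => ind (unjoined a a' b)
    _ ≤ expect p B.sym2 fun _ => expect p B'.sym2 fun _ => Real.exp (-(l * (s : ℝ) ^ 2)) :=
        expect_mono hp fun a _ => expect_mono hp fun a' _ => hunjoined a a'
    _ = Real.exp (-(l * (s : ℝ) ^ 2)) := by rw [expect_const, expect_const]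

theorem prob_not_merging_le [Fintype ι] (hp : ∀ e, p e ∈ Set.Icc 0 1) {B : ι → Finset W}
    (hB : ∀ i, B i ⊆ Λ) (hd : ∀ i i', i ≠ i' → Disjoint (B i) (B i'))
    {f : ι → Finset (Sym2 W) → Finset W} (hf : ∀ i ω, f i (ω ∩ (B i).sym2) = f i ω)
    (hfB : ∀ i ω, f i ω ⊆ B i) {s : ℕ} {l δ : ℝ} (hl0 : 0 ≤ l)
    (hl : ∀ u ∈ Λ, ∀ v ∈ Λ, u ≠ v → 1 - p s(u, v) ≤ Real.exp (-l))
    (hs : ∀ i ω, (f i ω).Nonempty → s ≤ (f i ω).card)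
    (hδ : ∀ i, prob p (B i).sym2 (fun ω => f i ω = ∅) ≤ δ) :
    prob p Λ.sym2 (fun ω => ¬Merging (fun i => f i ω) ω) ≤
      (Fintype.card ι : ℝ) ^ 2 * (δ ^ 2 + Real.exp (-(l * (s : ℝ) ^ 2))) := by
  classical
  let offDiag : Finset (ι × ι) := Finset.univ.filter fun q => q.1 ≠ q.2
  let bad (q : ι × ι) (ω : Finset (Sym2 W)) : Prop := (f q.1 ω = ∅ ∧ f q.2 ω = ∅) ∨
    ((f q.1 ω).Nonempty ∧ (f q.2 ω).Nonempty ∧ ∀ u ∈ f q.1 ω, ∀ v ∈ f q.2 ω, s(u, v) ∉ ω)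
  have hbad (q) (hq : q ∈ offDiag) :
      prob p Λ.sym2 (bad q) ≤ δ ^ 2 + Real.exp (-(l * (s : ℝ) ^ 2)) := by
    have hdq := hd q.1 q.2 (Finset.mem_filter.1 hq).2
    refine (prob_or_le hp _ _).trans (add_le_add ?_ ?_)
    · exact prob_both_empty_le hp (hB _) (hB _) hdq (hf _) (hf _) (hδ _) (hδ _)
    · exact prob_nonempty_not_joined_le hp (hB _) (hB _) hdq (hf _) (hf _) (hfB _) (hfB _) hl0
        (fun u hu v hv => hl u (hB _ hu) v (hB _ hv)
          fun huv => Finset.disjoint_left.1 hdq hu (huv ▸ hv)) (hs _) (hs _)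
  calc prob p Λ.sym2 (fun ω => ¬Merging (fun i => f i ω) ω)
    _ ≤ prob p Λ.sym2 fun ω => ∃ q ∈ offDiag, bad q ω := by
        refine prob_mono hp fun ω _ h => ?_
        simp only [Merging, not_forall] at h
        obtain ⟨i, i', hne, h⟩ := h
        refine ⟨(i, i'), by simpa [offDiag] using hne, ?_⟩
        simp only [bad, ← Finset.not_nonempty_iff_eq_empty]
        grind
    _ ≤ ∑ q ∈ offDiag, prob p Λ.sym2 (bad q) := prob_exists_le hp _ _
    _ ≤ offDiag.card * (δ ^ 2 + Real.exp (-(l * (s : ℝ) ^ 2))) := by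
        rw [← nsmul_eq_mul]
        exact Finset.sum_le_card_nsmul _ _ _ hbad
    _ ≤ _ := by
        gcongr
        exact_mod_cast (Finset.card_filter_le _ _).trans_eq (by simp [sq])

end Merging

section RenormCluster

variable {d b m n₀ L : ℕ} {x : V d} {ω : Finset (Sym2 (V d))}

/-- The corner of the subcube with index `i` when a cube with corner `x` is divided into `b ^ d`
subcubes of side length `L`. -/
def subCorner (L : ℕ) (x : V d) (i : Fin d → Fin b) : V d := fun k => x k + L * ((i k : ℕ) : ℤ)

lemma box_subCorner_subset (L : ℕ) (x : V d) (i : Fin d → Fin b) :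
    box L (subCorner L x i) ⊆ box (b * L) x := by
  refine box_subset_box fun k => ?_
  have hk : (L : ℤ) * (i k + 1) ≤ L * b := by
    have hik : ((i k : ℕ) : ℤ) + 1 ≤ b := by exact_mod_cast (i k).2
    gcongr
  have hnonneg : 0 ≤ (L : ℤ) * (i k : ℕ) := by positivity
  simp only [subCorner]
  push_cast at hk ⊢
  constructor <;> linarith

lemma disjoint_box_subCorner (L : ℕ) (x : V d) {i i' : Fin d → Fin b} (h : i ≠ i') :
    Disjoint (box L (subCorner L x i)) (box L (subCorner L x i')) := by
  obtain ⟨k, hk⟩ := Function.ne_iff.1 h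
  wlog hlt : i k < i' k generalizing i i'
  · exact (this h.symm hk.symm (lt_of_le_of_ne (not_lt.1 hlt) hk.symm)).symm
  refine disjoint_box_box (i := k) ?_
  have hstep : (L : ℤ) * ((i k : ℕ) + 1) ≤ L * (i' k : ℕ) :=
    mul_le_mul_of_nonneg_left (by exact_mod_cast hlt) (by positivity)
  simp only [subCorner]
  linarith

lemma subCorner_zero (hb : 1 ≤ b) (L : ℕ) (x : V d) :
    subCorner L x (fun _ => (⟨0, hb⟩ : Fin b)) = x := by
  funext k
  simp [subCorner]

open scoped Classical in
/-- A cluster of `box L x` with at least `m` vertices, and `∅` if there is none. -/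
noncomputable def seedCluster (m L : ℕ) (x : V d) (ω : Finset (Sym2 (V d))) : Finset (V d) :=
  if h : ∃ y ∈ box L x, m ≤ (clusterIn (box L x) (ω ∩ (box L x).sym2) y).card then
    clusterIn (box L x) (ω ∩ (box L x).sym2) h.choose else ∅

open scoped Classical in
/-- The renormalized cluster of the cube of side length `b ^ (n₀ + j)` with corner `x`. At scale
`j + 1` it is the union of those of the subcubes if these are `Merging`, and `∅` otherwise. -/
noncomputable def renormCluster (b m n₀ : ℕ) :
    ℕ → V d → Finset (Sym2 (V d)) → Finset (V d)
  | 0, x, ω => seedCluster m (b ^ n₀) x ω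
  | j + 1, x, ω =>
    if Merging (fun i : Fin d → Fin b => renormCluster b m n₀ j (subCorner (b ^ (n₀ + j)) x i) ω) ω
    then Finset.univ.biUnion fun i : Fin d → Fin b =>
      renormCluster b m n₀ j (subCorner (b ^ (n₀ + j)) x i) ω
    else ∅

lemma box_subCorner_pow_subset (j : ℕ) (x : V d) (i : Fin d → Fin b) :
    box (b ^ (n₀ + j)) (subCorner (b ^ (n₀ + j)) x i) ⊆ box (b ^ (n₀ + (j + 1))) x := by
  rw [← add_assoc, pow_succ']
  exact box_subCorner_subset _ x i

lemma renormCluster_subset_box (j : ℕ) (x : V d) (ω : Finset (Sym2 (V d))) :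
    renormCluster b m n₀ j x ω ⊆ box (b ^ (n₀ + j)) x := by
  induction j generalizing x with
  | zero =>
    simp only [renormCluster, seedCluster]
    split_ifs
    · exact clusterIn_subset
    · exact Finset.empty_subset _
  | succ j ih =>
    simp only [renormCluster]
    split_ifs
    · exact Finset.biUnion_subset.2 fun i _ => (ih _).trans (box_subCorner_pow_subset j x i)
    · exact Finset.empty_subset _

lemma renormCluster_inter (j : ℕ) (x : V d) (ω : Finset (Sym2 (V d))) {E : Finset (Sym2 (V d))}
    (hE : (box (b ^ (n₀ + j)) x).sym2 ⊆ E) :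
    renormCluster b m n₀ j x (ω ∩ E) = renormCluster b m n₀ j x ω := by
  induction j generalizing x with
  | zero =>
    rw [Nat.add_zero] at hE
    simp only [renormCluster, seedCluster, Finset.inter_assoc, Finset.inter_eq_right.2 hE]
  | succ j ih =>
    have hsub := funext fun i : Fin d → Fin b => ih (subCorner (b ^ (n₀ + j)) x i)
      ((Finset.sym2_mono (box_subCorner_pow_subset j x i)).trans hE)
    have hmem (i : Fin d → Fin b) {u} (hu : u ∈ renormCluster b m n₀ j _ ω) :=
      box_subCorner_pow_subset j x i (renormCluster_subset_box _ _ _ hu)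
    simp only [renormCluster]
    rw [hsub, merging_inter_iff fun i i' u hu v hv =>
      hE (Finset.mk_mem_sym2_iff.2 ⟨hmem i hu, hmem i' hv⟩)]

lemma linked_of_mem_renormCluster (j : ℕ) {u v : V d} (hu : u ∈ renormCluster b m n₀ j x ω)
    (hv : v ∈ renormCluster b m n₀ j x ω) : Linked ω u v := by
  induction j generalizing x u v with
  | zero =>
    simp only [renormCluster, seedCluster] at hu hv
    split_ifs at hu hv
    · exact ((mem_clusterIn.1 hu).2.symm.trans (mem_clusterIn.1 hv).2).mono
        Finset.inter_subset_left
    · simp at hu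
  | succ j ih =>
    simp only [renormCluster] at hu hv
    split_ifs at hu hv with hmerge
    · obtain ⟨i, -, hi⟩ := Finset.mem_biUnion.1 hu
      obtain ⟨i', -, hi'⟩ := Finset.mem_biUnion.1 hv
      exact hmerge.linked (fun _ _ hu _ hv => ih hu hv) hi hi'
    · simp at hu

lemma le_card_renormCluster (j : ℕ) (h : (renormCluster b m n₀ j x ω).Nonempty) :
    (b ^ d - 1) ^ j * m ≤ (renormCluster b m n₀ j x ω).card := by
  induction j generalizing x with
  | zero =>
    simp only [renormCluster, seedCluster] at h ⊢
    split_ifs at h ⊢ with hex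
    · simpa using hex.choose_spec.2
    · simp at h
  | succ j ih =>
    simp only [renormCluster] at h ⊢
    split_ifs at h ⊢ with hmerge
    · have hcard := hmerge.card_mul_le_card_biUnion
        (fun i i' hne => (disjoint_box_subCorner _ _ hne).mono
          (renormCluster_subset_box _ _ _) (renormCluster_subset_box _ _ _)) fun _ hi => ih hi
      rwa [Fintype.card_fun, Fintype.card_fin, Fintype.card_fin, ← mul_assoc, ← pow_succ'] at hcard
    · simp at h

lemma renormCluster_subset_succ (hb : 1 ≤ b) (j : ℕ)
    (h : (renormCluster b m n₀ (j + 1) x ω).Nonempty) :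
    renormCluster b m n₀ j x ω ⊆ renormCluster b m n₀ (j + 1) x ω := by
  rw [renormCluster] at h ⊢
  split_ifs at h ⊢
  · nth_rw 1 [← subCorner_zero hb (b ^ (n₀ + j)) x]
    exact Finset.subset_biUnion_of_mem
      (fun i : Fin d → Fin b => renormCluster b m n₀ j (subCorner (b ^ (n₀ + j)) x i) ω)
      (Finset.mem_univ _)
  · simp at h

lemma not_merging_of_renormCluster_succ_eq_empty (hbd : 2 ≤ b ^ d) (j : ℕ)
    (h : renormCluster b m n₀ (j + 1) x ω = ∅) :
    ¬Merging (fun i : Fin d → Fin b =>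
      renormCluster b m n₀ j (subCorner (b ^ (n₀ + j)) x i) ω) ω := by
  intro hmerge
  rw [renormCluster, if_pos hmerge] at h
  obtain ⟨i, i', hne⟩ := Fintype.one_lt_card_iff.1
    (show 1 < Fintype.card (Fin d → Fin b) by simpa using Nat.lt_of_succ_le hbd)
  refine Finset.Nonempty.ne_empty (Finset.biUnion_nonempty.2 ?_) h
  exact (hmerge i i' hne).1.elim
    (fun hi => ⟨i, Finset.mem_univ i, hi⟩) fun hi => ⟨i', Finset.mem_univ i', hi⟩

variable {p : Sym2 (V d) → ℝ} {α c C : ℝ}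

lemma PowerLaw.prob_renormCluster_zero_eq_empty_le (h : PowerLaw d p α c C) (hm : 1 ≤ m) {η : ℝ}
    (hη : 1 - η < prob p (box (b ^ n₀) (0 : V d)).sym2
      fun ω => m ≤ (bigSet (box (b ^ n₀) 0) m ω).card) (x : V d) :
    prob p (box (b ^ n₀) x).sym2 (fun ω => renormCluster b m n₀ 0 x ω = ∅) ≤ η := by
  rw [← h.prob_le_card_bigSet_box _ _ _ x] at hη
  have hnot := prob_not (p := p) (box (b ^ n₀) x).sym2
    fun ω => m ≤ (bigSet (box (b ^ n₀) x) m ω).card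
  refine (prob_mono h.mem_Icc fun ω hω hempty hbig => ?_).trans (hnot.trans_le (by linarith))
  obtain ⟨y, hy⟩ : (bigSet (box (b ^ n₀) x) m ω).Nonempty := Finset.card_pos.1 (by omega)
  have hex : ∃ y ∈ box (b ^ n₀) x, m ≤ (clusterIn (box (b ^ n₀) x) ω y).card :=
    ⟨y, mem_bigSet.1 hy⟩
  simp only [renormCluster, seedCluster, Finset.inter_eq_left.2 hω, dif_pos hex] at hempty
  have hcard := hex.choose_spec.2
  rw [hempty, Finset.card_empty] at hcard
  omega

theorem PowerLaw.prob_renormCluster_succ_eq_empty_le (h : PowerLaw d p α c C) (hc : 0 ≤ c)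
    (hα : 0 ≤ α) (hbd : 2 ≤ b ^ d) (j : ℕ) {δ : ℝ}
    (hδ : ∀ x : V d, prob p (box (b ^ (n₀ + j)) x).sym2
      (fun ω => renormCluster b m n₀ j x ω = ∅) ≤ δ) (x : V d) :
    prob p (box (b ^ (n₀ + (j + 1))) x).sym2 (fun ω => renormCluster b m n₀ (j + 1) x ω = ∅) ≤
      ((b ^ d : ℕ) : ℝ) ^ 2 * (δ ^ 2 +
        Real.exp (-(c * ((b ^ (n₀ + (j + 1)) : ℕ) : ℝ) ^ (-((d : ℝ) + α)) *
          (((b ^ d - 1) ^ j * m : ℕ) : ℝ) ^ 2))) := by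
  refine (prob_mono h.mem_Icc fun ω _ =>
    not_merging_of_renormCluster_succ_eq_empty hbd j).trans ?_
  have hmerge := prob_not_merging_le h.mem_Icc (fun i => box_subCorner_pow_subset j x i)
    (fun i i' hne => disjoint_box_subCorner (b ^ (n₀ + j)) x hne)
    (f := fun i => renormCluster b m n₀ j (subCorner (b ^ (n₀ + j)) x i))
    (fun i ω => renormCluster_inter _ _ _ subset_rfl) (fun i ω => renormCluster_subset_box _ _ _)
    (by positivity)
    (fun u hu v hv hne => h.one_sub_le_of_normInf_le hc hα hne (normInf_sub_le_of_mem_box hu hv))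
    (fun i ω => le_card_renormCluster j) fun i => hδ _
  rwa [Fintype.card_fun, Fintype.card_fin, Fintype.card_fin] at hmerge

end RenormCluster

section Renormalization

lemma exp_neg_le_div_pow {c D K M m : ℝ} (n₀ j : ℕ) (hc : 0 < c) (hD : 1 < D) (hK : 0 < K ^ 2)
    (hDM : 2 * D ≤ (M - 1) ^ 2) (hmK : K ^ 2 * D ^ n₀ ≤ m ^ 2) :
    Real.exp (-(c * D⁻¹ ^ (n₀ + (j + 1)) * ((M - 1) ^ j * m) ^ 2)) ≤ D / (c * K ^ 2) / 2 ^ j := by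
  set y := c * D⁻¹ ^ (n₀ + (j + 1)) * ((M - 1) ^ j * m) ^ 2
  have hy : c * K ^ 2 / D * 2 ^ j ≤ y :=
    calc c * K ^ 2 / D * 2 ^ j
        = c * D⁻¹ ^ (n₀ + (j + 1)) * ((2 * D) ^ j * (K ^ 2 * D ^ n₀)) := by
          rw [inv_pow, pow_add, mul_pow]
          field_simp
          rw [pow_succ']
          ring
      _ ≤ c * D⁻¹ ^ (n₀ + (j + 1)) * (((M - 1) ^ 2) ^ j * m ^ 2) := by gcongr
      _ = y := by
          simp only [y, mul_pow, pow_right_comm (M - 1) 2 j]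
  calc Real.exp (-y) = (Real.exp y)⁻¹ := Real.exp_neg y
    _ ≤ (c * K ^ 2 / D * 2 ^ j)⁻¹ := by
        gcongr
        linarith [Real.add_one_le_exp y]
    _ = D / (c * K ^ 2) / 2 ^ j := by field_simp

lemma sq_mul_add_exp_le_div_pow_succ {c D K M m η : ℝ} (n₀ j : ℕ) (hc : 0 < c) (hD : 1 < D)
    (hM : 2 ≤ M) (hDM : 8 * D ≤ M ^ 2) (hη0 : 0 < η) (hη : M ^ 2 * η ≤ 1 / 4)
    (hK : 4 * M ^ 2 * D ≤ c * η * K ^ 2) (hmK : K ^ 2 * D ^ n₀ ≤ m ^ 2) :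
    M ^ 2 * ((η / 2 ^ j) ^ 2 +
      Real.exp (-(c * D⁻¹ ^ (n₀ + (j + 1)) * ((M - 1) ^ j * m) ^ 2))) ≤ η / 2 ^ (j + 1) := by
  have hKpos : 0 < K ^ 2 := by
    have hpos : 0 < c * η * K ^ 2 := lt_of_lt_of_le (by positivity) hK
    exact pos_of_mul_pos_right hpos (by positivity)
  have hexp := exp_neg_le_div_pow n₀ j hc hD hKpos (by nlinarith : 2 * D ≤ (M - 1) ^ 2) hmK
  have hjoin : M ^ 2 * (D / (c * K ^ 2)) ≤ η / 4 := by
    rw [mul_div_assoc', div_le_iff₀ (by positivity)]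
    linarith
  have hempty : M ^ 2 * (η / 2 ^ j) ^ 2 ≤ η / 4 / 2 ^ j :=
    calc M ^ 2 * (η / 2 ^ j) ^ 2 = M ^ 2 * η * η / 2 ^ j / 2 ^ j := by field_simp
      _ ≤ M ^ 2 * η * η / 1 / 2 ^ j := by
          gcongr
          exact one_le_pow₀ one_le_two
      _ ≤ 1 / 4 * η / 1 / 2 ^ j := by gcongr
      _ = η / 4 / 2 ^ j := by ring
  calc _ ≤ M ^ 2 * (η / 2 ^ j) ^ 2 + M ^ 2 * (D / (c * K ^ 2) / 2 ^ j) := by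
        rw [mul_add]
        gcongr
    _ = M ^ 2 * (η / 2 ^ j) ^ 2 + M ^ 2 * (D / (c * K ^ 2)) / 2 ^ j := by ring
    _ ≤ η / 4 / 2 ^ j + η / 4 / 2 ^ j := by gcongr
    _ = η / 2 ^ (j + 1) := by
        rw [pow_succ]
        ring

variable {d b m n₀ : ℕ} {p : Sym2 (V d) → ℝ} {α c C η K : ℝ}

/-- The situation from which the renormalization starts: with probability at least `1 - η` the cube
of side length `b ^ n₀` contains many vertices in clusters of size `m`, where `b`, `1 / η` and `K`
are large and `m` is at least `K b ^ (n₀ (d + α) / 2)`. -/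
structure RenormSeed (d : ℕ) (p : Sym2 (V d) → ℝ) (α c : ℝ) (b m n₀ : ℕ) (η K : ℝ) : Prop where
  two_le_b : 2 ≤ b
  one_le_m : 1 ≤ m
  eight_mul_rpow_le : 8 * (b : ℝ) ^ ((d : ℝ) + α) ≤ ((b ^ d : ℕ) : ℝ) ^ 2
  η_pos : 0 < η
  sq_mul_η_le : ((b ^ d : ℕ) : ℝ) ^ 2 * η ≤ 1 / 4
  le_mul_K_sq : 4 * ((b ^ d : ℕ) : ℝ) ^ 2 * (b : ℝ) ^ ((d : ℝ) + α) ≤ c * η * K ^ 2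
  K_sq_mul_le : K ^ 2 * ((b : ℝ) ^ ((d : ℝ) + α)) ^ n₀ ≤ (m : ℝ) ^ 2
  lt_prob : 1 - η < prob p (box (b ^ n₀) (0 : V d)).sym2
    fun ω => m ≤ (bigSet (box (b ^ n₀) 0) m ω).card

namespace RenormSeed

lemma two_le_pow (s : RenormSeed d p α c b m n₀ η K) (hd : 1 ≤ d) : 2 ≤ b ^ d :=
  s.two_le_b.trans (Nat.le_self_pow (by omega) b)

lemma one_lt_rpow (s : RenormSeed d p α c b m n₀ η K) (hd : 1 ≤ d) (hα : 0 < α) :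
    1 < (b : ℝ) ^ ((d : ℝ) + α) :=
  Real.one_lt_rpow (by exact_mod_cast s.two_le_b) (by positivity)

lemma three_le_pow (s : RenormSeed d p α c b m n₀ η K) (hd : 1 ≤ d) (hα : 0 < α) :
    3 ≤ b ^ d := by
  have hlt : (8 : ℝ) < ((b ^ d : ℕ) : ℝ) ^ 2 := by
    linarith [s.eight_mul_rpow_le, s.one_lt_rpow hd hα]
  by_contra! hle
  have hsq : (b ^ d) ^ 2 ≤ 2 ^ 2 := Nat.pow_le_pow_left (by omega) 2
  have hsq' : ((b ^ d : ℕ) : ℝ) ^ 2 ≤ 2 ^ 2 := by exact_mod_cast hsq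
  linarith

theorem prob_renormCluster_eq_empty_le (s : RenormSeed d p α c b m n₀ η K)
    (h : PowerLaw d p α c C) (hc : 0 < c) (hα : 0 < α) (hd : 1 ≤ d) (j : ℕ) (x : V d) :
    prob p (box (b ^ (n₀ + j)) x).sym2 (fun ω => renormCluster b m n₀ j x ω = ∅) ≤
      η / 2 ^ j := by
  have hbd := s.two_le_pow hd
  induction j generalizing x with
  | zero => simpa using h.prob_renormCluster_zero_eq_empty_le s.one_le_m s.lt_prob x
  | succ j ih =>
    refine (h.prob_renormCluster_succ_eq_empty_le hc.le hα.le hbd j ih x).trans ?_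
    rw [natCast_pow_rpow, Real.rpow_neg b.cast_nonneg, Nat.cast_mul, Nat.cast_pow (b ^ d - 1) j,
      Nat.cast_pred (by omega)]
    exact sq_mul_add_exp_le_div_pow_succ n₀ j hc (s.one_lt_rpow hd hα) (by exact_mod_cast hbd)
      s.eight_mul_rpow_le s.η_pos s.sq_mul_η_le s.le_mul_K_sq s.K_sq_mul_le

lemma box_subset_box_pow (s : RenormSeed d p α c b m n₀ η K) {j J : ℕ} (hj : j ≤ J) :
    box (b ^ (n₀ + j)) (0 : V d) ⊆ box (b ^ (n₀ + J)) 0 := by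
  have hb := s.two_le_b
  refine box_subset_box fun i => ⟨le_rfl, ?_⟩
  gcongr
  omega

lemma prob_exists_renormCluster_eq_empty_le (s : RenormSeed d p α c b m n₀ η K)
    (h : PowerLaw d p α c C) (hc : 0 < c) (hα : 0 < α) (hd : 1 ≤ d) (J : ℕ) :
    prob p (box (b ^ (n₀ + J)) (0 : V d)).sym2
      (fun ω => ∃ j ∈ Finset.range (J + 1), renormCluster b m n₀ j 0 ω = ∅) ≤ 1 / 2 := by
  have hscale (j) (hj : j ∈ Finset.range (J + 1)) :
      prob p (box (b ^ (n₀ + J)) (0 : V d)).sym2 (fun ω => renormCluster b m n₀ j 0 ω = ∅) ≤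
        η * (1 / 2) ^ j := by
    have hlocal := expect_inter (p := p)
      (Finset.sym2_mono (s.box_subset_box_pow (Nat.lt_succ_iff.1 (Finset.mem_range.1 hj))))
      fun ω => ind (renormCluster b m n₀ j 0 ω = ∅)
    simp only [renormCluster_inter _ _ _ subset_rfl] at hlocal
    rw [one_div_pow, mul_one_div, prob, hlocal]
    exact s.prob_renormCluster_eq_empty_le h hc hα hd j 0
  have hbd : (2 : ℝ) ≤ (b ^ d : ℕ) := by exact_mod_cast s.two_le_pow hd
  have hη := s.η_pos
  calc _ ≤ ∑ j ∈ Finset.range (J + 1), η * (1 / 2) ^ j :=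
        (prob_exists_le h.mem_Icc _ _).trans (Finset.sum_le_sum hscale)
    _ ≤ η * 2 := by
        rw [← Finset.mul_sum]
        gcongr
        exact sum_geometric_two_le (J + 1)
    _ ≤ 1 / 2 := by nlinarith [s.sq_mul_η_le]

lemma exists_mem_box_le_card_clusterIn (s : RenormSeed d p α c b m n₀ η K) (hα : 0 < α)
    (hd : 1 ≤ d) {J : ℕ} {ω : Finset (Sym2 (V d))}
    (h : ∀ j ≤ J, (renormCluster b m n₀ j (0 : V d) ω).Nonempty) :
    ∃ x ∈ box (b ^ n₀) (0 : V d), J ≤ (clusterIn (box (b ^ (n₀ + J)) 0) ω x).card := by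
  have hb := s.two_le_b
  have hchain (j) (hj : j ≤ J) :
      renormCluster b m n₀ 0 (0 : V d) ω ⊆ renormCluster b m n₀ j 0 ω := by
    induction j with
    | zero => rfl
    | succ j ih =>
      exact (ih (by omega)).trans (renormCluster_subset_succ (by omega) j (h (j + 1) hj))
  obtain ⟨x, hx⟩ := h 0 (Nat.zero_le J)
  have hthree := s.three_le_pow hd hα
  refine ⟨x, renormCluster_subset_box 0 0 ω hx, ?_⟩
  calc J ≤ 2 ^ J := Nat.lt_two_pow_self.le
    _ ≤ (b ^ d - 1) ^ J := Nat.pow_le_pow_left (by omega) J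
    _ ≤ (b ^ d - 1) ^ J * m := Nat.le_mul_of_pos_right _ s.one_le_m
    _ ≤ (renormCluster b m n₀ J 0 ω).card := le_card_renormCluster J (h J le_rfl)
    _ ≤ (clusterIn (box (b ^ (n₀ + J)) 0) ω x).card :=
        Finset.card_le_card fun y hy => mem_clusterIn.2 ⟨renormCluster_subset_box _ _ _ hy,
          linked_of_mem_renormCluster J (hchain J le_rfl hx) hy⟩

theorem half_le_prob_exists_le_card_clusterIn (s : RenormSeed d p α c b m n₀ η K)
    (h : PowerLaw d p α c C) (hc : 0 < c) (hα : 0 < α) (hd : 1 ≤ d) (J : ℕ) :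
    1 / 2 ≤ prob p (box (b ^ (n₀ + J)) (0 : V d)).sym2 fun ω =>
      ∃ x ∈ box (b ^ n₀) (0 : V d), J ≤ (clusterIn (box (b ^ (n₀ + J)) 0) ω x).card := by
  have hnot := prob_not (p := p) (box (b ^ (n₀ + J)) (0 : V d)).sym2
    fun ω => ∃ j ∈ Finset.range (J + 1), renormCluster b m n₀ j 0 ω = ∅
  refine le_trans ?_ (hnot.symm.trans_le (prob_mono h.mem_Icc fun ω _ hω => ?_))
  · linarith [s.prob_exists_renormCluster_eq_empty_le h hc hα hd J]
  · push Not at hω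
    exact s.exists_mem_box_le_card_clusterIn hα hd fun j hj =>
      hω j (Finset.mem_range.2 (Nat.lt_succ_iff.2 hj))

end RenormSeed

lemma exists_eight_mul_rpow_le (hαd : α < d) :
    ∃ b : ℕ, 2 ≤ b ∧ 8 * (b : ℝ) ^ ((d : ℝ) + α) ≤ ((b ^ d : ℕ) : ℝ) ^ 2 := by
  have htendsto : Filter.Tendsto (fun n : ℕ => (n : ℝ) ^ ((d : ℝ) - α))
      Filter.atTop Filter.atTop :=
    (tendsto_rpow_atTop (sub_pos.2 hαd)).comp tendsto_natCast_atTop_atTop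
  obtain ⟨b, h8, hb⟩ :=
    ((htendsto.eventually_ge_atTop 8).and (Filter.eventually_ge_atTop 2)).exists
  refine ⟨b, hb, ?_⟩
  calc 8 * (b : ℝ) ^ ((d : ℝ) + α) ≤ (b : ℝ) ^ ((d : ℝ) - α) * (b : ℝ) ^ ((d : ℝ) + α) := by gcongr
    _ = (b : ℝ) ^ ((d * 2 : ℕ) : ℝ) := by
        rw [← Real.rpow_add (by positivity)]
        congr 1
        push_cast
        ring
    _ = ((b ^ d : ℕ) : ℝ) ^ 2 := by rw [Real.rpow_natCast, pow_mul, Nat.cast_pow]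

lemma exists_one_le_le_mul_sq {x y : ℝ} (hx : 0 ≤ x) (hy : 0 < y) :
    ∃ K : ℝ, 1 ≤ K ∧ x ≤ y * K ^ 2 := by
  have hxy : 0 ≤ x / y := div_nonneg hx hy.le
  refine ⟨1 + x / y, by linarith, ?_⟩
  rw [← div_le_iff₀' hy]
  nlinarith

theorem exists_largeCluster_or_tauSum_le (hd : 1 ≤ d) (hα : 0 < α) (hαd : α < d) (hc : 0 < c) :
    ∃ (b : ℕ) (A : ℝ), 2 ≤ b ∧ 0 < A ∧ ∀ p : Sym2 (V d) → ℝ, PowerLaw d p α c C →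
      (∃ N : ℕ, ∀ J : ℕ, ∃ L : ℕ, 1 / 2 ≤ prob p (box L (0 : V d)).sym2
        fun ω => ∃ x ∈ box N (0 : V d), J ≤ (clusterIn (box L 0) ω x).card) ∨
      ∀ n : ℕ, tauSum p (box (b ^ n) (0 : V d)) ≤ A * ((b : ℝ) ^ ((d : ℝ) + α)) ^ n := by
  obtain ⟨b, hb, hbig⟩ := exists_eight_mul_rpow_le hαd
  have hM : (1 : ℝ) ≤ ((b ^ d : ℕ) : ℝ) ^ 2 :=
    one_le_pow₀ (by exact_mod_cast Nat.one_le_pow _ _ (by omega))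
  set M : ℝ := ((b ^ d : ℕ) : ℝ) ^ 2
  have hη : 0 < 1 / (4 * M) := by positivity
  have hMη : M * (1 / (4 * M)) ≤ 1 / 4 := by field_simp; norm_num
  obtain ⟨K, hK1, hK⟩ := exists_one_le_le_mul_sq
    (by positivity : 0 ≤ 4 * M * (b : ℝ) ^ ((d : ℝ) + α)) (mul_pos hc hη)
  obtain ⟨A, hA, hdichotomy⟩ :=
    exists_likely_largeCluster_or_tauSum_le (C := C) hd hα hc hb hη (by nlinarith) hK1
  refine ⟨b, A, hb, hA, fun p h => (hdichotomy p h).imp_left ?_⟩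
  rintro ⟨n, m, hm, hmK, hprob⟩
  have seed : RenormSeed d p α c b m n (1 / (4 * M)) K :=
    ⟨hb, hm, hbig, hη, hMη, hK, hmK, hprob⟩
  exact ⟨b ^ n, fun J =>
    ⟨b ^ (n + J), seed.half_le_prob_exists_le_card_clusterIn h hc hα hd J⟩⟩

end Renormalization

/-! ### Two-point sums over balls -/

section Ball

variable {d : ℕ} {α c C : ℝ} {p : Sym2 (V d) → ℝ}

/-- The closed ball of radius `s` around `x` in the sup norm. -/
noncomputable def ball (s : ℕ) (x : V d) : Finset (V d) := box (2 * s + 1) fun i => x i - s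

lemma mem_ball {s : ℕ} {x y : V d} : y ∈ ball s x ↔ normInf (y - x) ≤ s := by
  rw [ball, mem_box, normInf_le]
  refine forall_congr' fun i => ?_
  simp only [Pi.sub_apply]
  push_cast
  omega

lemma self_mem_ball (s : ℕ) (x : V d) : x ∈ ball s x := by
  rw [mem_ball, sub_self, normInf_eq_zero.mpr rfl]
  exact s.zero_le

lemma card_ball_le {r : ℕ} (hr : 1 ≤ r) (x : V d) :
    ((ball r x).card : ℝ) ≤ 3 ^ d * (r : ℝ) ^ d := by
  have hr1 : (1 : ℝ) ≤ r := by exact_mod_cast hr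
  rw [ball, card_box, ← mul_pow]
  push_cast
  gcongr
  linarith

lemma ball_map_addRight (s : ℕ) (x z : V d) :
    (ball s x).map (Equiv.addRight z).toEmbedding = ball s (x + z) := by
  rw [ball, box_map_addRight, ball]
  congr 1
  funext i
  simp only [Pi.add_apply]
  ring

lemma PowerLaw.sum_tau_ball_eq (h : PowerLaw d p α c C) (s : ℕ) (x : V d) :
    ∑ u ∈ ball s x, tau p (ball s x) x u = ∑ u ∈ ball s (0 : V d), tau p (ball s 0) 0 u := by
  have hmap := ball_map_addRight s (0 : V d) x
  rw [zero_add] at hmap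
  rw [← hmap, Finset.sum_map]
  refine Finset.sum_congr rfl fun u _ => ?_
  simpa using tau_map (p := p) (Equiv.addRight x) (h.translate x) (ball s 0) 0 u

lemma PowerLaw.card_mul_sum_tau_ball_le (h : PowerLaw d p α c C) {s : ℕ} {Z Λ : Finset (V d)}
    (hZ : ∀ z ∈ Z, ball s z ⊆ Λ) :
    (Z.card : ℝ) * ∑ u ∈ ball s (0 : V d), tau p (ball s 0) 0 u ≤ tauSum p Λ := by
  have hnonneg (z u : V d) : 0 ≤ tau p Λ z u := tau_nonneg h.mem_Icc Λ z u
  have hsub : Z ⊆ Λ := fun z hz => hZ z hz (self_mem_ball s z)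
  calc (Z.card : ℝ) * ∑ u ∈ ball s (0 : V d), tau p (ball s 0) 0 u
      = ∑ z ∈ Z, ∑ u ∈ ball s z, tau p (ball s z) z u := by
        simp only [h.sum_tau_ball_eq, Finset.sum_const, nsmul_eq_mul]
    _ ≤ ∑ z ∈ Z, ∑ u ∈ ball s z, tau p Λ z u := by
        gcongr with z hz u
        exact tau_mono h.mem_Icc (hZ z hz) z u
    _ ≤ ∑ z ∈ Z, ∑ u ∈ Λ, tau p Λ z u :=
        Finset.sum_le_sum fun z hz =>
          Finset.sum_le_sum_of_subset_of_nonneg (hZ z hz) fun u _ _ => hnonneg z u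
    _ ≤ tauSum p Λ :=
        Finset.sum_le_sum_of_subset_of_nonneg hsub fun z _ _ =>
          Finset.sum_nonneg fun u _ => hnonneg z u

lemma exists_le_pow_le_mul {b k : ℕ} (hb : 2 ≤ b) (hk : 1 ≤ k) :
    ∃ n, k ≤ b ^ n ∧ b ^ n ≤ b * k := by
  have hex : ∃ n, k ≤ b ^ n := ⟨k, (Nat.lt_pow_self hb).le⟩
  refine ⟨Nat.find hex, Nat.find_spec hex, ?_⟩
  cases hn : Nat.find hex with
  | zero =>
    rw [pow_zero]
    exact Nat.mul_pos (by lia) hk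
  | succ i =>
    have hi : b ^ i < k := not_le.mp (Nat.find_min hex (hn ▸ i.lt_succ_self))
    rw [pow_succ']
    gcongr

lemma PowerLaw.sum_tau_ball_le (h : PowerLaw d p α c C) (hα : 0 < α) {b : ℕ} (hb : 2 ≤ b) {A : ℝ}
    (hA : 0 < A)
    (hbox : ∀ n : ℕ, tauSum p (box (b ^ n) (0 : V d)) ≤ A * ((b : ℝ) ^ ((d : ℝ) + α)) ^ n)
    {s : ℕ} (hs : 1 ≤ s) (x : V d) :
    ∑ u ∈ ball s x, tau p (ball s x) x u ≤ (2 ^ d * A * (4 * b) ^ α) * (s : ℝ) ^ α := by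
  rw [h.sum_tau_ball_eq]
  set T := ∑ u ∈ ball s (0 : V d), tau p (ball s 0) 0 u
  have hT : 0 ≤ T := Finset.sum_nonneg fun u _ => tau_nonneg h.mem_Icc _ _ u
  obtain ⟨n, hsn, hns⟩ := exists_le_pow_le_mul hb (show 1 ≤ 4 * s by lia)
  have hns' : ((b ^ n : ℕ) : ℝ) ≤ 4 * b * s := by exact_mod_cast hns.trans_eq (by ring)
  have hhalf : ((b ^ n : ℕ) : ℝ) / 2 ≤ (b ^ n - 2 * s : ℕ) := by
    have : ((b ^ n : ℕ) : ℝ) ≤ 2 * (b ^ n - 2 * s : ℕ) := by exact_mod_cast (by lia)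
    linarith
  have hsub : ∀ z ∈ box (b ^ n - 2 * s) (fun _ => (s : ℤ) : V d),
      ball s z ⊆ box (b ^ n) (0 : V d) := by
    intro z hz
    refine box_subset_box fun i => ?_
    have hzi := mem_box.mp hz i
    simp only [Pi.zero_apply]
    lia
  have hcount := (h.card_mul_sum_tau_ball_le hsub).trans (hbox n)
  rw [card_box, ← natCast_pow_rpow] at hcount
  generalize b ^ n = R at *
  have hR : (0 : ℝ) < R := by exact_mod_cast (by lia : 0 < R)
  have hTR : T ≤ 2 ^ d * A * (R : ℝ) ^ α := by
    refine le_of_mul_le_mul_left ?_ (by positivity : 0 < ((R : ℝ) / 2) ^ d)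
    calc ((R : ℝ) / 2) ^ d * T ≤ ((R - 2 * s : ℕ) ^ d : ℕ) * T := by
          push_cast
          gcongr
      _ ≤ A * (R : ℝ) ^ ((d : ℝ) + α) := hcount
      _ = ((R : ℝ) / 2) ^ d * (2 ^ d * A * (R : ℝ) ^ α) := by
          rw [Real.rpow_add hR, Real.rpow_natCast, div_pow]
          field_simp
  calc T ≤ 2 ^ d * A * (R : ℝ) ^ α := hTR
    _ ≤ 2 ^ d * A * (4 * b * s) ^ α := by gcongr
    _ = 2 ^ d * A * (4 * b) ^ α * (s : ℝ) ^ α := by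
        rw [Real.mul_rpow (by positivity) (by positivity), mul_assoc (2 ^ d * A)]

end Ball

/-! ### Sums over dyadic scales -/

section Dyadic

lemma le_two_mul_of_forall_bound_halves {ι : Type*} (f : ι → ℝ) {B a : ℝ} (hB : ∀ i, f i ≤ B)
    (ha : 0 ≤ a) (h : ∀ N, 0 ≤ N → (∀ i, f i ≤ N) → ∀ i, f i ≤ a + N / 2) (i : ι) :
    f i ≤ 2 * a := by
  have hiter (k : ℕ) : ∀ i, f i ≤ 2 * a + max B 0 * (1 / 2) ^ k := by
    induction k with
    | zero =>
      intro i
      rw [pow_zero, mul_one]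
      linarith [hB i, le_max_left B 0]
    | succ k ih =>
      intro i
      have := h _ (by positivity) ih i
      rw [pow_succ]
      linarith
  have hlim : Filter.Tendsto (fun k : ℕ => 2 * a + max B 0 * (1 / 2 : ℝ) ^ k) Filter.atTop
      (nhds (2 * a + max B 0 * 0)) :=
    ((_root_.tendsto_pow_atTop_nhds_zero_of_lt_one (by norm_num) (by norm_num)).const_mul
      _).const_add _
  rw [mul_zero, add_zero] at hlim
  exact ge_of_tendsto' hlim fun k => hiter k i

lemma exists_dyadic_scale {t ρ n : ℕ} (hρ : 1 ≤ ρ) (htn : t ≤ n) :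
    ∃ k ≤ n, t ≤ 2 ^ k * ρ ∧ 2 ^ k * ρ ≤ 2 * max ρ t := by
  have hn : t ≤ 2 ^ n * ρ :=
    htn.trans (Nat.lt_two_pow_self.le.trans (Nat.le_mul_of_pos_right _ hρ))
  have hex : ∃ k, t ≤ 2 ^ k * ρ := ⟨n, hn⟩
  refine ⟨Nat.find hex, Nat.find_min' hex hn, Nat.find_spec hex, ?_⟩
  cases hk : Nat.find hex with
  | zero => lia
  | succ i =>
    have hi : 2 ^ i * ρ < t := not_le.mp (Nat.find_min hex (hk ▸ i.lt_succ_self))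
    rw [pow_succ]
    lia

lemma sum_geometric_le {q : ℝ} (hq0 : 0 ≤ q) (hq1 : q < 1) (n : ℕ) :
    ∑ k ∈ Finset.range n, q ^ k ≤ (1 - q)⁻¹ := by
  rw [← tsum_geometric_of_lt_one hq0 hq1]
  exact (summable_geometric_of_lt_one hq0 hq1).sum_le_tsum _ fun _ _ => by positivity

variable {ι : Type*} {t : ι → ℕ} {f : ι → ℝ} {g g' H : ℝ} {ρ : ℕ}

lemma max_rpow_neg_mul_le_sum_dyadic (hg' : 0 < g') (hρ : 1 ≤ ρ) (hf : ∀ i, 0 ≤ f i) {n : ℕ} {i : ι}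
    (hin : t i ≤ n) :
    max (ρ : ℝ) (t i) ^ (-g') * f i ≤ ∑ k ∈ Finset.range (n + 1),
      2 ^ g' * ((2 ^ k * ρ : ℕ) : ℝ) ^ (-g') * if t i ≤ 2 ^ k * ρ then f i else 0 := by
  obtain ⟨k, hkn, htk, hkt⟩ := exists_dyadic_scale hρ hin
  have hkt' : ((2 ^ k * ρ : ℕ) : ℝ) / 2 ≤ max (ρ : ℝ) (t i) := by
    rw [div_le_iff₀' two_pos]
    exact_mod_cast hkt
  have : (0 : ℝ) < ρ := by exact_mod_cast hρ
  calc max (ρ : ℝ) (t i) ^ (-g') * f i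
      ≤ (((2 ^ k * ρ : ℕ) : ℝ) / 2) ^ (-g') * f i := by
        refine mul_le_mul_of_nonneg_right ?_ (hf i)
        exact Real.rpow_le_rpow_of_nonpos (by positivity) hkt' (by linarith)
    _ = 2 ^ g' * ((2 ^ k * ρ : ℕ) : ℝ) ^ (-g') * if t i ≤ 2 ^ k * ρ then f i else 0 := by
        rw [if_pos htk, Real.div_rpow (by positivity) two_pos.le, Real.rpow_neg two_pos.le,
          div_inv_eq_mul, mul_comm (2 ^ g' : ℝ)]
    _ ≤ _ := by
        refine Finset.single_le_sum (f := fun k => (2 : ℝ) ^ g' * ((2 ^ k * ρ : ℕ) : ℝ) ^ (-g') *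
          if t i ≤ 2 ^ k * ρ then f i else 0) (fun j _ => mul_nonneg (by positivity) ?_)
          (Finset.mem_range_succ_iff.mpr hkn)
        split_ifs
        exacts [hf i, le_rfl]

/-- The constant of the dyadic summation bound `sum_max_rpow_neg_mul_le`. -/
noncomputable def dyadicConst (g g' : ℝ) : ℝ := 2 ^ g' * (1 - (2 : ℝ) ^ (g - g'))⁻¹

lemma dyadicConst_pos (hgg' : g < g') : 0 < dyadicConst g g' := by
  have : (2 : ℝ) ^ (g - g') < 1 := Real.rpow_lt_one_of_one_lt_of_neg one_lt_two (by linarith)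
  have : 0 < 1 - (2 : ℝ) ^ (g - g') := by linarith
  unfold dyadicConst
  positivity

lemma sum_max_rpow_neg_mul_le (hg' : 0 < g') (hgg' : g < g') (Q : Finset ι) (hρ : 1 ≤ ρ)
    (hH : 0 ≤ H) (hf : ∀ i, 0 ≤ f i)
    (hgrowth : ∀ r : ℕ, 1 ≤ r → ∑ i ∈ Q with t i ≤ r, f i ≤ H * (r : ℝ) ^ g) :
    ∑ i ∈ Q, max (ρ : ℝ) (t i) ^ (-g') * f i ≤ dyadicConst g g' * H * (ρ : ℝ) ^ (g - g') := by
  unfold dyadicConst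
  set q := (2 : ℝ) ^ (g - g')
  have hq : q < 1 := Real.rpow_lt_one_of_one_lt_of_neg one_lt_two (by linarith)
  have hscale (k : ℕ) : ((2 ^ k * ρ : ℕ) : ℝ) ^ (-g') * ((2 ^ k * ρ : ℕ) : ℝ) ^ g =
      (ρ : ℝ) ^ (g - g') * q ^ k := by
    have hpos : (0 : ℝ) < (2 ^ k * ρ : ℕ) := by positivity
    rw [← Real.rpow_add hpos, Nat.cast_mul, Real.mul_rpow (by positivity) (by positivity),
      show -g' + g = g - g' by ring, natCast_pow_rpow, mul_comm, Nat.cast_ofNat]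
  set n := Q.sup t
  calc ∑ i ∈ Q, max (ρ : ℝ) (t i) ^ (-g') * f i
      ≤ ∑ i ∈ Q, ∑ k ∈ Finset.range (n + 1),
          2 ^ g' * ((2 ^ k * ρ : ℕ) : ℝ) ^ (-g') * if t i ≤ 2 ^ k * ρ then f i else 0 :=
        Finset.sum_le_sum fun i hi =>
          max_rpow_neg_mul_le_sum_dyadic hg' hρ hf (Finset.le_sup (f := t) hi)
    _ = ∑ k ∈ Finset.range (n + 1),
          2 ^ g' * ((2 ^ k * ρ : ℕ) : ℝ) ^ (-g') * ∑ i ∈ Q with t i ≤ 2 ^ k * ρ, f i := by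
        rw [Finset.sum_comm]
        simp only [← Finset.mul_sum, Finset.sum_filter]
    _ ≤ ∑ k ∈ Finset.range (n + 1),
          2 ^ g' * ((2 ^ k * ρ : ℕ) : ℝ) ^ (-g') * (H * ((2 ^ k * ρ : ℕ) : ℝ) ^ g) := by
        gcongr with k
        exact hgrowth _ (Nat.mul_pos (by positivity) hρ)
    _ = 2 ^ g' * H * (ρ : ℝ) ^ (g - g') * ∑ k ∈ Finset.range (n + 1), q ^ k := by
        rw [Finset.mul_sum]
        refine Finset.sum_congr rfl fun k _ => ?_
        linear_combination 2 ^ g' * H * hscale k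
    _ ≤ 2 ^ g' * H * (ρ : ℝ) ^ (g - g') * (1 - q)⁻¹ := by
        gcongr
        exact sum_geometric_le (by positivity) hq _
    _ = 2 ^ g' * (1 - q)⁻¹ * H * (ρ : ℝ) ^ (g - g') := by ring

end Dyadic

section ShortRange

variable {d : ℕ}

lemma sum_shell_rpow_neg_le {s : ℝ} (hs : 0 ≤ s) {R : ℕ} (hR : 1 ≤ R) (u : V d) :
    ∑ v ∈ (ball R u).erase u \ (ball (R / 2) u).erase u, (normInf (v - u) : ℝ) ^ (-s) ≤
      2 ^ s * 3 ^ d * (R : ℝ) ^ ((d : ℝ) - s) := by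
  have hR0 : (0 : ℝ) < R := by exact_mod_cast hR
  set S := (ball R u).erase u \ (ball (R / 2) u).erase u
  have hfar : ∀ v ∈ S, (R : ℝ) / 2 ≤ normInf (v - u) := by
    intro v hv
    simp only [S, Finset.mem_sdiff, Finset.mem_erase, mem_ball] at hv
    have hlt : R ≤ 2 * normInf (v - u) := by
      by_contra hlt
      exact hv.2 ⟨hv.1.1, by lia⟩
    rw [div_le_iff₀' two_pos]
    exact_mod_cast hlt
  have hcard : (S.card : ℝ) ≤ 3 ^ d * (R : ℝ) ^ d :=
    (Nat.cast_le.mpr (Finset.card_le_card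
      (Finset.sdiff_subset.trans (Finset.erase_subset _ _)))).trans (card_ball_le hR u)
  calc ∑ v ∈ S, (normInf (v - u) : ℝ) ^ (-s) ≤ ∑ v ∈ S, ((R : ℝ) / 2) ^ (-s) :=
        Finset.sum_le_sum fun v hv =>
          Real.rpow_le_rpow_of_nonpos (by positivity) (hfar v hv) (by linarith)
    _ ≤ 3 ^ d * (R : ℝ) ^ d * ((R : ℝ) / 2) ^ (-s) := by
        rw [Finset.sum_const, nsmul_eq_mul]
        gcongr
    _ = 2 ^ s * 3 ^ d * (R : ℝ) ^ ((d : ℝ) - s) := by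
        rw [Real.div_rpow hR0.le two_pos.le, Real.rpow_neg two_pos.le, sub_eq_add_neg,
          Real.rpow_add hR0, Real.rpow_natCast]
        field_simp

/-- The constant of the short-range summation bound `sum_ball_erase_rpow_neg_le` in dimension
`d`. -/
noncomputable def shortRangeConst (d : ℕ) (s : ℝ) : ℝ :=
  2 ^ s * 3 ^ d / (1 - (2 : ℝ) ^ (-((d : ℝ) - s)))

lemma shortRangeConst_pos {s : ℝ} (hsd : s < d) : 0 < shortRangeConst d s := by
  have : (2 : ℝ) ^ (-((d : ℝ) - s)) < 1 :=
    Real.rpow_lt_one_of_one_lt_of_neg one_lt_two (by linarith)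
  have : 0 < 1 - (2 : ℝ) ^ (-((d : ℝ) - s)) := by linarith
  unfold shortRangeConst
  positivity

lemma sum_ball_erase_rpow_neg_le {s : ℝ} (hs : 0 ≤ s) (hsd : s < d) (R : ℕ) (u : V d) :
    ∑ v ∈ (ball R u).erase u, (normInf (v - u) : ℝ) ^ (-s) ≤
      shortRangeConst d s * (R : ℝ) ^ ((d : ℝ) - s) := by
  have hq : 0 < 1 - (2 : ℝ) ^ (-((d : ℝ) - s)) :=
    sub_pos.mpr (Real.rpow_lt_one_of_one_lt_of_neg one_lt_two (by linarith))
  have hK := shortRangeConst_pos hsd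
  set K := shortRangeConst d s
  induction R using Nat.strong_induction_on with
  | _ R ih =>
  rcases Nat.eq_zero_or_pos R with rfl | hR
  · have hempty : (ball 0 u).erase u = ∅ := by
      ext v
      simp [mem_ball, normInf_eq_zero, sub_eq_zero]
    rw [hempty, Finset.sum_empty]
    positivity
  have hsub : (ball (R / 2) u).erase u ⊆ (ball R u).erase u :=
    Finset.erase_subset_erase _ fun v hv =>
      mem_ball.mpr ((mem_ball.mp hv).trans (Nat.div_le_self R 2))
  have hhalf : ((R / 2 : ℕ) : ℝ) ^ ((d : ℝ) - s) ≤ 2 ^ (-((d : ℝ) - s)) * (R : ℝ) ^ ((d : ℝ) - s) :=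
    calc ((R / 2 : ℕ) : ℝ) ^ ((d : ℝ) - s) ≤ ((R : ℝ) / 2) ^ ((d : ℝ) - s) :=
          Real.rpow_le_rpow (by positivity) Nat.cast_div_le (by linarith)
      _ = 2 ^ (-((d : ℝ) - s)) * (R : ℝ) ^ ((d : ℝ) - s) := by
          rw [Real.div_rpow (by positivity) two_pos.le, Real.rpow_neg two_pos.le]
          field_simp
  rw [← Finset.sum_sdiff hsub]
  calc _ ≤ 2 ^ s * 3 ^ d * (R : ℝ) ^ ((d : ℝ) - s) +
        K * (2 ^ (-((d : ℝ) - s)) * (R : ℝ) ^ ((d : ℝ) - s)) := by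
        refine add_le_add (sum_shell_rpow_neg_le hs hR u) ((ih (R / 2) (by lia)).trans ?_)
        gcongr
    _ = K * (R : ℝ) ^ ((d : ℝ) - s) := by
        rw [show (2 : ℝ) ^ s * 3 ^ d = K * (1 - (2 : ℝ) ^ (-((d : ℝ) - s))) by
          simp only [K, shortRangeConst]
          field_simp]
        ring

end ShortRange

/-! ### Averaging the exit inequality over radii -/

section ExitWeight

variable {d ρ : ℕ} {α c C ε : ℝ} {p : Sym2 (V d) → ℝ} {Q : Finset (V d)} {x : V d}

/-- The edge probability `p s(u, v)` times (a bound for) the proportion of radii `s ∈ [ρ, 2ρ)` for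
which the sphere of radius `s` around a given centre separates `u` from `v`. The factor
`‖v - u‖ / ρ` is what makes short edges summable for `α < 1`. -/
noncomputable def exitWeight (p : Sym2 (V d) → ℝ) (ρ : ℕ) (u v : V d) : ℝ :=
  p s(u, v) * min 1 ((normInf (v - u) : ℝ) / ρ)

lemma exitWeight_nonneg (hp : ∀ e, p e ∈ Set.Icc 0 1) (ρ : ℕ) (u v : V d) :
    0 ≤ exitWeight p ρ u v :=
  mul_nonneg (hp _).1 (by positivity)

lemma exitWeight_self (p : Sym2 (V d) → ℝ) (ρ : ℕ) (u : V d) : exitWeight p ρ u u = 0 := by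
  rw [exitWeight, sub_self, normInf_eq_zero.mpr rfl, Nat.cast_zero, zero_div,
    min_eq_right one_pos.le, mul_zero]

lemma PowerLaw.exitWeight_le (h : PowerLaw d p α c C) (ρ : ℕ) {u v : V d} (hne : u ≠ v) :
    exitWeight p ρ u v ≤ C * (normInf (v - u) : ℝ) ^ (-((d : ℝ) + α)) := by
  have hle := h.le u v hne
  rw [normInf_sub_comm] at hle
  exact (mul_le_of_le_one_right (h.mem_Icc _).1 (min_le_left _ _)).trans hle

lemma PowerLaw.exitWeight_le_div (h : PowerLaw d p α c C) (hC : 0 ≤ C) (ρ : ℕ) {u v : V d}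
    (hne : u ≠ v) :
    exitWeight p ρ u v ≤ C / ρ * (normInf (v - u) : ℝ) ^ (-((d : ℝ) + α - 1)) := by
  have hpos : (0 : ℝ) < normInf (v - u) := by exact_mod_cast one_le_normInf_sub hne.symm
  have hle := h.le u v hne
  rw [normInf_sub_comm] at hle
  calc exitWeight p ρ u v
      ≤ C * (normInf (v - u) : ℝ) ^ (-((d : ℝ) + α)) * ((normInf (v - u) : ℝ) / ρ) :=
        mul_le_mul hle (min_le_right _ _) (by positivity) (by positivity)
    _ = C / ρ * (normInf (v - u) : ℝ) ^ (-((d : ℝ) + α - 1)) := by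
        rw [neg_sub, sub_eq_add_neg 1, Real.rpow_add hpos, Real.rpow_one]
        ring

lemma tau_le_tau_ball_add_sum_exit (hp : ∀ e, p e ∈ Set.Icc 0 1) (hx : x ∈ Q) (y : V d) {s R : ℕ}
    (hsR : s ≤ R) :
    tau p Q x y ≤ tau p (ball R x) x y + ∑ u ∈ ball R x, ∑ v ∈ Q,
      tau p (ball R x) x u * (p s(u, v) * tau p Q v y) *
        ind (normInf (u - x) ≤ s ∧ s < normInf (v - x)) := by
  classical
  set B := Q.filter fun u => normInf (u - x) ≤ s with hB
  have hxB : x ∈ B := by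
    rw [hB, Finset.mem_filter, sub_self, normInf_eq_zero.mpr rfl]
    exact ⟨hx, s.zero_le⟩
  have hBR : B ⊆ ball R x := fun u hu => mem_ball.mpr ((Finset.mem_filter.mp hu).2.trans hsR)
  have hterm (u v : V d) : 0 ≤ p s(u, v) * tau p Q v y :=
    mul_nonneg (hp _).1 (tau_nonneg hp Q v y)
  have hnonneg (u v : V d) : 0 ≤ tau p (ball R x) x u * (p s(u, v) * tau p Q v y) *
      ind (normInf (u - x) ≤ s ∧ s < normInf (v - x)) :=
    mul_nonneg (mul_nonneg (tau_nonneg hp _ x u) (hterm u v)) (ind_nonneg _)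
  have hcross : ∀ u ∈ B, ∀ v ∈ Q \ B, normInf (u - x) ≤ s ∧ s < normInf (v - x) := by
    intro u hu v hv
    simp only [hB, Finset.mem_filter, Finset.mem_sdiff, not_and, not_le] at hu hv
    exact ⟨hu.2, hv.2 hv.1⟩
  refine (tau_le_tau_add_sum_exit hp (Finset.filter_subset _ Q) hxB y).trans
    (add_le_add (tau_mono hp hBR x y) ?_)
  calc ∑ u ∈ B, ∑ v ∈ Q \ B, tau p B x u * (p s(u, v) * tau p Q v y)
      ≤ ∑ u ∈ B, ∑ v ∈ Q \ B, tau p (ball R x) x u * (p s(u, v) * tau p Q v y) *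
          ind (normInf (u - x) ≤ s ∧ s < normInf (v - x)) := by
        refine Finset.sum_le_sum fun u hu => Finset.sum_le_sum fun v hv => ?_
        rw [ind_true (hcross u hu v hv), mul_one]
        exact mul_le_mul_of_nonneg_right (tau_mono hp hBR x u) (hterm u v)
    _ ≤ ∑ u ∈ B, ∑ v ∈ Q, _ := Finset.sum_le_sum fun u _ =>
        Finset.sum_le_sum_of_subset_of_nonneg Finset.sdiff_subset fun v _ _ => hnonneg u v
    _ ≤ ∑ u ∈ ball R x, ∑ v ∈ Q, _ :=
        Finset.sum_le_sum_of_subset_of_nonneg hBR fun u _ _ =>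
          Finset.sum_nonneg fun v _ => hnonneg u v

lemma sum_Ico_ind_le_mul_min {ρ a b t : ℕ} (hρ : 1 ≤ ρ) (hb : b ≤ t + a) :
    ∑ s ∈ Finset.Ico ρ (2 * ρ), ind (a ≤ s ∧ s < b) ≤
      ind (ρ < b) * (ρ * min 1 ((t : ℝ) / ρ)) := by
  have hρ0 : (0 : ℝ) < ρ := by exact_mod_cast hρ
  have hcard : ∑ s ∈ Finset.Ico ρ (2 * ρ), ind (a ≤ s ∧ s < b) =
      ({s ∈ Finset.Ico ρ (2 * ρ) | a ≤ s ∧ s < b}.card : ℝ) := by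
    rw [← Finset.sum_boole]
    exact Finset.sum_congr rfl fun s _ => by unfold ind; congr
  rw [hcard]
  by_cases hρb : ρ < b
  · rw [ind_true hρb, one_mul, mul_min_of_nonneg _ _ hρ0.le, mul_one, mul_div_cancel₀ _ hρ0.ne']
    refine le_min (Nat.cast_le.mpr ?_) (Nat.cast_le.mpr ?_)
    · refine (Finset.card_filter_le _ _).trans_eq ?_
      rw [Nat.card_Ico]
      lia
    · calc _ ≤ (Finset.Ico a b).card :=
            Finset.card_le_card fun s hs => Finset.mem_Ico.mpr (Finset.mem_filter.mp hs).2
        _ ≤ t := by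
            rw [Nat.card_Ico]
            lia
  · rw [ind_false hρb, zero_mul, Finset.filter_eq_empty_iff.mpr, Finset.card_empty, Nat.cast_zero]
    intro s hs
    rw [Finset.mem_Ico] at hs
    lia

theorem tau_le_tau_ball_add_sum_exitWeight (hp : ∀ e, p e ∈ Set.Icc 0 1) (hx : x ∈ Q) (y : V d)
    (hρ : 1 ≤ ρ) :
    tau p Q x y ≤ tau p (ball (2 * ρ) x) x y + ∑ u ∈ ball (2 * ρ) x, tau p (ball (2 * ρ) x) x u *
      ∑ v ∈ Q with ρ < normInf (v - x), exitWeight p ρ u v * tau p Q v y := by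
  set g : V d → ℝ := fun u => tau p (ball (2 * ρ) x) x u
  have hρ0 : (0 : ℝ) < ρ := by exact_mod_cast hρ
  have hcard : (Finset.Ico ρ (2 * ρ)).card = ρ := by
    rw [Nat.card_Ico]
    lia
  have hterm (u v : V d) : 0 ≤ g u * (p s(u, v) * tau p Q v y) :=
    mul_nonneg (tau_nonneg hp _ x u) (mul_nonneg (hp _).1 (tau_nonneg hp Q v y))
  refine le_of_mul_le_mul_left ?_ hρ0
  calc ρ * tau p Q x y = ∑ _s ∈ Finset.Ico ρ (2 * ρ), tau p Q x y := by
        rw [Finset.sum_const, hcard, nsmul_eq_mul]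
    _ ≤ ∑ s ∈ Finset.Ico ρ (2 * ρ), (g y + ∑ u ∈ ball (2 * ρ) x, ∑ v ∈ Q,
          g u * (p s(u, v) * tau p Q v y) * ind (normInf (u - x) ≤ s ∧ s < normInf (v - x))) :=
        Finset.sum_le_sum fun s hs =>
          tau_le_tau_ball_add_sum_exit hp hx y (Finset.mem_Ico.mp hs).2.le
    _ = ρ * g y + ∑ u ∈ ball (2 * ρ) x, ∑ v ∈ Q, g u * (p s(u, v) * tau p Q v y) *
          ∑ s ∈ Finset.Ico ρ (2 * ρ), ind (normInf (u - x) ≤ s ∧ s < normInf (v - x)) := by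
        rw [Finset.sum_add_distrib, Finset.sum_const, hcard, nsmul_eq_mul, Finset.sum_comm]
        refine congrArg _ (Finset.sum_congr rfl fun u _ => ?_)
        rw [Finset.sum_comm]
        simp only [Finset.mul_sum]
    _ ≤ ρ * g y + ∑ u ∈ ball (2 * ρ) x, ∑ v ∈ Q, g u * (p s(u, v) * tau p Q v y) *
          (ind (ρ < normInf (v - x)) * (ρ * min 1 ((normInf (v - u) : ℝ) / ρ))) := by
        refine add_le_add_right (Finset.sum_le_sum fun u _ => Finset.sum_le_sum fun v _ => ?_) _
        exact mul_le_mul_of_nonneg_left (sum_Ico_ind_le_mul_min hρ (normInf_sub_le v u x))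
          (hterm u v)
    _ = ρ * (g y + ∑ u ∈ ball (2 * ρ) x, g u *
          ∑ v ∈ Q with ρ < normInf (v - x), exitWeight p ρ u v * tau p Q v y) := by
        simp only [mul_add, Finset.mul_sum, Finset.sum_filter]
        refine congrArg _ (Finset.sum_congr rfl fun u _ => Finset.sum_congr rfl fun v _ => ?_)
        split_ifs with hv
        · rw [ind_true hv, exitWeight]
          ring
        · rw [ind_false hv]
          ring

lemma PowerLaw.sum_exitWeight_short_le (h : PowerLaw d p α c C) (hd : 1 ≤ d) (hα0 : 0 ≤ α)
    (hα1 : α < 1) (hC : 0 ≤ C) (Q : Finset (V d)) (u : V d) (hρ : 1 ≤ ρ) (hε : 0 ≤ ε) :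
    ∑ v ∈ Q with (normInf (v - u) : ℝ) ≤ ε * ρ, exitWeight p ρ u v ≤
      C * shortRangeConst d (d + α - 1) * ε ^ (1 - α) * (ρ : ℝ) ^ (-α) := by
  have hρ0 : (0 : ℝ) < ρ := by exact_mod_cast hρ
  have hd1 : (1 : ℝ) ≤ d := by exact_mod_cast hd
  set R := ⌊ε * ρ⌋₊
  set K := shortRangeConst d (d + α - 1)
  have hK : 0 < K := shortRangeConst_pos (by linarith)
  have hshort := sum_ball_erase_rpow_neg_le (s := d + α - 1) (by linarith) (by linarith) R u
  rw [show (d : ℝ) - (d + α - 1) = 1 - α by ring] at hshort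
  calc ∑ v ∈ Q with (normInf (v - u) : ℝ) ≤ ε * ρ, exitWeight p ρ u v
      ≤ ∑ v ∈ ball R u, exitWeight p ρ u v :=
        Finset.sum_le_sum_of_subset_of_nonneg
          (fun v hv => mem_ball.mpr (Nat.le_floor (Finset.mem_filter.mp hv).2))
          fun v _ _ => exitWeight_nonneg h.mem_Icc ρ u v
    _ = ∑ v ∈ (ball R u).erase u, exitWeight p ρ u v :=
        (Finset.sum_erase _ (exitWeight_self p ρ u)).symm
    _ ≤ ∑ v ∈ (ball R u).erase u, C / ρ * (normInf (v - u) : ℝ) ^ (-((d : ℝ) + α - 1)) :=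
        Finset.sum_le_sum fun v hv => h.exitWeight_le_div hC ρ (Finset.ne_of_mem_erase hv).symm
    _ ≤ C / ρ * (K * (R : ℝ) ^ (1 - α)) := by
        rw [← Finset.mul_sum]
        gcongr
    _ ≤ C / ρ * (K * (ε * ρ) ^ (1 - α)) := by
        gcongr
        exact Nat.floor_le (by positivity)
    _ = C * K * ε ^ (1 - α) * (ρ : ℝ) ^ (-α) := by
        rw [Real.mul_rpow hε hρ0.le, sub_eq_add_neg, Real.rpow_add hρ0, Real.rpow_one]
        field_simp

/-- The constant of the total weight bound `PowerLaw.sum_exitWeight_le`. -/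
noncomputable def exitWeightConst (d : ℕ) (α : ℝ) : ℝ :=
  shortRangeConst d (d + α - 1) + dyadicConst d (d + α) * 3 ^ d

lemma exitWeightConst_pos (hα0 : 0 < α) (hα1 : α < 1) : 0 < exitWeightConst d α := by
  have hshort : 0 < shortRangeConst d (d + α - 1) := shortRangeConst_pos (by linarith)
  have hlong : 0 < dyadicConst d (d + α) := dyadicConst_pos (by linarith)
  unfold exitWeightConst
  positivity

lemma PowerLaw.sum_exitWeight_le (h : PowerLaw d p α c C) (hd : 1 ≤ d) (hα0 : 0 < α) (hα1 : α < 1)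
    (hC : 0 ≤ C) (Q : Finset (V d)) (u : V d) (hρ : 1 ≤ ρ) :
    ∑ v ∈ Q, exitWeight p ρ u v ≤ C * exitWeightConst d α * (ρ : ℝ) ^ (-α) := by
  have hshort := h.sum_exitWeight_short_le hd hα0.le hα1 hC Q u hρ one_pos.le
  rw [Real.one_rpow, mul_one, one_mul] at hshort
  have hball : ∀ r : ℕ, 1 ≤ r →
      ∑ v ∈ Q with normInf (v - u) ≤ r, (1 : ℝ) ≤ 3 ^ d * (r : ℝ) ^ (d : ℝ) := by
    intro r hr
    rw [Finset.sum_const, nsmul_eq_mul, mul_one, Real.rpow_natCast]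
    exact (Nat.cast_le.mpr (Finset.card_le_card fun v hv =>
      mem_ball.mpr (Finset.mem_filter.mp hv).2)).trans (card_ball_le hr u)
  have hdyadic := sum_max_rpow_neg_mul_le (g := d) (g' := d + α) (by positivity) (by linarith) Q hρ
    (by positivity) (fun _ => one_pos.le) hball
  rw [show (d : ℝ) - (d + α) = -α by ring] at hdyadic
  have hlong : ∑ v ∈ Q with ¬(normInf (v - u) : ℝ) ≤ ρ, exitWeight p ρ u v ≤
      C * (dyadicConst d (d + α) * 3 ^ d * (ρ : ℝ) ^ (-α)) := by
    refine le_trans ?_ (mul_le_mul_of_nonneg_left hdyadic hC)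
    rw [Finset.mul_sum]
    refine le_trans (Finset.sum_le_sum fun v hv => ?_)
      (Finset.sum_le_sum_of_subset_of_nonneg (Finset.filter_subset _ _) fun v _ _ => by positivity)
    have hfar := not_le.mp (Finset.mem_filter.mp hv).2
    rw [max_eq_right hfar.le, mul_one]
    refine h.exitWeight_le ρ ?_
    rintro rfl
    rw [sub_self, normInf_eq_zero.mpr rfl, Nat.cast_lt] at hfar
    exact absurd hfar (Nat.not_lt_zero _)
  rw [← Finset.sum_filter_add_sum_filter_not Q fun v => (normInf (v - u) : ℝ) ≤ ρ]
  refine (add_le_add hshort hlong).trans_eq ?_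
  rw [exitWeightConst]
  ring

end ExitWeight

/-! ### Pointwise bounds from two-point sums -/

section Pointwise

lemma exists_nat_mul_rpow_neg_le_half {Z s : ℝ} (hZ : 0 < Z) (hs : 0 < s) :
    ∃ B : ℕ, 2 ≤ B ∧ Z * (B : ℝ) ^ (-s) ≤ 1 / 2 := by
  have hlim : Filter.Tendsto (fun B : ℕ => (B : ℝ) ^ (-s)) Filter.atTop (nhds 0) :=
    (tendsto_rpow_neg_atTop hs).comp tendsto_natCast_atTop_atTop
  have hsmall : ∀ᶠ B : ℕ in Filter.atTop, (B : ℝ) ^ (-s) ≤ 1 / 2 / Z :=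
    hlim.eventually_le_const (by positivity)
  obtain ⟨B, hB2, hB⟩ := ((Filter.eventually_ge_atTop 2).and hsmall).exists
  exact ⟨B, hB2, (le_div_iff₀' hZ).mp hB⟩

lemma div_rpow_neg {r k : ℝ} (hr : 0 ≤ r) (hk : 0 ≤ k) (e : ℝ) :
    (r / k) ^ (-e) = k ^ e * r ^ (-e) := by
  rw [Real.div_rpow hr hk, Real.rpow_neg hk, div_inv_eq_mul, mul_comm]

lemma mul_rpow_mul_near_add_far_le {A a b α δ H N r ρ : ℝ} (hA : 0 ≤ A) (hb : 0 ≤ b)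
    (hαδ : α ≤ δ) (hH : 0 ≤ H) (hN : 0 ≤ N) (hr : 0 < r) (hρ : 0 < ρ) (hrρ : r ≤ 16 * ρ)
    (ha : A * 2 ^ α * a * 2 ^ (δ - α) ≤ 1 / 2) :
    A * (2 * ρ) ^ α * (a * ρ ^ (-α) * (N * (r / 2) ^ (-(δ - α))) + b * H * ρ ^ (-δ)) ≤
      (A * 2 ^ α * b * 16 ^ (δ - α) * H + N / 2) * r ^ (-(δ - α)) := by
  have hcancel : ρ ^ α * ρ ^ (-α) = 1 := by rw [← Real.rpow_add hρ, add_neg_cancel, Real.rpow_zero]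
  have hmerge : ρ ^ α * ρ ^ (-δ) = ρ ^ (-(δ - α)) := by
    rw [← Real.rpow_add hρ]
    ring_nf
  have hscale : ρ ^ (-(δ - α)) ≤ 16 ^ (δ - α) * r ^ (-(δ - α)) := by
    rw [← div_rpow_neg hr.le (by norm_num)]
    exact Real.rpow_le_rpow_of_nonpos (by positivity) (by linarith) (by linarith)
  calc _ = A * 2 ^ α * a * 2 ^ (δ - α) * N * r ^ (-(δ - α)) * (ρ ^ α * ρ ^ (-α)) +
        A * 2 ^ α * b * H * (ρ ^ α * ρ ^ (-δ)) := by
        rw [div_rpow_neg hr.le two_pos.le, Real.mul_rpow two_pos.le hρ.le]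
        ring
    _ ≤ 1 / 2 * N * r ^ (-(δ - α)) * 1 +
        A * 2 ^ α * b * H * (16 ^ (δ - α) * r ^ (-(δ - α))) := by
        rw [hcancel, hmerge]
        gcongr
    _ = _ := by ring

variable {d ρ : ℕ} {α c A C H N ε e : ℝ} {p : Sym2 (V d) → ℝ} {Q : Finset (V d)} {x y u v : V d}

/-- The expected number of points within distance `r` of `y` to which `y` is linked inside `Q`. -/
noncomputable def tauSumNear (p : Sym2 (V d) → ℝ) (Q : Finset (V d)) (y : V d) (r : ℕ) : ℝ :=
  ∑ v ∈ Q with normInf (v - y) ≤ r, tau p Q v y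

/-- The expected number of points to which `x` is linked inside the ball of radius `s` around `x`
is at most `A * s ^ α`. -/
def BallGrowth (p : Sym2 (V d) → ℝ) (α A : ℝ) : Prop :=
  ∀ (s : ℕ) (x : V d), 1 ≤ s → ∑ u ∈ ball s x, tau p (ball s x) x u ≤ A * (s : ℝ) ^ α

lemma PowerLaw.sum_near_exitWeight_mul_tau_le (h : PowerLaw d p α c C) (hd : 1 ≤ d) (hα0 : 0 ≤ α)
    (hα1 : α < 1) (hC : 0 ≤ C) (hρ : 1 ≤ ρ) (hε0 : 0 ≤ ε) (hε1 : ε ≤ 1) (hN : 0 ≤ N) (he : 0 ≤ e)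
    (hτ : ∀ v ∈ Q, tau p Q v y ≤ N * max 1 (normInf (v - y) : ℝ) ^ (-e))
    (hu : normInf (u - x) ≤ 2 * ρ) (hxy : 8 * ρ ≤ normInf (x - y)) :
    ∑ v ∈ Q with (normInf (v - u) : ℝ) ≤ ε * ρ, exitWeight p ρ u v * tau p Q v y ≤
      C * shortRangeConst d (d + α - 1) * ε ^ (1 - α) * (ρ : ℝ) ^ (-α) *
        (N * ((normInf (x - y) : ℝ) / 2) ^ (-e)) := by
  have hr0 : (0 : ℝ) < normInf (x - y) := by exact_mod_cast (by lia : 0 < normInf (x - y))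
  refine le_trans ?_ (mul_le_mul_of_nonneg_right
    (h.sum_exitWeight_short_le hd hα0 hα1 hC Q u hρ hε0) (by positivity))
  rw [Finset.sum_mul]
  refine Finset.sum_le_sum fun v hv => ?_
  rw [Finset.mem_filter] at hv
  have hvu : normInf (v - u) ≤ ρ := by
    exact_mod_cast hv.2.trans (mul_le_of_le_one_left (Nat.cast_nonneg ρ) hε1)
  have hfar : (normInf (x - y) : ℝ) ≤ 2 * normInf (v - y) := by
    have hxu := normInf_sub_le x u y
    have huv := normInf_sub_le u v y
    rw [normInf_sub_comm x u] at hxu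
    rw [normInf_sub_comm u v] at huv
    exact_mod_cast (by lia : normInf (x - y) ≤ 2 * normInf (v - y))
  refine mul_le_mul_of_nonneg_left ((hτ v hv.1).trans ?_) (exitWeight_nonneg h.mem_Icc ρ u v)
  refine mul_le_mul_of_nonneg_left ?_ hN
  exact Real.rpow_le_rpow_of_nonpos (by positivity)
    (le_max_of_le_right (by linarith)) (by linarith)

lemma PowerLaw.exitWeight_le_of_lt (h : PowerLaw d p α c C) (hα : 0 ≤ α) (hC : 0 ≤ C)
    (hρ : 1 ≤ ρ) (hε0 : 0 < ε) (hε1 : ε ≤ 1) (huy : normInf (u - y) ≤ 18 * ρ)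
    (hvu : ε * ρ < (normInf (v - u) : ℝ)) :
    exitWeight p ρ u v ≤
      C * (19 / ε) ^ ((d : ℝ) + α) * max (ρ : ℝ) (normInf (v - y)) ^ (-((d : ℝ) + α)) := by
  have hρ0 : (0 : ℝ) < ρ := by exact_mod_cast hρ
  set t := normInf (v - u) with ht
  have ht0 : (0 : ℝ) < t := lt_trans (by positivity) hvu
  have hne : u ≠ v := by
    rintro rfl
    rw [ht, sub_self, normInf_eq_zero.mpr rfl, Nat.cast_zero] at ht0
    exact lt_irrefl _ ht0
  have hmax : max (ρ : ℝ) (normInf (v - y)) ≤ 19 / ε * t := by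
    have hρt : (ρ : ℝ) ≤ t / ε := by
      rw [le_div_iff₀ hε0]
      linarith
    have htt : (t : ℝ) ≤ t / ε := le_div_self ht0.le hε0 hε1
    have hvy : (normInf (v - y) : ℝ) ≤ t + 18 * ρ := by
      exact_mod_cast (normInf_sub_le v u y).trans (by lia)
    rw [div_mul_eq_mul_div, mul_div_assoc]
    exact max_le (by linarith) (by linarith)
  have hmax0 : 0 < max (ρ : ℝ) (normInf (v - y)) := lt_max_of_lt_left hρ0
  refine (h.exitWeight_le ρ hne).trans ?_
  rw [mul_assoc]
  refine mul_le_mul_of_nonneg_left ?_ hC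
  calc (t : ℝ) ^ (-((d : ℝ) + α))
      = (19 / ε) ^ ((d : ℝ) + α) * (19 / ε * t) ^ (-((d : ℝ) + α)) := by
        rw [Real.mul_rpow (by positivity) ht0.le, ← mul_assoc, ← Real.rpow_add (by positivity),
          add_neg_cancel, Real.rpow_zero, one_mul]
    _ ≤ _ := by
        refine mul_le_mul_of_nonneg_left ?_ (by positivity)
        exact Real.rpow_le_rpow_of_nonpos hmax0 hmax (neg_nonpos.mpr (by positivity))

lemma PowerLaw.sum_far_exitWeight_mul_tau_le (h : PowerLaw d p α c C) (hd : 1 ≤ d) (hα : 0 ≤ α)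
    (hC : 0 ≤ C) (hρ : 1 ≤ ρ) (hε0 : 0 < ε) (hε1 : ε ≤ 1) (hH : 0 ≤ H)
    (hsum : ∀ r : ℕ, 1 ≤ r → tauSumNear p Q y r ≤ H * (r : ℝ) ^ α)
    (huy : normInf (u - y) ≤ 18 * ρ) :
    ∑ v ∈ Q with ¬(normInf (v - u) : ℝ) ≤ ε * ρ, exitWeight p ρ u v * tau p Q v y ≤
      C * (19 / ε) ^ ((d : ℝ) + α) * dyadicConst α (d + α) * H * (ρ : ℝ) ^ (-(d : ℝ)) := by
  have hd0 : (0 : ℝ) < d := by exact_mod_cast hd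
  have hτ (v : V d) : 0 ≤ tau p Q v y := tau_nonneg h.mem_Icc Q v y
  have hdyadic := sum_max_rpow_neg_mul_le (g := α) (g' := d + α) (by positivity) (by linarith) Q hρ
    hH hτ hsum
  rw [show α - (d + α) = -(d : ℝ) by ring] at hdyadic
  calc _ ≤ ∑ v ∈ Q with ¬(normInf (v - u) : ℝ) ≤ ε * ρ, C * (19 / ε) ^ ((d : ℝ) + α) *
        (max (ρ : ℝ) (normInf (v - y)) ^ (-((d : ℝ) + α)) * tau p Q v y) := by
        refine Finset.sum_le_sum fun v hv => ?_
        rw [← mul_assoc]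
        refine mul_le_mul_of_nonneg_right ?_ (hτ v)
        exact h.exitWeight_le_of_lt hα hC hρ hε0 hε1 huy (not_le.mp (Finset.mem_filter.mp hv).2)
    _ ≤ ∑ v ∈ Q, C * (19 / ε) ^ ((d : ℝ) + α) *
        (max (ρ : ℝ) (normInf (v - y)) ^ (-((d : ℝ) + α)) * tau p Q v y) :=
        Finset.sum_le_sum_of_subset_of_nonneg (Finset.filter_subset _ _) fun v _ _ =>
          mul_nonneg (by positivity) (mul_nonneg (by positivity) (hτ v))
    _ ≤ C * (19 / ε) ^ ((d : ℝ) + α) * (dyadicConst α (d + α) * H * (ρ : ℝ) ^ (-(d : ℝ))) := by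
        rw [← Finset.mul_sum]
        gcongr
    _ = _ := by ring

/-- The constant of the distant-pair estimate `PowerLaw.tau_le_of_eight_le`. -/
noncomputable def distantConst (d : ℕ) (α A C ε : ℝ) : ℝ :=
  A * 2 ^ α * (C * (19 / ε) ^ ((d : ℝ) + α) * dyadicConst α (d + α)) * 16 ^ ((d : ℝ) - α)

lemma distantConst_nonneg (hd : 1 ≤ d) (hA : 0 ≤ A) (hC : 0 ≤ C) (hε : 0 < ε) :
    0 ≤ distantConst d α A C ε := by
  have hd0 : (0 : ℝ) < d := by exact_mod_cast hd
  have hK : 0 < dyadicConst α (d + α) := dyadicConst_pos (by linarith)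
  unfold distantConst
  positivity

lemma PowerLaw.tau_le_of_eight_le (h : PowerLaw d p α c C) (hd : 1 ≤ d) (hα0 : 0 ≤ α) (hα1 : α < 1)
    (hC : 0 ≤ C) (hA : 0 ≤ A) (hball : BallGrowth p α A) (hε0 : 0 < ε) (hε1 : ε ≤ 1)
    (hε : A * 2 ^ α * (C * shortRangeConst d (d + α - 1) * ε ^ (1 - α)) * 2 ^ ((d : ℝ) - α) ≤ 1 / 2)
    (hH : 0 ≤ H) (hsum : ∀ r : ℕ, 1 ≤ r → tauSumNear p Q y r ≤ H * (r : ℝ) ^ α) (hN : 0 ≤ N)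
    (hτ : ∀ v ∈ Q, tau p Q v y ≤ N * max 1 (normInf (v - y) : ℝ) ^ (-((d : ℝ) - α)))
    (hx : x ∈ Q) (hxy : 8 ≤ normInf (x - y)) :
    tau p Q x y ≤
      (distantConst d α A C ε * H + N / 2) * (normInf (x - y) : ℝ) ^ (-((d : ℝ) - α)) := by
  have hd1 : (1 : ℝ) ≤ d := by exact_mod_cast hd
  set r := normInf (x - y)
  have hr0 : (0 : ℝ) < r := by exact_mod_cast (by lia : 0 < r)
  set ρ := r / 8
  have hρ1 : 1 ≤ ρ := by lia
  have hρ0 : (0 : ℝ) < ρ := by exact_mod_cast hρ1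
  have hrρ : (r : ℝ) ≤ 16 * ρ := by exact_mod_cast (by lia : r ≤ 16 * ρ)
  have hdyadic : 0 < dyadicConst α (d + α) := dyadicConst_pos (by linarith)
  have hshort : 0 < shortRangeConst d (d + α - 1) := shortRangeConst_pos (by linarith)
  set S := C * shortRangeConst d (d + α - 1) * ε ^ (1 - α) * (ρ : ℝ) ^ (-α) *
      (N * ((r : ℝ) / 2) ^ (-((d : ℝ) - α))) +
    C * (19 / ε) ^ ((d : ℝ) + α) * dyadicConst α (d + α) * H * (ρ : ℝ) ^ (-(d : ℝ))
  have hinner : ∀ u ∈ ball (2 * ρ) x,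
      ∑ v ∈ Q with ρ < normInf (v - x), exitWeight p ρ u v * tau p Q v y ≤ S := by
    intro u hu
    have hux := mem_ball.mp hu
    calc _ ≤ ∑ v ∈ Q, exitWeight p ρ u v * tau p Q v y :=
          Finset.sum_le_sum_of_subset_of_nonneg (Finset.filter_subset _ _) fun v _ _ =>
            mul_nonneg (exitWeight_nonneg h.mem_Icc ρ u v) (tau_nonneg h.mem_Icc Q v y)
      _ = _ := (Finset.sum_filter_add_sum_filter_not Q
          (fun v => (normInf (v - u) : ℝ) ≤ ε * ρ) _).symm
      _ ≤ S := add_le_add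
          (h.sum_near_exitWeight_mul_tau_le hd hα0 hα1 hC hρ1 hε0.le hε1 hN (by linarith) hτ hux
            (by lia))
          (h.sum_far_exitWeight_mul_tau_le hd hα0 hC hρ1 hε0 hε1 hH hsum
            ((normInf_sub_le u x y).trans (by lia)))
  have hy : tau p (ball (2 * ρ) x) x y = 0 := by
    refine tau_eq_zero_of_notMem (self_mem_ball _ x) ?_
    rw [mem_ball, normInf_sub_comm]
    lia
  calc tau p Q x y ≤ _ := tau_le_tau_ball_add_sum_exitWeight h.mem_Icc hx y hρ1
    _ ≤ 0 + ∑ u ∈ ball (2 * ρ) x, tau p (ball (2 * ρ) x) x u * S :=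
        add_le_add hy.le (Finset.sum_le_sum fun u hu =>
          mul_le_mul_of_nonneg_left (hinner u hu) (tau_nonneg h.mem_Icc _ x u))
    _ ≤ A * (2 * ρ : ℝ) ^ α * S := by
        rw [zero_add, ← Finset.sum_mul]
        have hballx := hball (2 * ρ) x (by lia)
        push_cast at hballx
        gcongr
    _ ≤ _ := mul_rpow_mul_near_add_far_le hA (by positivity) (by linarith) hH hN hr0 hρ0 hrρ hε

lemma PowerLaw.tau_le_of_tauSumNear_le (h : PowerLaw d p α c C) (hd : 1 ≤ d) (hα0 : 0 ≤ α)
    (hα1 : α < 1) (hC : 0 ≤ C) (hA : 0 ≤ A) (hball : BallGrowth p α A) (hε0 : 0 < ε) (hε1 : ε ≤ 1)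
    (hε : A * 2 ^ α * (C * shortRangeConst d (d + α - 1) * ε ^ (1 - α)) * 2 ^ ((d : ℝ) - α) ≤ 1 / 2)
    (hH : 1 ≤ H) (hsum : ∀ r : ℕ, 1 ≤ r → tauSumNear p Q y r ≤ H * (r : ℝ) ^ α) (hx : x ∈ Q) :
    tau p Q x y ≤ 2 * (distantConst d α A C ε + 8 ^ ((d : ℝ) - α)) * H *
      max 1 (normInf (x - y) : ℝ) ^ (-((d : ℝ) - α)) := by
  have hd1 : (1 : ℝ) ≤ d := by exact_mod_cast hd
  have hC₃ := distantConst_nonneg (α := α) hd hA hC hε0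
  set e := (d : ℝ) - α
  set M : V d → ℝ := fun x => max 1 (normInf (x - y) : ℝ)
  have hM (x : V d) : 0 < M x := lt_max_of_lt_left one_pos
  have hdiv (x : V d) (N : ℝ) : tau p Q x y * M x ^ e ≤ N ↔ tau p Q x y ≤ N * M x ^ (-e) := by
    rw [Real.rpow_neg (hM x).le, ← div_eq_mul_inv, le_div_iff₀ (Real.rpow_pos_of_pos (hM x) e)]
  set f : {x // x ∈ Q} → ℝ := fun x => tau p Q x y * M x ^ e
  have hf (x : {x // x ∈ Q}) : 0 ≤ f x :=
    mul_nonneg (tau_nonneg h.mem_Icc Q x y) (Real.rpow_nonneg (hM x).le e)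
  have hstep : ∀ N, 0 ≤ N → (∀ i, f i ≤ N) →
      ∀ i, f i ≤ (distantConst d α A C ε + 8 ^ e) * H + N / 2 := by
    rintro N hN hfN ⟨x, hx⟩
    refine (hdiv x _).mpr ?_
    have : 0 < M x ^ (-e) := Real.rpow_pos_of_pos (hM x) _
    rcases lt_or_ge (normInf (x - y)) 8 with hxy | hxy
    · have hMx8 : M x ≤ 8 := max_le (by norm_num) (by exact_mod_cast hxy.le)
      calc tau p Q x y ≤ 8 ^ e * M x ^ (-e) := by
            rw [← hdiv]
            exact (mul_le_of_le_one_left (Real.rpow_nonneg (hM x).le e)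
              (tau_le_one h.mem_Icc Q x y)).trans
                (Real.rpow_le_rpow (hM x).le hMx8 (by linarith))
        _ ≤ _ := by
            gcongr
            nlinarith [Real.rpow_pos_of_pos (by norm_num : (0 : ℝ) < 8) e]
    · have hMx1 : M x = normInf (x - y) := max_eq_right (by exact_mod_cast (by lia))
      refine (h.tau_le_of_eight_le hd hα0 hα1 hC hA hball hε0 hε1 hε (by linarith) hsum hN
        (fun v hv => (hdiv v N).mp (hfN ⟨v, hv⟩)) hx hxy).trans ?_
      rw [← hMx1]
      gcongr
      exact le_add_of_nonneg_right (by positivity)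
  have hle := le_two_mul_of_forall_bound_halves f (B := ∑ i, f i)
    (fun i => Finset.single_le_sum (fun i _ => hf i) (Finset.mem_univ i)) (by positivity) hstep
    ⟨x, hx⟩
  exact (hdiv x _).mp (hle.trans_eq (by ring))

end Pointwise

section Bootstrap

variable {d ρ r B : ℕ} {α c A C D H T e : ℝ} {p : Sym2 (V d) → ℝ} {Q : Finset (V d)} {x v : V d}

lemma sum_tau_near_le_of_lt (hD : 0 ≤ D) (he : 0 ≤ e) (hr : 1 ≤ r) (hrρ : 2 * r ≤ ρ)
    (hτ : ∀ y ∈ Q, tau p Q v y ≤ D * max 1 (normInf (v - y) : ℝ) ^ (-e))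
    (hvx : ρ < normInf (v - x)) :
    ∑ y ∈ Q with normInf (y - x) ≤ r, tau p Q v y ≤
      3 ^ d * (r : ℝ) ^ d * (D * ((ρ : ℝ) / 2) ^ (-e)) := by
  have hρ0 : (0 : ℝ) < ρ := by exact_mod_cast (by lia : 0 < ρ)
  calc _ ≤ ∑ y ∈ Q with normInf (y - x) ≤ r, D * ((ρ : ℝ) / 2) ^ (-e) := by
        refine Finset.sum_le_sum fun y hy => ?_
        rw [Finset.mem_filter] at hy
        have htri := normInf_sub_le v y x
        have hfar : (ρ : ℝ) ≤ 2 * normInf (v - y) := by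
          exact_mod_cast (by lia : ρ ≤ 2 * normInf (v - y))
        refine (hτ y hy.1).trans (mul_le_mul_of_nonneg_left ?_ hD)
        exact Real.rpow_le_rpow_of_nonpos (by positivity) (le_max_of_le_right (by linarith))
          (by linarith)
    _ ≤ _ := by
        rw [Finset.sum_const, nsmul_eq_mul]
        refine mul_le_mul_of_nonneg_right ?_ (by positivity)
        exact (Nat.cast_le.mpr (Finset.card_le_card fun y hy =>
          mem_ball.mpr (Finset.mem_filter.mp hy).2)).trans (card_ball_le hr x)

lemma tauSumNear_le_sum_ball_add_sum_exitWeight (hp : ∀ e, p e ∈ Set.Icc 0 1) (hx : x ∈ Q)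
    (hρ : 1 ≤ ρ) (hrρ : r ≤ 2 * ρ) :
    tauSumNear p Q x r ≤ ∑ u ∈ ball (2 * ρ) x, tau p (ball (2 * ρ) x) x u +
      ∑ u ∈ ball (2 * ρ) x, tau p (ball (2 * ρ) x) x u *
        ∑ v ∈ Q with ρ < normInf (v - x), exitWeight p ρ u v *
          ∑ y ∈ Q with normInf (y - x) ≤ r, tau p Q v y := by
  calc tauSumNear p Q x r = ∑ y ∈ Q with normInf (y - x) ≤ r, tau p Q x y :=
        Finset.sum_congr rfl fun y _ => tau_comm Q y x
    _ ≤ ∑ y ∈ Q with normInf (y - x) ≤ r, (tau p (ball (2 * ρ) x) x y +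
          ∑ u ∈ ball (2 * ρ) x, tau p (ball (2 * ρ) x) x u *
            ∑ v ∈ Q with ρ < normInf (v - x), exitWeight p ρ u v * tau p Q v y) :=
        Finset.sum_le_sum fun y _ => tau_le_tau_ball_add_sum_exitWeight hp hx y hρ
    _ = ∑ y ∈ Q with normInf (y - x) ≤ r, tau p (ball (2 * ρ) x) x y + _ := by
        rw [Finset.sum_add_distrib, Finset.sum_comm]
    _ ≤ _ := by
        refine add_le_add ?_ (le_of_eq ?_)
        · refine Finset.sum_le_sum_of_subset_of_nonneg (fun y hy => ?_) fun u _ _ =>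
            tau_nonneg hp _ x u
          exact mem_ball.mpr ((Finset.mem_filter.mp hy).2.trans hrρ)
        · simp only [← Finset.mul_sum]
          refine Finset.sum_congr rfl fun u _ => ?_
          rw [Finset.sum_comm]
          simp only [← Finset.mul_sum]

lemma PowerLaw.tauSumNear_le (h : PowerLaw d p α c C) (hd : 1 ≤ d) (hα0 : 0 < α) (hα1 : α < 1)
    (hC : 0 ≤ C) (hball : BallGrowth p α A) (hx : x ∈ Q) (hρ : 1 ≤ ρ) (hrρ : r ≤ 2 * ρ)
    (hT0 : 0 ≤ T) (hT : ∀ v ∈ Q, ρ < normInf (v - x) →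
      ∑ y ∈ Q with normInf (y - x) ≤ r, tau p Q v y ≤ T) :
    tauSumNear p Q x r ≤
      A * (2 * ρ) ^ α * (1 + C * exitWeightConst d α * (ρ : ℝ) ^ (-α) * T) := by
  have hK : 0 < exitWeightConst d α := exitWeightConst_pos hα0 hα1
  set W := C * exitWeightConst d α * (ρ : ℝ) ^ (-α) * T
  have hinner (u : V d) : ∑ v ∈ Q with ρ < normInf (v - x), exitWeight p ρ u v *
      ∑ y ∈ Q with normInf (y - x) ≤ r, tau p Q v y ≤ W :=
    calc _ ≤ ∑ v ∈ Q with ρ < normInf (v - x), exitWeight p ρ u v * T := by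
          refine Finset.sum_le_sum fun v hv => ?_
          rw [Finset.mem_filter] at hv
          exact mul_le_mul_of_nonneg_left (hT v hv.1 hv.2) (exitWeight_nonneg h.mem_Icc ρ u v)
      _ ≤ W := by
          rw [← Finset.sum_mul]
          exact mul_le_mul_of_nonneg_right (h.sum_exitWeight_le hd hα0 hα1 hC _ u hρ) hT0
  have hballx := hball (2 * ρ) x (by lia)
  push_cast at hballx
  calc tauSumNear p Q x r ≤ _ := tauSumNear_le_sum_ball_add_sum_exitWeight h.mem_Icc hx hρ hrρ
    _ ≤ ∑ u ∈ ball (2 * ρ) x, tau p (ball (2 * ρ) x) x u +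
          ∑ u ∈ ball (2 * ρ) x, tau p (ball (2 * ρ) x) x u * W := by
        gcongr with u
        · exact tau_nonneg h.mem_Icc _ x u
        · exact hinner u
    _ = (∑ u ∈ ball (2 * ρ) x, tau p (ball (2 * ρ) x) x u) * (1 + W) := by
        rw [← Finset.sum_mul]
        ring
    _ ≤ _ := by gcongr

/-- The coefficient with which a bound on `tauSumNear` reproduces itself, up to the factor
`B ^ (-(d - α))`, when balls of radius `r` are compared with balls of radius `B * r`. -/
noncomputable def feedbackConst (d : ℕ) (α A C D : ℝ) : ℝ :=
  A * 2 ^ α * (C * exitWeightConst d α) * D * 2 ^ ((d : ℝ) - α) * 3 ^ d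

lemma mul_rpow_mul_one_add_feedback_le (hr : 1 ≤ r) (hB : 1 ≤ B) (hH : 0 ≤ H)
    (hfeed : feedbackConst d α A C D * (B : ℝ) ^ (-((d : ℝ) - α)) ≤ 1 / 2) :
    A * (2 * (B * r : ℕ)) ^ α * (1 + C * exitWeightConst d α * ((B * r : ℕ) : ℝ) ^ (-α) *
      (3 ^ d * (r : ℝ) ^ d * (D * H * (((B * r : ℕ) : ℝ) / 2) ^ (-((d : ℝ) - α))))) ≤
      (A * (2 * B) ^ α + H / 2) * (r : ℝ) ^ α := by
  have hr0 : (0 : ℝ) < r := by exact_mod_cast hr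
  have hB0 : (0 : ℝ) < B := by exact_mod_cast hB
  have hcancel (t : ℝ) (ht : 0 < t) : t ^ α * t ^ (-α) = 1 := by
    rw [← Real.rpow_add ht, add_neg_cancel, Real.rpow_zero]
  have hvolume : (r : ℝ) ^ d * (r : ℝ) ^ (-((d : ℝ) - α)) = (r : ℝ) ^ α := by
    rw [← Real.rpow_natCast, ← Real.rpow_add hr0]
    ring_nf
  push_cast
  rw [div_rpow_neg (by positivity) two_pos.le]
  simp only [Real.mul_rpow two_pos.le (mul_pos hB0 hr0).le, Real.mul_rpow two_pos.le hB0.le,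
    Real.mul_rpow hB0.le hr0.le]
  calc _ = A * (2 ^ α * (B : ℝ) ^ α) * (r : ℝ) ^ α +
        feedbackConst d α A C D * (B : ℝ) ^ (-((d : ℝ) - α)) * H *
          ((r : ℝ) ^ d * (r : ℝ) ^ (-((d : ℝ) - α))) *
          (((B : ℝ) ^ α * (B : ℝ) ^ (-α)) * ((r : ℝ) ^ α * (r : ℝ) ^ (-α))) := by
        unfold feedbackConst
        ring
    _ ≤ A * (2 ^ α * (B : ℝ) ^ α) * (r : ℝ) ^ α + 1 / 2 * H * (r : ℝ) ^ α * (1 * 1) := by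
        rw [hcancel _ hB0, hcancel _ hr0, hvolume]
        gcongr
    _ = _ := by ring

lemma PowerLaw.tauSumNear_le_of_tau_le (h : PowerLaw d p α c C) (hd : 1 ≤ d) (hα0 : 0 < α)
    (hα1 : α < 1) (hC : 0 ≤ C) (hball : BallGrowth p α A) (hD : 0 ≤ D) (hH : 0 ≤ H) (hB : 2 ≤ B)
    (hfeed : feedbackConst d α A C D * (B : ℝ) ^ (-((d : ℝ) - α)) ≤ 1 / 2)
    (hτ : ∀ v ∈ Q, ∀ y ∈ Q,
      tau p Q v y ≤ D * H * max 1 (normInf (v - y) : ℝ) ^ (-((d : ℝ) - α)))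
    (hx : x ∈ Q) (hr : 1 ≤ r) :
    tauSumNear p Q x r ≤ (A * (2 * B) ^ α + H / 2) * (r : ℝ) ^ α := by
  have hd1 : (1 : ℝ) ≤ d := by exact_mod_cast hd
  have hBr : 2 * r ≤ B * r := Nat.mul_le_mul_right r hB
  refine (h.tauSumNear_le hd hα0 hα1 hC hball hx (ρ := B * r) (by lia) (by lia) (by positivity)
    fun v hv hvx => ?_).trans (mul_rpow_mul_one_add_feedback_le hr (by lia) hH hfeed)
  exact sum_tau_near_le_of_lt (by positivity) (by linarith) hr hBr (hτ v hv) hvx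

lemma tauSumNear_le_card_mul (hp : ∀ e, p e ∈ Set.Icc 0 1) (hα : 0 ≤ α) (hr : 1 ≤ r) :
    tauSumNear p Q x r ≤ Q.card * (r : ℝ) ^ α := by
  calc tauSumNear p Q x r ≤ ∑ _v ∈ Q with normInf (_v - x) ≤ r, (1 : ℝ) :=
        Finset.sum_le_sum fun v _ => tau_le_one hp Q v x
    _ ≤ Q.card := by
        rw [Finset.sum_const, nsmul_eq_mul, mul_one]
        exact_mod_cast Finset.card_filter_le Q _
    _ ≤ _ := le_mul_of_one_le_right (by positivity)
        (Real.one_le_rpow (by exact_mod_cast hr) hα)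

lemma PowerLaw.tauSumNear_le_of_tauSumNear_imp (h : PowerLaw d p α c C) (hd : 1 ≤ d) (hα0 : 0 < α)
    (hα1 : α < 1) (hC : 0 ≤ C) (hA : 0 ≤ A) (hball : BallGrowth p α A) (hD : 0 ≤ D) (hB : 2 ≤ B)
    (hfeed : feedbackConst d α A C D * (B : ℝ) ^ (-((d : ℝ) - α)) ≤ 1 / 2)
    (himp : ∀ H, 1 ≤ H → ∀ y, (∀ r : ℕ, 1 ≤ r → tauSumNear p Q y r ≤ H * (r : ℝ) ^ α) →
      ∀ v ∈ Q, tau p Q v y ≤ D * H * max 1 (normInf (v - y) : ℝ) ^ (-((d : ℝ) - α)))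
    (hx : x ∈ Q) (hr : 1 ≤ r) :
    tauSumNear p Q x r ≤ 2 * (A * (2 * B) ^ α + 1 / 2) * (r : ℝ) ^ α := by
  set f : {x // x ∈ Q} × {r : ℕ // 1 ≤ r} → ℝ :=
    fun i => tauSumNear p Q i.1 i.2 / ((i.2 : ℕ) : ℝ) ^ α
  have hdiv {x : V d} {r : ℕ} {N : ℝ} (hr : 1 ≤ r) :
      tauSumNear p Q x r / (r : ℝ) ^ α ≤ N ↔ tauSumNear p Q x r ≤ N * (r : ℝ) ^ α :=
    div_le_iff₀ (Real.rpow_pos_of_pos (by exact_mod_cast hr) α)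
  have hbounded : ∀ i, f i ≤ Q.card := fun i =>
    (hdiv i.2.2).mpr (tauSumNear_le_card_mul h.mem_Icc hα0.le i.2.2)
  have hstep : ∀ N, 0 ≤ N → (∀ i, f i ≤ N) → ∀ i, f i ≤ A * (2 * B) ^ α + 1 / 2 + N / 2 := by
    rintro N hN hfN ⟨⟨x, hx⟩, ⟨r, hr⟩⟩
    have hτ : ∀ v ∈ Q, ∀ y ∈ Q,
        tau p Q v y ≤ D * (N + 1) * max 1 (normInf (v - y) : ℝ) ^ (-((d : ℝ) - α)) :=
      fun v hv y hy => himp (N + 1) (by linarith) y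
        (fun r hr => (hdiv hr).mp ((hfN ⟨⟨y, hy⟩, ⟨r, hr⟩⟩).trans (by linarith))) v hv
    refine (hdiv hr).mpr ((h.tauSumNear_le_of_tau_le hd hα0 hα1 hC hball hD (by linarith) hB hfeed
      hτ hx hr).trans_eq (by ring))
  exact (hdiv hr).mp (le_two_mul_of_forall_bound_halves f hbounded (by positivity) hstep
    ⟨⟨x, hx⟩, ⟨r, hr⟩⟩)

theorem exists_tau_le_of_ballGrowth (hd : 1 ≤ d) (hα0 : 0 < α) (hα1 : α < 1) (hαd : α < d)
    (hC : 0 < C) (hA : 0 < A) :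
    ∃ D : ℝ, ∀ (c : ℝ) (p : Sym2 (V d) → ℝ), PowerLaw d p α c C → BallGrowth p α A →
      ∀ (Q : Finset (V d)), ∀ x ∈ Q, ∀ y ∈ Q,
        tau p Q x y ≤ D * max 1 (normInf (x - y) : ℝ) ^ (-((d : ℝ) - α)) := by
  have : (1 : ℝ) ≤ d := by exact_mod_cast hd
  have hshort : 0 < shortRangeConst d (d + α - 1) := shortRangeConst_pos (by linarith)
  have hK : 0 < exitWeightConst d α := exitWeightConst_pos hα0 hα1
  obtain ⟨k, hk2, hk⟩ := exists_nat_mul_rpow_neg_le_half (s := 1 - α)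
    (Z := A * 2 ^ α * (C * shortRangeConst d (d + α - 1)) * 2 ^ ((d : ℝ) - α))
    (by positivity) (by linarith)
  have hk1 : (1 : ℝ) ≤ k := by exact_mod_cast (by lia : 1 ≤ k)
  have hε0 : (0 : ℝ) < (k : ℝ)⁻¹ := by positivity
  have hε : A * 2 ^ α * (C * shortRangeConst d (d + α - 1) * ((k : ℝ)⁻¹) ^ (1 - α)) *
      2 ^ ((d : ℝ) - α) ≤ 1 / 2 := by
    rw [Real.inv_rpow (by positivity), ← Real.rpow_neg (by positivity)]
    exact hk.trans_eq' (by ring)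
  have hdist := distantConst_nonneg (α := α) hd hA.le hC.le hε0
  set D := 2 * (distantConst d α A C (k : ℝ)⁻¹ + 8 ^ ((d : ℝ) - α))
  have hD : 0 < D := by positivity
  obtain ⟨B, hB2, hB⟩ := exists_nat_mul_rpow_neg_le_half (s := (d : ℝ) - α)
    (Z := feedbackConst d α A C D) (by unfold feedbackConst; positivity) (by linarith)
  refine ⟨D * (2 * (A * (2 * B) ^ α + 1 / 2)), fun c p h hball Q x hx y hy => ?_⟩
  have himp : ∀ H, 1 ≤ H → ∀ y, (∀ r : ℕ, 1 ≤ r → tauSumNear p Q y r ≤ H * (r : ℝ) ^ α) →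
      ∀ v ∈ Q, tau p Q v y ≤ D * H * max 1 (normInf (v - y) : ℝ) ^ (-((d : ℝ) - α)) :=
    fun H hH y hsum v hv => h.tau_le_of_tauSumNear_le hd hα0.le hα1 hC.le hA.le hball hε0
      (inv_le_one_of_one_le₀ hk1) hε hH hsum hv
  have hAB : 0 ≤ A * (2 * (B : ℝ)) ^ α := by positivity
  exact himp _ (by linarith) y (fun r hr => h.tauSumNear_le_of_tauSumNear_imp hd hα0 hα1 hC.le
    hA.le hball hD.le hB2 hB himp hy hr) x hx

end Bootstrap

/-! ### From finite volume to the percolation measure -/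

section Percolation

variable {d : ℕ} {J : V d → V d → ℝ} {P : ℝ → Measure (Config d)} {α c C β : ℝ}

/-- The probability that an edge is open, as a real number; `edgeProb` is its `ℝ≥0∞` version. -/
noncomputable def openProb (J : V d → V d → ℝ) (β : ℝ) (e : Sym2 (V d)) : ℝ :=
  1 - Real.exp (-β *
    Sym2.lift ⟨fun x y => (J x y + J y x) / 2, fun x y => by dsimp only; rw [add_comm]⟩ e)

lemma edgeProb_eq_ofReal (J : V d → V d → ℝ) (β : ℝ) (e : Sym2 (V d)) :
    edgeProb J β e = ENNReal.ofReal (openProb J β e) := rfl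

lemma openProb_mk (hJ : ∀ x y, J x y = J y x) (β : ℝ) (x y : V d) :
    openProb J β s(x, y) = 1 - Real.exp (-β * J x y) := by
  rw [openProb, Sym2.lift_mk]
  dsimp only
  rw [hJ y x, add_self_div_two]

lemma openProb_zero (J : V d → V d → ℝ) (e : Sym2 (V d)) : openProb J 0 e = 0 := by
  rw [openProb, neg_zero, zero_mul, Real.exp_zero, sub_self]

lemma openProb_mem_Icc (hJ : ∀ x y, 0 ≤ J x y) (hβ : 0 ≤ β) (e : Sym2 (V d)) :
    openProb J β e ∈ Set.Icc 0 1 := by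
  refine ⟨?_, sub_le_self 1 (Real.exp_pos _).le⟩
  induction e using Sym2.ind with
  | _ x y =>
    rw [openProb, Sym2.lift_mk, sub_nonneg, Real.exp_le_one_iff, neg_mul, neg_nonpos]
    exact mul_nonneg hβ (by linarith [hJ x y, hJ y x])

lemma continuous_openProb (J : V d → V d → ℝ) (e : Sym2 (V d)) :
    Continuous fun β => openProb J β e := by
  unfold openProb
  fun_prop

lemma continuous_tau_openProb (J : V d → V d → ℝ) (Q : Finset (V d)) (x y : V d) :
    Continuous fun β => tau (openProb J β) Q x y := by
  unfold tau prob expect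
  refine continuous_finsetSum _ fun ω _ => (Continuous.mul ?_ ?_).mul continuous_const
  · exact continuous_finsetProd _ fun e _ => continuous_openProb J e
  · exact continuous_finsetProd _ fun e _ => continuous_const.sub (continuous_openProb J e)

lemma KernelHyp.powerLaw_openProb (hJ : KernelHyp d J α c C) {β₀ β₁ : ℝ} (h₀ : 0 ≤ β₀)
    (h₀β : β₀ ≤ β) (hβ₁ : β ≤ β₁) : PowerLaw d (openProb J β) α (β₀ * c) (β₁ * C) where
  mem_Icc := openProb_mem_Icc hJ.nonneg (h₀.trans h₀β)
  translate z x y := by rw [openProb_mk hJ.symm, openProb_mk hJ.symm, hJ.transInv]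
  one_sub_le x y hxy := by
    have := hJ.c_pos
    have hlower : β₀ * (c * (normInf (x - y) : ℝ) ^ (-(d : ℝ) - α)) ≤ β * J x y :=
      mul_le_mul h₀β (hJ.lower x y hxy) (by positivity) (h₀.trans h₀β)
    rw [openProb_mk hJ.symm, _root_.sub_sub_cancel, Real.exp_le_exp, neg_add']
    linarith
  le x y hxy := by
    have hupper : β * J x y ≤ β₁ * (C * (normInf (x - y) : ℝ) ^ (-(d : ℝ) - α)) :=
      mul_le_mul hβ₁ (hJ.upper x y hxy) (hJ.nonneg x y) ((h₀.trans h₀β).trans hβ₁)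
    rw [openProb_mk hJ.symm, neg_add']
    linarith [Real.add_one_le_exp (-β * J x y)]

/-- The open edges of the configuration `ω` among the edges in `E`. -/
def openIn (E : Finset (Sym2 (V d))) (ω : Config d) : Finset (Sym2 (V d)) :=
  E.filter fun e => ω e = true

lemma openIn_mono {E E' : Finset (Sym2 (V d))} (h : E ⊆ E') (ω : Config d) :
    openIn E ω ⊆ openIn E' ω :=
  Finset.filter_subset_filter _ h

lemma openIn_eq_iff {E a : Finset (Sym2 (V d))} (ha : a ⊆ E) (ω : Config d) :
    openIn E ω = a ↔ ∀ e ∈ E, ω e = decide (e ∈ a) := by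
  constructor
  · rintro rfl e he
    simp [openIn, he]
  · intro h
    ext e
    rw [openIn, Finset.mem_filter]
    exact ⟨fun ⟨he, hω⟩ => of_decide_eq_true (h e he ▸ hω),
      fun he => ⟨ha he, (h e (ha he)).trans (decide_eq_true he)⟩⟩

lemma measurableSet_openIn_eq {E a : Finset (Sym2 (V d))} (ha : a ⊆ E) :
    MeasurableSet {ω : Config d | openIn E ω = a} := by
  simp only [openIn_eq_iff ha, Set.ofPred_forall]
  exact E.measurableSet_biInter fun e _ => measurable_pi_apply e (measurableSet_singleton _)

open Classical in
lemma ofPred_openIn_eq_biUnion (E : Finset (Sym2 (V d))) (A : Finset (Sym2 (V d)) → Prop) :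
    {ω : Config d | A (openIn E ω)} = ⋃ a ∈ E.powerset.filter A, {ω | openIn E ω = a} := by
  ext ω
  simp only [Set.mem_ofPred_eq, Set.mem_iUnion, Finset.mem_filter, Finset.mem_powerset, exists_prop,
    exists_eq_right', iff_and_self]
  exact fun _ => Finset.filter_subset _ _

lemma measurableSet_ofPred_openIn (E : Finset (Sym2 (V d))) (A : Finset (Sym2 (V d)) → Prop) :
    MeasurableSet {ω : Config d | A (openIn E ω)} := by
  classical
  rw [ofPred_openIn_eq_biUnion]
  exact Finset.measurableSet_biUnion _ fun a ha =>
    measurableSet_openIn_eq (Finset.mem_powerset.mp (Finset.mem_filter.mp ha).1)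

lemma IsLRP.isProbabilityMeasure (hP : IsLRP J P) (β : ℝ) : IsProbabilityMeasure (P β) where
  measure_univ := by simpa using hP β ∅ fun _ => true

lemma IsLRP.measure_openIn_eq (hP : IsLRP J P) (hJ : ∀ x y, 0 ≤ J x y) (hβ : 0 ≤ β)
    {E a : Finset (Sym2 (V d))} (ha : a ⊆ E) :
    P β {ω | openIn E ω = a} = ENNReal.ofReal
      ((∏ e ∈ a, openProb J β e) * ∏ e ∈ E \ a, (1 - openProb J β e)) := by
  have hq := openProb_mem_Icc hJ hβ
  simp only [openIn_eq_iff ha]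
  rw [hP β E fun e => decide (e ∈ a), ← Finset.prod_sdiff ha, mul_comm,
    ENNReal.ofReal_mul (Finset.prod_nonneg fun e _ => (hq e).1),
    ENNReal.ofReal_prod_of_nonneg fun e _ => (hq e).1,
    ENNReal.ofReal_prod_of_nonneg fun e _ => sub_nonneg.mpr (hq e).2]
  congr 1
  · refine Finset.prod_congr rfl fun e he => ?_
    simp only [he, decide_true, if_true, edgeProb_eq_ofReal]
  · refine Finset.prod_congr rfl fun e he => ?_
    simp [(Finset.mem_sdiff.mp he).2, edgeProb_eq_ofReal, ENNReal.ofReal_sub _ (hq e).1]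

theorem IsLRP.measure_ofPred_openIn (hP : IsLRP J P) (hJ : ∀ x y, 0 ≤ J x y) (hβ : 0 ≤ β)
    (E : Finset (Sym2 (V d))) (A : Finset (Sym2 (V d)) → Prop) :
    P β {ω | A (openIn E ω)} = ENNReal.ofReal (prob (openProb J β) E A) := by
  classical
  have hq := openProb_mem_Icc hJ hβ
  have hweight (a : Finset (Sym2 (V d))) :
      0 ≤ (∏ e ∈ a, openProb J β e) * ∏ e ∈ E \ a, (1 - openProb J β e) :=
    mul_nonneg (Finset.prod_nonneg fun e _ => (hq e).1)
      (Finset.prod_nonneg fun e _ => sub_nonneg.mpr (hq e).2)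
  have hdisj : Set.PairwiseDisjoint ↑(E.powerset.filter A)
      fun a => {ω : Config d | openIn E ω = a} := fun a _ b _ hab =>
    Set.disjoint_left.mpr fun ω ha hb => hab (ha.symm.trans hb)
  rw [ofPred_openIn_eq_biUnion, measure_biUnion_finset hdisj fun a ha =>
      measurableSet_openIn_eq (Finset.mem_powerset.mp (Finset.mem_filter.mp ha).1),
    Finset.sum_filter, prob, expect,
    ENNReal.ofReal_sum_of_nonneg fun a _ => mul_nonneg (hweight a) (ind_nonneg _)]
  refine Finset.sum_congr rfl fun a ha => ?_
  split_ifs with hA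
  · rw [ind_true hA, mul_one, hP.measure_openIn_eq hJ hβ (Finset.mem_powerset.mp ha)]
  · rw [ind_false hA, mul_zero, ENNReal.ofReal_zero]

lemma Linked.conn {E : Finset (Sym2 (V d))} {ω : Config d} {x y : V d}
    (h : Linked (openIn E ω) x y) : conn ω x y :=
  Relation.ReflTransGen.mono (fun _ _ hab => ⟨hab.1, (Finset.mem_filter.mp hab.2).2⟩) x y h

lemma ball_subset_ball {m n : ℕ} (h : m ≤ n) (x : V d) : ball m x ⊆ ball n x :=
  fun _ hy => mem_ball.mpr ((mem_ball.mp hy).trans h)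

lemma openIn_sym2_ball_mono {m n : ℕ} (h : m ≤ n) (ω : Config d) :
    openIn (ball m (0 : V d)).sym2 ω ⊆ openIn (ball n 0).sym2 ω :=
  openIn_mono (Finset.sym2_mono (ball_subset_ball h 0)) ω

lemma exists_linked_of_conn {ω : Config d} {x y : V d} (h : conn ω x y) :
    ∃ n, Linked (openIn (ball n (0 : V d)).sym2 ω) x y := by
  induction h with
  | refl => exact ⟨0, Linked.refl _ _⟩
  | @tail b c _ hbc ih =>
    obtain ⟨n, hn⟩ := ih
    set m := max n (max (normInf b) (normInf c))
    refine ⟨m, (hn.mono (openIn_sym2_ball_mono (le_max_left _ _) ω)).trans (Linked.of_mem ?_)⟩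
    rw [openIn, Finset.mem_filter, Finset.mk_mem_sym2_iff, mem_ball, mem_ball, sub_zero, sub_zero]
    exact ⟨⟨by lia, by lia⟩, hbc.2⟩

lemma ofPred_conn_eq_iUnion (x y : V d) :
    {ω : Config d | conn ω x y} =
      ⋃ n : ℕ, {ω | Linked (openIn (ball n (0 : V d)).sym2 ω) x y} := by
  ext ω
  rw [Set.mem_iUnion]
  exact ⟨exists_linked_of_conn, fun ⟨n, hn⟩ => hn.conn⟩

theorem IsLRP.twoPoint_le (hP : IsLRP J P) (hJ : ∀ x y, 0 ≤ J x y) (hβ : 0 ≤ β) {x y : V d} {b : ℝ}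
    (h : ∀ Q : Finset (V d), x ∈ Q → y ∈ Q → tau (openProb J β) Q x y ≤ b) :
    twoPoint P β x y ≤ ENNReal.ofReal b := by
  have hmono : Monotone fun n : ℕ =>
      {ω : Config d | Linked (openIn (ball n (0 : V d)).sym2 ω) x y} :=
    fun m n hmn ω hω => Linked.mono (openIn_sym2_ball_mono hmn ω) hω
  rw [twoPoint, ofPred_conn_eq_iUnion, hmono.measure_iUnion]
  refine iSup_le fun n => ?_
  rw [hP.measure_ofPred_openIn hJ hβ _ fun η => Linked η x y]
  set m := max n (max (normInf x) (normInf y))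
  refine ENNReal.ofReal_le_ofReal ((tau_mono (openProb_mem_Icc hJ hβ)
    (ball_subset_ball (le_max_left _ _ : n ≤ m) 0) x y).trans (h _ ?_ ?_)) <;>
  · rw [mem_ball, sub_zero]
    lia

/-- Some vertex of `box N 0` has a cluster with at least `K` vertices inside some finite box. -/
def LargeClusterFrom (N K : ℕ) (ω : Config d) : Prop :=
  ∃ L, ∃ x ∈ box N (0 : V d), K ≤ (clusterIn (box L 0) (openIn (box L (0 : V d)).sym2 ω) x).card

lemma measurableSet_largeClusterFrom (N K : ℕ) :
    MeasurableSet {ω : Config d | LargeClusterFrom N K ω} := by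
  simp only [LargeClusterFrom]
  rw [Set.ofPred_exists]
  exact MeasurableSet.iUnion fun L => measurableSet_ofPred_openIn (box L (0 : V d)).sym2
    fun η => ∃ x ∈ box N (0 : V d), K ≤ (clusterIn (box L 0) η x).card

lemma exists_infinite_cluster_of_largeClusterFrom {N : ℕ} {ω : Config d}
    (h : ∀ K, LargeClusterFrom N K ω) : ∃ x, (cluster ω x).Infinite := by
  by_contra! hfin
  obtain ⟨L, x, hx, hcard⟩ := h (1 + ∑ x ∈ box N (0 : V d), (cluster ω x).ncard)
  have hle : (clusterIn (box L 0) (openIn (box L (0 : V d)).sym2 ω) x).card ≤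
      (cluster ω x).ncard := by
    rw [← Set.ncard_coe_finset]
    exact Set.ncard_le_ncard (fun y hy => (mem_clusterIn.mp (Finset.mem_coe.mp hy)).2.conn) (hfin x)
  have hsum := Finset.single_le_sum (f := fun x => (cluster ω x).ncard)
    (fun _ _ => Nat.zero_le _) hx
  lia

theorem IsLRP.measure_exists_infinite_cluster_pos (hP : IsLRP J P) (hJ : ∀ x y, 0 ≤ J x y)
    (hβ : 0 ≤ β)
    (h : ∃ N, ∀ K, ∃ L, 1 / 2 ≤ prob (openProb J β) (box L (0 : V d)).sym2
      fun ω => ∃ x ∈ box N (0 : V d), K ≤ (clusterIn (box L 0) ω x).card) :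
    0 < P β {ω | ∃ x, (cluster ω x).Infinite} := by
  have := hP.isProbabilityMeasure β
  obtain ⟨N, hN⟩ := h
  set S : ℕ → Set (Config d) := fun K => {ω | LargeClusterFrom N K ω}
  have hanti : Antitone S := fun K K' hK ω ⟨L, x, hx, hcard⟩ => ⟨L, x, hx, hK.trans hcard⟩
  have hhalf (K : ℕ) : ENNReal.ofReal (1 / 2) ≤ P β (S K) := by
    obtain ⟨L, hL⟩ := hN K
    refine (ENNReal.ofReal_le_ofReal hL).trans ?_
    rw [← hP.measure_ofPred_openIn hJ hβ]
    exact measure_mono fun ω hω => ⟨L, hω⟩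
  calc (0 : ℝ≥0∞) < ENNReal.ofReal (1 / 2) := ENNReal.ofReal_pos.mpr one_half_pos
    _ ≤ ⨅ K, P β (S K) := le_iInf hhalf
    _ = P β (⋂ K, S K) := (hanti.measure_iInter
        (fun K => (measurableSet_largeClusterFrom N K).nullMeasurableSet)
        ⟨0, measure_ne_top _ _⟩).symm
    _ ≤ _ := measure_mono fun ω hω =>
        exists_infinite_cluster_of_largeClusterFrom fun K => Set.mem_iInter.mp hω K

end Percolation

/-! ### The two-point function at criticality -/

section Critical

variable {d : ℕ} {J : V d → V d → ℝ} {P : ℝ → Measure (Config d)} {α c C β : ℝ}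

lemma tau_eq_zero_of_forall_eq_zero {p : Sym2 (V d) → ℝ} {Q : Finset (V d)} {x y : V d}
    (hp : ∀ e, p e = 0) (hx : x ∈ Q) (hxy : x ≠ y) : tau p Q x y = 0 := by
  have hp01 : ∀ e, p e ∈ Set.Icc 0 1 := fun e => by simp [hp e]
  refine le_antisymm ?_ (tau_nonneg hp01 Q x y)
  have hexit := tau_le_tau_add_sum_exit hp01 (Finset.singleton_subset_iff.mpr hx)
    (Finset.mem_singleton_self x) y
  rw [tau_eq_zero_of_notMem (Finset.mem_singleton_self x)
    (fun h => hxy (Finset.mem_singleton.mp h).symm)] at hexit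
  simpa only [hp, zero_mul, mul_zero, Finset.sum_const_zero, add_zero] using hexit

lemma tau_le_max_rpow_of_forall_eq_zero {p : Sym2 (V d) → ℝ} {Q : Finset (V d)} {x : V d}
    (hp : ∀ e, p e = 0) (hx : x ∈ Q) (y : V d) (s : ℝ) :
    tau p Q x y ≤ max 1 (normInf (x - y) : ℝ) ^ s := by
  rcases eq_or_ne x y with rfl | hxy
  · rw [sub_self, normInf_eq_zero.mpr rfl, Nat.cast_zero, max_eq_left zero_le_one, Real.one_rpow]
    exact tau_le_one (fun e => by simp [hp e]) Q x x
  · rw [tau_eq_zero_of_forall_eq_zero hp hx hxy]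
    positivity

lemma not_measure_exists_infinite_cluster_pos_of_lt_betaC (hβ : 0 ≤ β) (hlt : β < betaC P) :
    ¬0 < P β {ω | ∃ x, (cluster ω x).Infinite} := fun hpos =>
  notMem_of_lt_csInf hlt ⟨0, fun _ hβ' => hβ'.1⟩ ⟨hβ, hpos⟩

lemma IsLRP.exists_tau_le_of_lt_betaC (hP : IsLRP J P) (hJ : KernelHyp d J α c C) (hα : α < 1)
    (hpos : 0 < betaC P) :
    ∃ D : ℝ, ∀ β, betaC P / 2 ≤ β → β < betaC P → ∀ Q : Finset (V d), ∀ x ∈ Q, ∀ y ∈ Q,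
      tau (openProb J β) Q x y ≤ D * max 1 (normInf (x - y) : ℝ) ^ (-((d : ℝ) - α)) := by
  have hC : 0 < C := hJ.c_pos.trans_le hJ.c_le_C
  obtain ⟨b, A, hb, hA, hdich⟩ := exists_largeCluster_or_tauSum_le (C := betaC P * C) hJ.d_pos
    hJ.alpha_pos hJ.alpha_lt_d (mul_pos (half_pos hpos) hJ.c_pos)
  have : (0 : ℝ) < b := by exact_mod_cast (by lia : 0 < b)
  obtain ⟨D, hτ⟩ := exists_tau_le_of_ballGrowth (C := betaC P * C)
    (A := 2 ^ d * A * (4 * b) ^ α) hJ.d_pos hJ.alpha_pos hα hJ.alpha_lt_d (by positivity)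
    (by positivity)
  refine ⟨D, fun β hhalf hlt => ?_⟩
  have hβ : 0 ≤ β := (half_pos hpos).le.trans hhalf
  have hlaw := hJ.powerLaw_openProb (half_pos hpos).le hhalf hlt.le
  rcases hdich _ hlaw with hlarge | hbox
  · exact absurd (hP.measure_exists_infinite_cluster_pos hJ.nonneg hβ hlarge)
      (not_measure_exists_infinite_cluster_pos_of_lt_betaC hβ hlt)
  · exact hτ _ _ hlaw fun s x hs => hlaw.sum_tau_ball_le hJ.alpha_pos hb hA hbox hs x

theorem IsLRP.exists_twoPoint_betaC_le (hP : IsLRP J P) (hJ : KernelHyp d J α c C) (hα : α < 1) :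
    ∃ D : ℝ, ∀ x y : V d, twoPoint P (betaC P) x y ≤
      ENNReal.ofReal (D * max 1 (normInf (x - y) : ℝ) ^ (-((d : ℝ) - α))) := by
  have hβc : 0 ≤ betaC P := Real.sInf_nonneg fun β hβ => hβ.1
  rcases hβc.eq_or_lt with hzero | hpos
  · refine ⟨1, fun x y => hP.twoPoint_le hJ.nonneg hβc fun Q hx _ => ?_⟩
    rw [← hzero, one_mul]
    exact tau_le_max_rpow_of_forall_eq_zero (openProb_zero J) hx y _
  · obtain ⟨D, hτ⟩ := hP.exists_tau_le_of_lt_betaC hJ hα hpos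
    refine ⟨D, fun x y => hP.twoPoint_le hJ.nonneg hβc fun Q hx hy => ?_⟩
    refine le_of_tendsto (x := nhdsWithin (betaC P) (Set.Iio (betaC P)))
      ((continuous_tau_openProb J Q x y).continuousWithinAt) ?_
    filter_upwards [Ioo_mem_nhdsLT (half_lt_self hpos)] with β hβ
    exact hτ β hβ.1.le hβ.2 Q x hx y hy

end Critical

/-! ### Summing the triangle -/

section Triangle

lemma mul_mul_le_pow_three_add (a b c : ℝ≥0∞) : a * b * c ≤ a ^ 3 + b ^ 3 + c ^ 3 := by
  have hmax : a * b * c ≤ max (max a b) c ^ 3 := by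
    rw [pow_three']
    gcongr <;> simp
  rcases max_choice (max a b) c with h | h <;> rw [h] at hmax
  · rcases max_choice a b with h' | h' <;> rw [h'] at hmax
    · exact hmax.trans (le_self_add.trans le_self_add)
    · exact hmax.trans (le_add_self.trans le_self_add)
  · exact hmax.trans le_add_self

lemma tsum_tsum_sq_mul_sq_mul_sq_le {G : Type*} [AddCommGroup G] (k : G → ℝ≥0∞) :
    ∑' x, ∑' y, k x ^ 2 * k (x - y) ^ 2 * k y ^ 2 ≤ 3 * (∑' x, k x ^ 3) ^ 2 := by
  set w : G → ℝ≥0∞ := fun x => k x ^ 3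
  have hsubLeft (x : G) : ∑' y, w (x - y) = ∑' y, w y := (Equiv.subLeft x).tsum_eq w
  have hsubRight (y : G) : ∑' x, w (x - y) = ∑' x, w x := (Equiv.subRight y).tsum_eq w
  have hterm (x y : G) : k x ^ 2 * k (x - y) ^ 2 * k y ^ 2 ≤
      w x * w (x - y) + w (x - y) * w y + w x * w y :=
    calc _ = (k x * k (x - y)) * (k (x - y) * k y) * (k x * k y) := by ring
      _ ≤ _ := mul_mul_le_pow_three_add _ _ _
      _ = _ := by ring
  calc _ ≤ ∑' x, ∑' y, (w x * w (x - y) + w (x - y) * w y + w x * w y) :=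
        ENNReal.tsum_le_tsum fun x => ENNReal.tsum_le_tsum fun y => hterm x y
    _ = 3 * (∑' x, w x) ^ 2 := by
        simp_rw [ENNReal.tsum_add, ENNReal.tsum_mul_left, hsubLeft]
        rw [ENNReal.tsum_comm (f := fun x y => w (x - y) * w y)]
        simp_rw [ENNReal.tsum_mul_right, hsubRight, ENNReal.tsum_mul_left]
        ring

variable {d : ℕ}

lemma tsum_ofReal_max_rpow_neg_lt_top {s : ℝ} (hs : (d : ℝ) < s) :
    ∑' x : V d, ENNReal.ofReal (max 1 (normInf x : ℝ) ^ (-s)) < ⊤ := by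
  refine lt_of_le_of_lt (b := ENNReal.ofReal (dyadicConst d s * 3 ^ d)) ?_ ENNReal.ofReal_lt_top
  rw [ENNReal.tsum_eq_iSup_sum]
  refine iSup_le fun Q => ?_
  rw [← ENNReal.ofReal_sum_of_nonneg fun x _ => by positivity]
  have hcard : ∀ r : ℕ, 1 ≤ r →
      ∑ x ∈ Q with normInf x ≤ r, (1 : ℝ) ≤ 3 ^ d * (r : ℝ) ^ (d : ℝ) := by
    intro r hr
    rw [Finset.sum_const, nsmul_eq_mul, mul_one, Real.rpow_natCast]
    exact (Nat.cast_le.mpr (Finset.card_le_card fun x hx => mem_ball.mpr (by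
      simpa using (Finset.mem_filter.mp hx).2))).trans (card_ball_le hr 0)
  have hdyadic := sum_max_rpow_neg_mul_le (t := normInf) ((Nat.cast_nonneg d).trans_lt hs) hs Q
    le_rfl (by positivity) (fun _ => zero_le_one) hcard
  refine ENNReal.ofReal_le_ofReal ?_
  simpa using hdyadic

theorem triangle_lt_top_of_twoPoint_le (P : ℝ → Measure (Config d)) (β : ℝ) {e D : ℝ}
    (he : (d : ℝ) < 3 * e / 2)
    (h : ∀ x y : V d, twoPoint P β x y ≤
      ENNReal.ofReal (D * max 1 (normInf (x - y) : ℝ) ^ (-e))) :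
    triangle P β < ⊤ := by
  set k : V d → ℝ≥0∞ := fun x => ENNReal.ofReal (max 1 (normInf x : ℝ) ^ (-(e / 2)))
  have hpow (n : ℕ) (x : V d) :
      k x ^ n = ENNReal.ofReal (max 1 (normInf x : ℝ) ^ (-(n * e / 2))) := by
    rw [← ENNReal.ofReal_pow (by positivity), ← Real.rpow_mul_natCast (by positivity)]
    ring_nf
  have hk2 (x y : V d) : twoPoint P β x y ≤ ENNReal.ofReal D * k (x - y) ^ 2 := by
    rw [hpow, ← ENNReal.ofReal_mul' (by positivity), Nat.cast_two,
      mul_div_cancel_left₀ e two_ne_zero]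
    exact h x y
  have hk3 : ∑' x, k x ^ 3 < ⊤ := by
    simp only [hpow]
    exact tsum_ofReal_max_rpow_neg_lt_top (by exact_mod_cast he)
  have hneg (x : V d) : k (0 - x) = k x := by simp only [k, zero_sub, normInf_neg]
  calc triangle P β
      ≤ ∑' x, ∑' y, ENNReal.ofReal D ^ 3 * (k x ^ 2 * k (x - y) ^ 2 * k y ^ 2) := by
        refine ENNReal.tsum_le_tsum fun x => ENNReal.tsum_le_tsum fun y => ?_
        calc _ ≤ (ENNReal.ofReal D * k (0 - x) ^ 2) * (ENNReal.ofReal D * k (x - y) ^ 2) *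
              (ENNReal.ofReal D * k (y - 0) ^ 2) := by
              gcongr <;> exact hk2 _ _
          _ = _ := by
              rw [hneg, sub_zero]
              ring
    _ ≤ ENNReal.ofReal D ^ 3 * (3 * (∑' x, k x ^ 3) ^ 2) := by
        simp_rw [ENNReal.tsum_mul_left]
        gcongr
        exact tsum_tsum_sq_mul_sq_mul_sq_le k
    _ < ⊤ := ENNReal.mul_lt_top (ENNReal.pow_lt_top ENNReal.ofReal_lt_top)
        (ENNReal.mul_lt_top (by simp) (ENNReal.pow_lt_top hk3))

end Triangle

/-- If `0 < α < d` and `α < min(1, d/3)` then the triangle diagram is finite at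
criticality. -/
theorem triangle_finite_at_criticality {d : ℕ} {J : V d → V d → ℝ} {α c C : ℝ}
    (hJ : KernelHyp d J α c C)
    (P : ℝ → Measure (Config d)) (hP : IsLRP J P)
    (hα : α < min 1 ((d : ℝ) / 3)) :
    triangle P (betaC P) < ⊤ := by
  obtain ⟨hα1, hαd⟩ := lt_min_iff.mp hα
  obtain ⟨D, htwoPoint⟩ := hP.exists_twoPoint_betaC_le hJ hα1
  exact triangle_lt_top_of_twoPoint_le P (betaC P) (by linarith) htwoPoint

end LRP
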